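/- arXiv:2210.04967 — 7 statements merged into one kernel-verified Lean document; each statement's English description precedes it below -/
import Mathlib

section
/- Let H be a finite simple graph with maximum degree Δ(H) ≥ 9. Let k ≥ 3 and let p_1 ≥ p_2 ≥ … ≥ p_k ≥ 2 be positive integers with p_1 ≥ p_2 ≥ 4 and p_1 + p_2 + … + p_k = Δ(H) − 1 + k. If ω(H) = p_1, then there exists a partition of V(H) into sets V_1, V_2, …, V_k such that H[V_i] is K_{p_i}-free for each 1 ≤ i ≤ k and V_1 is a K_{p_1}-free subset of V(H) of maximum cardinality. -/
namespace St4
set_option linter.all false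
open Finset
open scoped Classical
noncomputable section

variable {V : Type*} [Fintype V] (H : SimpleGraph V) {k : ℕ} (o : Fin k) (q : Fin k → ℕ)

def Clq (K : Finset V) : Prop := ∀ a ∈ K, ∀ b ∈ K, a ≠ b → H.Adj a b

structure Ctx : Prop where
  q0 : 3 ≤ q o
  qpos : ∀ j, 1 ≤ q j
  deg : ∀ v, #(univ.filter (H.Adj v)) ≤ ∑ j, q j + 1
  four : 4 ≤ ∑ j ∈ univ.erase o, q j
  two : ∀ j, ∃ j', j' ≠ o ∧ j' ≠ j
  om : ∀ K : Finset V, Clq H K → #K ≤ q o + 1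

def Part (c : V → Option (Fin k)) (j : Fin k) : Finset V := univ.filter (fun v => c v = some j)
def Nb (A : Finset V) (v : V) : Finset V := A.filter (H.Adj v)
def Qcl (r : ℕ) (A : Finset V) (v : V) (K : Finset V) : Prop := K ⊆ Nb H A v ∧ Clq H K ∧ #K = r
def Z (r : ℕ) (A : Finset V) (v : V) : Finset V :=
  (Nb H A v).filter (fun u => ∀ K, Qcl H r A v K → u ∈ K)
def Fr (r : ℕ) (A : Finset V) : Prop := ∀ K ⊆ A, Clq H K → #K ≤ r
def cov (c : V → Option (Fin k)) : ℕ := #(univ.filter (fun v => c v ≠ none))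
def eps (A : Finset V) : ℕ := ∑ v ∈ A, #(Nb H A v)
def En (c : V → Option (Fin k)) : ℕ := ∑ j ∈ univ.erase o, eps H (Part c j)
def sw (c : V → Option (Fin k)) (a v : V) : V → Option (Fin k) :=
  fun z => if z = v then none else if z = a then c v else c z
def Tight (c : V → Option (Fin k)) (j : Fin k) (a : V) : Prop := #(Nb H (Part c j) a) = q j

structure Opt (c : V → Option (Fin k)) : Prop where
  free : ∀ j, Fr H (q j) (Part c j)
  mx : ∀ A, Fr H (q o) A → #A ≤ #(Part c o)
  mc : ∀ c' : V → Option (Fin k), (∀ j, Fr H (q j) (Part c' j)) → #(Part c' o) = #(Part c o) → cov c' ≤ cov c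
  me : ∀ c' : V → Option (Fin k), (∀ j, Fr H (q j) (Part c' j)) → #(Part c' o) = #(Part c o) → cov c' = cov c →
    En H o c ≤ En H o c'

variable {H o q}

@[simp] lemma mem_Part {c : V → Option (Fin k)} {j v} : v ∈ Part c j ↔ c v = some j := by simp [Part]
@[simp] lemma mem_Nb {A : Finset V} {v u} : u ∈ Nb H A v ↔ u ∈ A ∧ H.Adj v u := by simp [Nb]
lemma mem_Z {r} {A : Finset V} {v u} : u ∈ Z H r A v ↔ (u ∈ A ∧ H.Adj v u) ∧ ∀ K, Qcl H r A v K → u ∈ K := by simp [Z]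

lemma Clq.mono {K L : Finset V} (h : Clq H K) (hl : L ⊆ K) : Clq H L :=
  fun a ha b hb => h a (hl ha) b (hl hb)

lemma Clq.insert {K : Finset V} {a : V} (h : Clq H K) (hl : ∀ b ∈ K, H.Adj a b) : Clq H (insert a K) := by
  intro x hx y hy hxy
  simp only [mem_insert] at hx hy
  rcases hx with rfl | hx <;> rcases hy with rfl | hy
  · exact absurd rfl hxy
  · exact hl _ hy
  · exact (hl _ hx).symm
  · exact h _ hx _ hy hxy

lemma Opt.transfer {c c' : V → Option (Fin k)} (h : Opt H o q c) (hf : ∀ j, Fr H (q j) (Part c' j))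
    (h1 : #(Part c' o) = #(Part c o)) (h2 : cov c' = cov c) (h3 : En H o c' ≤ En H o c) : Opt H o q c' where
  free := hf
  mx A hA := h1 ▸ h.mx A hA
  mc d hd hc := h2 ▸ h.mc d hd (hc.trans h1)
  me d hd hc he := h3.trans (h.me d hd (hc.trans h1) (he.trans h2))

lemma Fr.insert_aux {r : ℕ} {A : Finset V} {a : V} (hA : Fr H r A) (h : ∀ K, ¬ Qcl H r A a K) :
    Fr H r (insert a A) := by
  intro K hK hc
  by_contra hlt
  push Not at hlt
  by_cases ha : a ∈ K
  · have h1 : r ≤ #(K.erase a) := by rw [card_erase_of_mem ha]; omega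
    obtain ⟨L, hL, hcard⟩ := exists_subset_card_eq h1
    refine h L ⟨?_, hc.mono (hL.trans (erase_subset _ _)), hcard⟩
    intro x hx
    have := hL hx
    have hx' := mem_erase.1 this
    have := hK hx'.2
    simp only [mem_insert] at this
    exact mem_Nb.2 ⟨this.resolve_left hx'.1, hc _ ha _ hx'.2 (Ne.symm hx'.1)⟩
  · have : K ⊆ A := by
      intro x hx
      have := hK hx
      simp only [mem_insert] at this
      rcases this with rfl | h
      · exact absurd hx ha
      · exact h
    have := hA K this hc
    omega

lemma S1 {c : V → Option (Fin k)} (h : Opt H o q c) {y : V} (hy : c y ≠ some o) :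
    ∃ K, Qcl H (q o) (Part c o) y K := by
  by_contra hn
  push Not at hn
  have := h.mx _ ((h.free o).insert_aux hn)
  rw [card_insert_of_notMem (by simpa using hy)] at this
  omega

lemma S2c {c : V → Option (Fin k)} (h : Opt H o q c) {a : V} (ha : c a = none) (j : Fin k) :
    ∃ K, Qcl H (q j) (Part c j) a K := by
  by_cases hj : j = o
  · subst hj; exact S1 h (by simp [ha])
  by_contra hn
  push Not at hn
  have hP : ∀ i, Part (Function.update c a (some j)) i = if i = j then insert a (Part c j) else Part c i := by
    intro i
    ext v
    by_cases hv : v = a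
    · subst hv; split_ifs with hi <;> simp [ha, hi, eq_comm]
      intro h; exact hi h.symm
    · split_ifs with hi <;> simp [hv, hi]
  have := h.mc (Function.update c a (some j)) (by
    intro i; rw [hP]; split_ifs with hi
    · subst hi; exact (h.free _).insert_aux hn
    · exact h.free i) (by rw [hP, if_neg (Ne.symm hj)])
  have h2 : (univ.filter fun v => Function.update c a (some j) v ≠ none) = insert a (univ.filter fun v => c v ≠ none) := by
    ext v; by_cases hv : v = a <;> simp [hv]
  unfold cov at this
  rw [h2, card_insert_of_notMem (by simp [ha])] at this
  omega

lemma sum_nb_le (C : Ctx H o q) (c : V → Option (Fin k)) (a : V) :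
    ∑ j, #(Nb H (Part c j) a) ≤ ∑ j, q j + 1 := by
  refine le_trans ?_ (C.deg a)
  rw [← card_biUnion]
  · apply card_le_card
    intro v; simp
  · intro i _ j _ hij
    rw [Function.onFun, disjoint_left]
    intro v hv hv'
    simp at hv hv'
    exact hij (by have := hv.1.symm.trans hv'.1; simpa using this)

lemma S2ge {c : V → Option (Fin k)} (h : Opt H o q c) {a : V} (ha : c a = none) (j : Fin k) :
    q j ≤ #(Nb H (Part c j) a) := by
  obtain ⟨K, hK, _, h3⟩ := S2c h ha j
  rw [← h3]; exact card_le_card hK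

lemma S2le (C : Ctx H o q) {c : V → Option (Fin k)} (h : Opt H o q c) {a : V} (ha : c a = none) (j : Fin k) :
    #(Nb H (Part c j) a) ≤ q j + 1 := by
  have h1 := sum_nb_le C c a
  rw [← add_sum_erase _ _ (mem_univ j), ← add_sum_erase _ q (mem_univ j)] at h1
  have := sum_le_sum (s := univ.erase j) fun i _ => S2ge h ha i
  omega

lemma S2t (C : Ctx H o q) {c : V → Option (Fin k)} (h : Opt H o q c) {a : V} (ha : c a = none) {i j : Fin k}
    (hij : i ≠ j) (hi : ¬ Tight H q c i a) : Tight H q c j a := by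
  have h1 := sum_nb_le C c a
  rw [← add_sum_erase _ _ (mem_univ j), ← add_sum_erase _ q (mem_univ j),
    ← add_sum_erase _ _ (show i ∈ univ.erase j by simp [hij]), ← add_sum_erase _ q (show i ∈ univ.erase j by simp [hij])] at h1
  have := sum_le_sum (s := (univ.erase j).erase i) fun i _ => S2ge h ha i
  have h2 := S2ge h ha i
  have h3 := S2ge h ha j
  unfold Tight at *
  omega

lemma Part_sw {c : V → Option (Fin k)} {a v : V} {j : Fin k} (ha : c a = none) (hv : c v = some j) (i : Fin k) :
    Part (sw c a v) i = if i = j then insert a ((Part c j).erase v) else Part c i := by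
  have hav : a ≠ v := by rintro rfl; simp [ha] at hv
  ext z
  by_cases h1 : z = v
  · subst h1; split_ifs with hi <;> simp [sw, hv, hav.symm, eq_comm]
    intro h; exact hi h.symm
  by_cases h2 : z = a
  · subst h2; split_ifs with hi <;> simp [sw, hv, hav, ha, eq_comm, hi]
    intro h; exact hi h.symm
  · split_ifs with hi <;> simp [sw, h1, h2, hi]

lemma cov_sw {c : V → Option (Fin k)} {a v : V} {j : Fin k} (ha : c a = none) (hv : c v = some j) :
    cov (sw c a v) = cov c := by
  have hav : a ≠ v := by rintro rfl; simp [ha] at hv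
  have h2 : (univ.filter fun z => sw c a v z ≠ none) = insert a ((univ.filter fun z => c z ≠ none).erase v) := by
    ext z
    by_cases h1 : z = v
    · subst h1; simp [sw, hav.symm]
    by_cases h2 : z = a
    · subst h2; simp [sw, h1, hv]
    · simp [sw, h1, h2]
  unfold cov
  rw [h2, card_insert_of_notMem (by simp [ha]), card_erase_of_mem (by simp [hv])]
  have : 0 < #(univ.filter fun z => c z ≠ none) := card_pos.2 ⟨v, by simp [hv]⟩
  omega

lemma card_Part_sw {c : V → Option (Fin k)} {a v : V} {j : Fin k} (ha : c a = none) (hv : c v = some j) (i : Fin k) :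
    #(Part (sw c a v) i) = #(Part c i) := by
  rw [Part_sw ha hv]
  split_ifs with h
  · subst h
    rw [card_insert_of_notMem (by simp [ha]), card_erase_of_mem (by simp [hv])]
    have : 0 < #(Part c i) := card_pos.2 ⟨v, by simp [hv]⟩
    omega
  · rfl

lemma Z_mem_col {c : V → Option (Fin k)} {a u : V} (hu : u ∈ Z H (q o) (Part c o) a) : c u = some o := by
  simpa using (mem_Z.1 hu).1.1

lemma S3 {c : V → Option (Fin k)} (h : Opt H o q c) {a u : V} (ha : c a = none)
    (hu : u ∈ Z H (q o) (Part c o) a) : Opt H o q (sw c a u) := by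
  have hu' := Z_mem_col hu
  refine h.transfer ?_ (card_Part_sw ha hu' o) (cov_sw ha hu') (le_of_eq ?_)
  · intro j
    rw [Part_sw ha hu']
    split_ifs with hj
    · subst hj
      apply Fr.insert_aux
      · intro K hK; exact h.free _ K (hK.trans (erase_subset _ _))
      · intro K hK
        have := (mem_Z.1 hu).2 K ⟨hK.1.trans ?_, hK.2⟩
        · have := hK.1 this; simp at this
        · intro z hz; simp at hz ⊢; exact ⟨hz.1.2, hz.2⟩
    · exact h.free j
  · unfold En
    refine sum_congr rfl fun j hj => ?_
    rw [Part_sw ha hu', if_neg (ne_of_mem_erase hj)]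

lemma eps_insert {A : Finset V} {a : V} (ha : a ∉ A) : eps H (insert a A) = eps H A + 2 * #(Nb H A a) := by
  unfold eps
  rw [sum_insert ha]
  have h1 : Nb H (insert a A) a = Nb H A a := by
    ext z; simp only [mem_Nb, mem_insert]
    constructor
    · rintro ⟨rfl | h, h'⟩
      · exact absurd h' (H.loopless.irrefl _)
      · exact ⟨h, h'⟩
    · tauto
  have h2 : ∀ v ∈ A, #(Nb H (insert a A) v) = #(Nb H A v) + if H.Adj a v then 1 else 0 := by
    intro v hv
    split_ifs with hav
    · have : Nb H (insert a A) v = insert a (Nb H A v) := by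
        ext z; simp only [mem_Nb, mem_insert]
        constructor
        · rintro ⟨h | h, h'⟩ <;> tauto
        · rintro (rfl | h)
          · exact ⟨Or.inl rfl, hav.symm⟩
          · tauto
      rw [this, card_insert_of_notMem (by simp [ha])]
    · have : Nb H (insert a A) v = Nb H A v := by
        ext z; simp only [mem_Nb, mem_insert]
        constructor
        · rintro ⟨rfl | h, h'⟩
          · exact absurd h'.symm hav
          · exact ⟨h, h'⟩
        · tauto
      rw [this]; rfl
  rw [sum_congr rfl h2, h1, sum_add_distrib, ← card_filter]
  have : A.filter (H.Adj a) = Nb H A a := rfl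
  rw [this]; ring

lemma tight_clq {c : V → Option (Fin k)} (h : Opt H o q c) {a : V} (ha : c a = none) {j : Fin k}
    (ht : Tight H q c j a) : Clq H (Nb H (Part c j) a) := by
  obtain ⟨K, hK, h2, h3⟩ := S2c h ha j
  have : K = Nb H (Part c j) a := eq_of_subset_of_card_le hK (by rw [h3]; exact le_of_eq ht)
  rwa [← this]

lemma S4aux {c : V → Option (Fin k)} (h : Opt H o q c) {a y : V} {j : Fin k} (ha : c a = none) (hj : j ≠ o)
    (hy : c y = some j) (hay : H.Adj a y) (ht : Tight H q c j a) :
    Opt H o q (sw c a y) ∧ Tight H q (sw c a y) j y := by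
  have hA : a ∉ Part c j := by simp [ha]
  have hyA : y ∈ Part c j := by simp [hy]
  set A := Part c j with hAdef
  set B := A.erase y with hB
  have hins : insert y B = A := insert_erase hyA
  have e1 : eps H A = eps H B + 2 * #(Nb H B y) := by rw [← hins, eps_insert (by simp [hB])]
  have e2 : eps H (insert a B) = eps H B + 2 * #(Nb H B a) := eps_insert (by simp [hB, hA])
  have hNa : Nb H B a = (Nb H A a).erase y := by ext z; simp [hB]; tauto
  have hcNa : #(Nb H B a) = q j - 1 := by
    rw [hNa, card_erase_of_mem (by simp [hy, hay, hAdef])]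
    have : #(Nb H A a) = q j := ht
    rw [this]
  have hsub : (Nb H A a).erase y ⊆ Nb H B y := by
    intro z hz
    have hz' := mem_erase.1 hz
    have hz2 := mem_Nb.1 hz'.2
    refine mem_Nb.2 ⟨mem_erase.2 ⟨hz'.1, hz2.1⟩, ?_⟩
    exact tight_clq h ha ht _ (mem_Nb.2 ⟨hyA, hay⟩) _ hz'.2 (Ne.symm hz'.1)
  have hge : q j - 1 ≤ #(Nb H B y) := by rw [← hcNa, hNa]; exact card_le_card hsub
  have hEn : En H o (sw c a y) + 2 * #(Nb H B y) = En H o c + 2 * #(Nb H B a) := by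
    unfold En
    have hjm : j ∈ univ.erase o := by simp [hj]
    rw [← add_sum_erase _ _ hjm, ← add_sum_erase (univ.erase o) (fun j => eps H (Part c j)) hjm,
      Part_sw ha hy, if_pos rfl]
    have : ∑ x ∈ (univ.erase o).erase j, eps H (Part (sw c a y) x) = ∑ x ∈ (univ.erase o).erase j, eps H (Part c x) := by
      refine sum_congr rfl fun i hi => ?_
      rw [Part_sw ha hy, if_neg (ne_of_mem_erase hi)]
    rw [this]
    simp only [← hAdef, ← hB]
    omega
  have hfree : ∀ i, Fr H (q i) (Part (sw c a y) i) := by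
    intro i
    rw [Part_sw ha hy]
    split_ifs with hi
    · subst hi
      apply Fr.insert_aux
      · intro K hK; exact h.free _ K (hK.trans (erase_subset _ _))
      · intro K hK
        have h1 := card_le_card hK.1
        have h2 : #K = q i := hK.2.2
        have h3 : 0 < q i := by rw [← ht]; exact card_pos.2 ⟨y, mem_Nb.2 ⟨hyA, hay⟩⟩
        rw [hcNa] at h1
        omega
    · exact h.free i
  have hopt : Opt H o q (sw c a y) := h.transfer hfree (card_Part_sw ha hy o) (cov_sw ha hy) (by omega)
  refine ⟨hopt, ?_⟩
  have := h.me _ hfree (card_Part_sw ha hy o) (cov_sw ha hy)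
  have hB' : #(Nb H B y) = q j - 1 := by omega
  have h3 : 0 < q j := by rw [← ht]; exact card_pos.2 ⟨y, mem_Nb.2 ⟨hyA, hay⟩⟩
  unfold Tight
  rw [Part_sw ha hy, if_pos rfl]
  have : Nb H (insert a B) y = insert a (Nb H B y) := by
    ext z; simp only [mem_Nb, mem_insert]
    constructor
    · rintro ⟨h | h, h'⟩ <;> tauto
    · rintro (rfl | h)
      · exact ⟨Or.inl rfl, hay.symm⟩
      · tauto
  rw [this, card_insert_of_notMem (by simp [hB, hA])]
  omega

end
end St4

namespace St4
set_option linter.all false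
open Finset
open scoped Classical
noncomputable section
variable {V : Type*} [Fintype V] {H : SimpleGraph V} {k : ℕ} {o : Fin k} {q : Fin k → ℕ}

def E2 (H : SimpleGraph V) (r : ℕ) (A : Finset V) (v : V) : Prop :=
  ∃ s t, s ≠ t ∧ ¬ H.Adj s t ∧ s ∉ Z H r A v ∧ t ∉ Z H r A v ∧ Nb H A v = insert s (insert t (Z H r A v)) ∧
    #(Z H r A v) + 1 = r ∧ Qcl H r A v (insert s (Z H r A v)) ∧ Qcl H r A v (insert t (Z H r A v)) ∧
    ∀ K, Qcl H r A v K → K = insert s (Z H r A v) ∨ K = insert t (Z H r A v)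

lemma Z_sub_Nb {r} {A : Finset V} {v} : Z H r A v ⊆ Nb H A v := filter_subset _ _

lemma Z_sub {r} {A K : Finset V} {v} (h : Qcl H r A v K) : Z H r A v ⊆ K :=
  fun u hu => (mem_Z.1 hu).2 K h

lemma Qcl_uniq {r} {A K : Finset V} {v} (h : Qcl H r A v K) (hZ : Qcl H r A v (Z H r A v)) : K = Z H r A v :=
  (eq_of_subset_of_card_le (Z_sub h) (by rw [h.2.2, hZ.2.2])).symm

lemma Dich {r} {A : Finset V} {v} (hr : 0 < r) (hf : Fr H r A) (hN : #(Nb H A v) ≤ r + 1) (hex : ∃ K, Qcl H r A v K) :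
    Qcl H r A v (Z H r A v) ∨ E2 H r A v := by
  obtain ⟨K, hK⟩ := hex
  by_cases hu : ∀ K', Qcl H r A v K' → K' = K
  · left
    have : Z H r A v = K := by
      apply Subset.antisymm (Z_sub hK)
      intro u hu'
      refine mem_Z.2 ⟨by simpa using hK.1 hu', fun K' hK' => by rw [hu K' hK']; exact hu'⟩
    rwa [this]
  · right
    push Not at hu
    obtain ⟨K', hK', hne⟩ := hu
    have hI : K ∩ K' ⊂ K := by
      refine (ssubset_iff_subset_ne).2 ⟨inter_subset_left, fun h => hne ?_⟩
      exact (eq_of_subset_of_card_le (inter_eq_left.1 h) (by rw [hK.2.2, hK'.2.2])).symm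
    have c1 := card_lt_card hI
    have c2 := card_union_add_card_inter K K'
    have hsub : K ∪ K' ⊆ Nb H A v := union_subset hK.1 hK'.1
    have c3 := card_le_card hsub
    rw [hK.2.2] at c1 c2
    rw [hK'.2.2] at c2
    have hU : K ∪ K' = Nb H A v := eq_of_subset_of_card_le hsub (by omega)
    have d1 := card_sdiff_add_card_inter K K'
    have d2 := card_sdiff_add_card_inter K' K
    rw [inter_comm K' K] at d2
    rw [hK.2.2] at d1
    rw [hK'.2.2] at d2
    obtain ⟨s, hs⟩ := card_eq_one.1 (show #(K \ K') = 1 by omega)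
    obtain ⟨t, ht⟩ := card_eq_one.1 (show #(K' \ K) = 1 by omega)
    have hs1 : ∀ z, z = s ↔ z ∈ K ∧ z ∉ K' := fun z => by
      have := Finset.ext_iff.1 hs z; simp at this; exact this.symm
    have ht1 : ∀ z, z = t ↔ z ∈ K' ∧ z ∉ K := fun z => by
      have := Finset.ext_iff.1 ht z; simp at this; exact this.symm
    have hsm := (hs1 s).1 rfl
    have htm := (ht1 t).1 rfl
    have eK : K = insert s (K ∩ K') := by
      ext z; have := hs1 z; simp only [mem_insert, mem_inter]; tauto
    have eK' : K' = insert t (K ∩ K') := by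
      ext z; have := ht1 z; simp only [mem_insert, mem_inter]; tauto
    have hst : s ≠ t := by rintro rfl; exact hsm.2 htm.1
    have hnadj : ¬ H.Adj s t := by
      intro hadj
      have := hf (insert s K') ?_ (hK'.2.1.insert ?_)
      · rw [card_insert_of_notMem hsm.2, hK'.2.2] at this; omega
      · intro z hz
        rcases mem_insert.1 hz with rfl | hz
        · exact (mem_Nb.1 (hK.1 hsm.1)).1
        · exact (mem_Nb.1 (hK'.1 hz)).1
      · intro b hb
        by_cases hbt : b = t
        · rwa [hbt]
        · have : b ∈ K := by have := ht1 b; tauto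
          exact hK.2.1 s hsm.1 b this (by rintro rfl; exact hsm.2 hb)
    have hNb : Nb H A v = insert s (insert t (K ∩ K')) := by
      rw [← hU]; ext z; have := hs1 z; have := ht1 z; simp only [mem_insert, mem_inter, mem_union]; tauto
    have hall : ∀ L, Qcl H r A v L → L = K ∨ L = K' := by
      intro L hL
      by_cases h : s ∈ L
      · left
        refine eq_of_subset_of_card_le ?_ (by rw [hL.2.2, hK.2.2])
        rw [eK]
        intro z hz
        have h1 := hL.1 hz
        rw [hNb] at h1
        simp only [mem_insert] at h1 ⊢
        rcases h1 with h1 | rfl | h1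
        · left; exact h1
        · exact absurd (hL.2.1 _ h _ hz hst) hnadj
        · right; exact h1
      · right
        refine eq_of_subset_of_card_le ?_ (by rw [hL.2.2, hK'.2.2])
        rw [eK']
        intro z hz
        have h1 := hL.1 hz
        rw [hNb] at h1
        simp only [mem_insert] at h1 ⊢
        rcases h1 with rfl | h1
        · exact absurd hz h
        · exact h1
    have hZ : Z H r A v = K ∩ K' := by
      ext z
      constructor
      · intro hz; exact mem_inter.2 ⟨Z_sub hK hz, Z_sub hK' hz⟩
      · intro hz
        have hz' := mem_inter.1 hz
        refine mem_Z.2 ⟨by simpa using hK.1 hz'.1, fun L hL => ?_⟩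
        rcases hall L hL with rfl | rfl
        · exact hz'.1
        · exact hz'.2
    refine ⟨s, t, hst, hnadj, ?_, ?_, ?_, ?_, ?_, ?_, ?_⟩
    · rw [hZ]; simp [hsm.2]
    · rw [hZ]; simp [htm.2]
    · rw [hZ, hNb]
    · rw [hZ]; omega
    · rwa [hZ, ← eK]
    · rwa [hZ, ← eK']
    · rw [hZ, ← eK, ← eK']; exact hall

lemma DichO (C : Ctx H o q) {c : V → Option (Fin k)} (h : Opt H o q c) {a : V} (ha : c a = none) :
    Qcl H (q o) (Part c o) a (Z H (q o) (Part c o) a) ∨ E2 H (q o) (Part c o) a :=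
  Dich (by have := C.q0; omega) (h.free o) (S2le C h ha o) (S2c h ha o)

lemma E2_not_Qcl {r} {A : Finset V} {v} (h : E2 H r A v) : ¬ Qcl H r A v (Z H r A v) := by
  obtain ⟨s, t, _, _, _, _, _, h7, _⟩ := h
  intro hq
  have := hq.2.2
  omega

lemma sw_self {c : V → Option (Fin k)} {a u : V} : sw c a u u = none := by simp [sw]

lemma sw_old {c : V → Option (Fin k)} {a u : V} (h : u ≠ a) : sw c a u a = c u := by simp [sw, h.symm]

lemma sw_ne {c : V → Option (Fin k)} {a u z : V} (h : z ≠ u) (h' : z ≠ a) : sw c a u z = c z := by simp [sw, h, h']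

lemma mem_L {c : V → Option (Fin k)} {a u z w : V} (ha : c a = none) (hu : c u = some o) :
    z ∈ Nb H (Part (sw c a u) o) w ↔ (z = a ∨ (z ≠ u ∧ c z = some o)) ∧ H.Adj w z := by
  rw [Part_sw ha hu, if_pos rfl]; simp

lemma list_le (C : Ctx H o q) {c : V → Option (Fin k)} (h : Opt H o q c) {a u : V} (ha : c a = none)
    (hu : u ∈ Z H (q o) (Part c o) a) : #(Nb H (Part (sw c a u) o) u) ≤ q o + 1 :=
  S2le C (S3 h ha hu) sw_self o

lemma list_sub {c : V → Option (Fin k)} {a u : V} (ha : c a = none)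
    (hu : u ∈ Z H (q o) (Part c o) a) {K : Finset V} (hK : Qcl H (q o) (Part c o) a K) :
    insert a (K.erase u) ⊆ Nb H (Part (sw c a u) o) u := by
  have hcu := Z_mem_col hu
  intro z hz
  rw [mem_L ha hcu]
  rcases mem_insert.1 hz with rfl | hz
  · exact ⟨Or.inl rfl, (mem_Z.1 hu).1.2.symm⟩
  · have hz' := mem_erase.1 hz
    have := mem_Nb.1 (hK.1 hz'.2)
    exact ⟨Or.inr ⟨hz'.1, by simpa using this.1⟩, hK.2.1 _ (Z_sub hK hu) _ hz'.2 (Ne.symm hz'.1)⟩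

lemma list_sub_card {c : V → Option (Fin k)} {a u : V} (ha : c a = none)
    (hu : u ∈ Z H (q o) (Part c o) a) {K : Finset V} (hK : Qcl H (q o) (Part c o) a K) :
    #(insert a (K.erase u)) = q o := by
  have huK := Z_sub hK hu
  rw [card_insert_of_notMem, card_erase_of_mem huK, hK.2.2]
  · have : 0 < #K := card_pos.2 ⟨u, huK⟩
    rw [hK.2.2] at this; omega
  · intro h
    have := mem_Nb.1 (hK.1 (mem_of_mem_erase h))
    simp [ha] at this

lemma F1pp (C : Ctx H o q) {c : V → Option (Fin k)} (h : Opt H o q c) {a u z : V} (ha : c a = none)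
    (hu : u ∈ Z H (q o) (Part c o) a) (hq : #(Nb H (Part (sw c a u) o) u) = q o)
    (hz : z ∈ Nb H (Part (sw c a u) o) u) (hza : z ≠ a) : z ∈ Z H (q o) (Part c o) a := by
  have key : ∀ K, Qcl H (q o) (Part c o) a K → z ∈ K := by
    intro K hK
    have : insert a (K.erase u) = Nb H (Part (sw c a u) o) u :=
      eq_of_subset_of_card_le (list_sub ha hu hK) (by rw [list_sub_card ha hu hK, hq])
    rw [← this] at hz
    exact mem_of_mem_erase ((mem_insert.1 hz).resolve_left hza)
  obtain ⟨K, hK⟩ := S2c h ha o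
  exact mem_Z.2 ⟨by simpa using mem_Nb.1 (hK.1 (key K hK)), key⟩

/-- at most one element of the list outside a given clique -/
lemma extra_uniq (C : Ctx H o q) {c : V → Option (Fin k)} (h : Opt H o q c) {a u e e' : V} (ha : c a = none)
    (hu : u ∈ Z H (q o) (Part c o) a) {K : Finset V} (hK : Qcl H (q o) (Part c o) a K)
    (he : c e = some o) (he' : c e' = some o) (hue : H.Adj u e) (hue' : H.Adj u e') (hn : e ∉ K) (hn' : e' ∉ K) :
    e = e' := by
  by_contra hne
  have hcu := Z_mem_col hu
  have huK := Z_sub hK hu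
  have h1 : insert e (insert e' (insert a (K.erase u))) ⊆ Nb H (Part (sw c a u) o) u := by
    apply insert_subset
    · rw [mem_L ha hcu]; exact ⟨Or.inr ⟨hue.ne', he⟩, hue⟩
    apply insert_subset
    · rw [mem_L ha hcu]; exact ⟨Or.inr ⟨hue'.ne', he'⟩, hue'⟩
    exact list_sub ha hu hK
  have h2 := (card_le_card h1).trans (list_le C h ha hu)
  have ea : e ≠ a := by rintro rfl; simp [ha] at he
  have ea' : e' ≠ a := by rintro rfl; simp [ha] at he'
  rw [card_insert_of_notMem (by simp [hne, ea, hn]), card_insert_of_notMem (by simp [ea', hn']),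
    list_sub_card ha hu hK] at h2
  omega

lemma nonloose_Qcl {c : V → Option (Fin k)} (h : Opt H o q c) {a : V} (ha : c a = none)
    (hN : #(Nb H (Part c o) a) = q o) :
    Qcl H (q o) (Part c o) a (Nb H (Part c o) a) ∧ Z H (q o) (Part c o) a = Nb H (Part c o) a := by
  have h1 : Qcl H (q o) (Part c o) a (Nb H (Part c o) a) := ⟨Subset.rfl, tight_clq h ha hN, hN⟩
  refine ⟨h1, Subset.antisymm Z_sub_Nb ?_⟩
  intro z hz
  refine mem_Z.2 ⟨by simpa using hz, fun K hK => ?_⟩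
  rw [eq_of_subset_of_card_le hK.1 (by rw [hN, hK.2.2])]; exact hz

lemma LB (C : Ctx H o q) {c : V → Option (Fin k)} (h : Opt H o q c) {a u y : V} {j : Fin k} (ha : c a = none)
    (hN : #(Nb H (Part c o) a) = q o) (hu : u ∈ Nb H (Part c o) a) (hj : j ≠ o) (hy : c y = some j)
    (hya : H.Adj y a) (hyC : ∀ v ∈ Nb H (Part c o) a, v ≠ u → H.Adj y v) (hyu : ¬ H.Adj y u) :
    ∀ t ∈ Nb H (Part c o) a, t ≠ u → ∀ z, c z = some o → H.Adj t z → z ∈ Nb H (Part c o) a := by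
  intro t ht htu z hz htz
  obtain ⟨hQ, hZ⟩ := nonloose_Qcl h ha hN
  have htZ : t ∈ Z H (q o) (Part c o) a := by rwa [hZ]
  have hct := Z_mem_col htZ
  have hcu := Z_mem_col (hZ ▸ hu)
  have h1 := S3 h ha htZ
  have hya' : y ≠ a := by rintro rfl; simp [ha] at hy
  have hyt' : y ≠ t := by rintro rfl; rw [hct] at hy; simp at hy; exact hj hy.symm
  have hza : z ≠ a := by rintro rfl; simp [ha] at hz
  by_cases hl : Tight H q (sw c a t) o t
  · rw [← hZ]
    refine F1pp C h ha htZ hl ?_ hza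
    rw [mem_L ha hct]; exact ⟨Or.inr ⟨htz.ne', hz⟩, htz⟩
  · exfalso
    have hT := S2t C h1 sw_self (Ne.symm hj) hl
    have hy1 : sw c a t y = some j := by rw [sw_ne hyt' hya', hy]
    have h2 := (S4aux h1 sw_self hj hy1 (hyC t ht htu).symm hT).1
    have hle := S2le C h2 sw_self o
    rw [Part_sw sw_self hy1, if_neg (Ne.symm hj)] at hle
    obtain ⟨K, hK⟩ := S1 h1 (y := y) (by rw [hy1]; simpa using hj)
    set D := Nb H (Part c o) a with hD
    have hKm : ∀ z ∈ K, (z = a ∨ (z ≠ t ∧ c z = some o)) ∧ H.Adj y z := fun z hz => (mem_L ha hct).1 (hK.1 hz)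
    have cD : #((D.erase u).erase t) + 2 = q o := by
      rw [card_erase_of_mem (by simp [ht, htu]), card_erase_of_mem hu, hN]; have := C.q0; omega
    have haK : a ∉ K := by
      intro haK
      have : K.erase a ⊆ (D.erase u).erase t := by
        intro s hs
        have hs' := mem_erase.1 hs
        have h3 := hKm s hs'.2
        have h4 := h3.1.resolve_left hs'.1
        refine mem_erase.2 ⟨h4.1, mem_erase.2 ⟨?_, ?_⟩⟩
        · rintro rfl; exact hyu h3.2
        · rw [hD, mem_Nb]; exact ⟨by simpa using h4.2, hK.2.1 _ haK _ hs'.2 (Ne.symm hs'.1)⟩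
      have := card_le_card this
      rw [card_erase_of_mem haK, hK.2.2] at this
      have := C.q0; omega
    have hdis : ∀ s ∈ K, s ∉ D := by
      intro s hs hsD
      have hsu : s ≠ u := by rintro rfl; exact hyu (hKm s hs).2
      have hst : s ≠ t := by
        have := (hKm s hs).1; rcases this with rfl | h'
        · exact absurd hs haK
        · exact h'.1
      have hsZ : s ∈ Z H (q o) (Part c o) a := by rwa [hZ]
      -- elements of K outside D
      have hone : #(K \ D) ≤ 1 := by
        rw [card_le_one]
        intro e he e' he'
        have e1 := mem_sdiff.1 he
        have e2 := mem_sdiff.1 he'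
        have c1 := (hKm e e1.1).1.resolve_left (by rintro rfl; exact haK e1.1)
        have c2 := (hKm e' e2.1).1.resolve_left (by rintro rfl; exact haK e2.1)
        exact extra_uniq C h ha hsZ hQ c1.2 c2.2 (hK.2.1 _ hs _ e1.1 (by rintro rfl; exact e1.2 hsD))
          (hK.2.1 _ hs _ e2.1 (by rintro rfl; exact e2.2 hsD)) e1.2 e2.2
      have hin : K ∩ D ⊆ (D.erase u).erase t := by
        intro w hw
        have hw' := mem_inter.1 hw
        refine mem_erase.2 ⟨?_, mem_erase.2 ⟨?_, hw'.2⟩⟩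
        · rintro rfl
          rcases (hKm w hw'.1).1 with rfl | h'
          · exact haK hw'.1
          · exact h'.1 rfl
        · rintro rfl; exact hyu (hKm w hw'.1).2
      have c3 := card_le_card hin
      have c4 := card_sdiff_add_card_inter K D
      rw [hK.2.2] at c4
      omega
    have hbig : K ∪ insert a ((D.erase u).erase t) ⊆ Nb H (Part (sw c a t) o) y := by
      refine union_subset hK.1 (insert_subset ?_ ?_)
      · rw [mem_L ha hct]; exact ⟨Or.inl rfl, hya⟩
      · intro w hw
        have h3 := mem_erase.1 hw
        have h4 := mem_erase.1 h3.2
        rw [mem_L ha hct]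
        exact ⟨Or.inr ⟨h3.1, by simpa using (mem_Nb.1 h4.2).1⟩, hyC w h4.2 h4.1⟩
    have c5 := (card_le_card hbig).trans hle
    rw [card_union_of_disjoint, hK.2.2, card_insert_of_notMem] at c5
    · have := C.q0; omega
    · simp [hD, ha]
    · rw [disjoint_left]
      intro w hw hw'
      rcases mem_insert.1 hw' with rfl | hw'
      · exact haK hw
      · exact hdis w hw (mem_of_mem_erase (mem_of_mem_erase hw'))

lemma E2_list (C : Ctx H o q) {c : V → Option (Fin k)} (h : Opt H o q c) {a u : V} (ha : c a = none)
    (hE : E2 H (q o) (Part c o) a) (hu : u ∈ Z H (q o) (Part c o) a) :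
    #(Nb H (Part (sw c a u) o) u) = q o + 1 ∧ ∀ z ∈ Nb H (Part (sw c a u) o) u, z = a ∨ z ∈ Nb H (Part c o) a := by
  obtain ⟨s, t, hst, hnadj, hs, ht, hNb, hc, hQs, hQt, hall⟩ := hE
  set ZZ := Z H (q o) (Part c o) a with hZZ
  have hle := list_le C h ha hu
  have h1 := list_sub ha hu hQs
  have h2 := list_sub ha hu hQt
  have hta : t ≠ a := by
    rintro rfl; have := hQt.1 (mem_insert_self _ _); simp at this
  have hut : t ≠ u := by rintro rfl; exact ht hu
  have hsub : insert t (insert a ((insert s ZZ).erase u)) ⊆ Nb H (Part (sw c a u) o) u := by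
    apply insert_subset _ h1
    apply h2
    simp [hut]
  have hcard : #(insert t (insert a ((insert s ZZ).erase u))) = q o + 1 := by
    rw [card_insert_of_notMem, list_sub_card ha hu hQs]
    simp [hta, hst.symm, ht]
  have heq := eq_of_subset_of_card_le hsub (by omega)
  refine ⟨by rw [← heq, hcard], ?_⟩
  intro z hz
  rw [← heq] at hz
  rw [hNb]
  simp only [mem_insert, mem_erase] at hz ⊢
  tauto

lemma LE2 (C : Ctx H o q) {c : V → Option (Fin k)} (h : Opt H o q c) {a y : V} {j : Fin k} (ha : c a = none)
    (hE : E2 H (q o) (Part c o) a) (hj : j ≠ o) (hy : c y = some j) {K0 : Finset V}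
    (hK0 : Qcl H (q o) (Part c o) a K0) (hyK : ∀ v ∈ K0, H.Adj y v) : False := by
  have q0 := C.q0
  have hE' := hE
  obtain ⟨s', t', hst', hnadj', hs', ht', hNb', hc, hQs', hQt', hall'⟩ := hE
  set ZZ := Z H (q o) (Part c o) a with hZZ
  -- normalise
  obtain ⟨s, t, hst, hnadj, hs, ht, hNb, hKs⟩ : ∃ s t, s ≠ t ∧ ¬ H.Adj s t ∧ s ∉ ZZ ∧ t ∉ ZZ ∧
      Nb H (Part c o) a = insert s (insert t ZZ) ∧ K0 = insert s ZZ := by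
    rcases hall' K0 hK0 with h' | h'
    · exact ⟨s', t', hst', hnadj', hs', ht', hNb', h'⟩
    · exact ⟨t', s', hst'.symm, fun h => hnadj' h.symm, ht', hs', by rw [hNb', Finset.insert_comm], h'⟩
  have hya' : y ≠ a := by rintro rfl; simp [ha] at hy
  have hyo : c y ≠ some o := by rw [hy]; simpa using hj
  have hAK : ∀ v ∈ K0, c v = some o ∧ H.Adj a v := fun v hv => by simpa using hK0.1 hv
  have hnya : ¬ H.Adj y a := by
    intro hadj
    have h1 : Clq H (insert a K0) := hK0.2.1.insert fun b hb => (hAK b hb).2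
    have h2 : Clq H (insert y (insert a K0)) := h1.insert fun b hb => by
      rcases mem_insert.1 hb with rfl | hb
      · exact hadj
      · exact hyK b hb
    have := C.om _ h2
    rw [card_insert_of_notMem, card_insert_of_notMem, hK0.2.2] at this
    · omega
    · intro hh; have := (hAK a hh).1; simp [ha] at this
    · simp only [mem_insert, not_or]; exact ⟨hya', fun hh => hyo (hAK y hh).1⟩
  have hZK : ∀ z ∈ ZZ, z ∈ K0 := fun z hz => by rw [hKs]; exact mem_insert_of_mem hz
  obtain ⟨v, hv⟩ : ZZ.Nonempty := card_pos.1 (by omega)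
  have hcv := (hAK v (hZK v hv)).1
  have h1 := S3 h ha hv
  have hyv' : y ≠ v := by rintro rfl; exact hyo hcv
  have hy1 : sw c a v y = some j := by rw [sw_ne hyv' hya', hy]
  have hl : ¬ Tight H q (sw c a v) o v := by
    unfold Tight; rw [(E2_list C h ha hE' hv).1]; omega
  have hT := S2t C h1 sw_self (Ne.symm hj) hl
  have h2 := (S4aux h1 sw_self hj hy1 (hyK v (hZK v hv)).symm hT).1
  have hle := S2le C h2 sw_self o
  have hP2 : Part (sw (sw c a v) v y) o = Part (sw c a v) o := by
    rw [Part_sw sw_self hy1, if_neg (Ne.symm hj)]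
  have hKv : ∀ K, Qcl H (q o) (Part (sw c a v) o) y K → ∀ z ∈ K, z ∉ ZZ ∧ z ≠ a ∧ z ≠ v ∧ c z = some o ∧ H.Adj y z := by
    intro K hK z hz
    have hKm : ∀ z ∈ K, z ≠ a ∧ z ≠ v ∧ c z = some o ∧ H.Adj y z := by
      intro z hz
      have h3 := (mem_L ha hcv).1 (hK.1 hz)
      have hne : z ≠ a := by rintro rfl; exact hnya h3.2
      have h4 := h3.1.resolve_left hne
      exact ⟨hne, h4.1, h4.2, h3.2⟩
    refine ⟨?_, hKm z hz⟩
    intro hzZ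
    have h5 := (E2_list C h ha hE' hzZ).2
    have hcz := Z_mem_col hzZ
    have hsub : K.erase z ⊆ insert s (insert t ((ZZ.erase z).erase v)) := by
      intro w hw
      have hw' := mem_erase.1 hw
      have h6 := hKm w hw'.2
      have h7 := h5 w ((mem_L ha hcz).2 ⟨Or.inr ⟨hw'.1, h6.2.2.1⟩, hK.2.1 _ hz _ hw'.2 (Ne.symm hw'.1)⟩)
      have h8 := h7.resolve_left h6.1
      rw [hNb] at h8
      simp only [mem_insert, mem_erase] at h8 ⊢
      have := h6.2.1
      have := hw'.1
      tauto
    have hvz : v ≠ z := Ne.symm (hKm z hz).2.1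
    have hc1 : #((ZZ.erase z).erase v) + 2 = #ZZ := by
      rw [card_erase_of_mem (by simp [hvz, hv]), card_erase_of_mem hzZ]
      have : 2 ≤ #ZZ := by omega
      omega
    have hc2 : #(insert s (insert t ((ZZ.erase z).erase v))) ≤ #(K.erase z) := by
      have := card_insert_le s (insert t ((ZZ.erase z).erase v))
      have := card_insert_le t ((ZZ.erase z).erase v)
      rw [card_erase_of_mem hz, hK.2.2]
      omega
    have heq := eq_of_subset_of_card_le hsub hc2
    have hsK : s ∈ K := mem_of_mem_erase (heq ▸ mem_insert_self _ _)
    have htK : t ∈ K := mem_of_mem_erase (heq ▸ mem_insert_of_mem (mem_insert_self _ _))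
    exact hnadj (hK.2.1 _ hsK _ htK hst)
  obtain ⟨K, hK⟩ := S1 h1 (y := y) (by rw [hy1]; simpa using hj)
  have hbig : K ∪ ZZ.erase v ⊆ Nb H (Part (sw c a v) o) y := by
    refine union_subset hK.1 ?_
    intro w hw
    have h3 := mem_erase.1 hw
    rw [mem_L ha hcv]
    exact ⟨Or.inr ⟨h3.1, (hAK w (hZK w h3.2)).1⟩, hyK w (hZK w h3.2)⟩
  rw [hP2] at hle
  have hdj : Disjoint K (ZZ.erase v) := by
    rw [disjoint_left]; intro w hw hw'; exact (hKv K hK w hw).1 (mem_of_mem_erase hw')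
  have c5 := (card_le_card hbig)
  rw [card_union_of_disjoint hdj, hK.2.2, card_erase_of_mem hv] at c5
  have hq3 : q o = 3 := by omega
  have heq : K ∪ ZZ.erase v = Nb H (Part (sw c a v) o) y := by
    apply eq_of_subset_of_card_le hbig
    rw [card_union_of_disjoint hdj, hK.2.2, card_erase_of_mem hv]; omega
  have hsK0 : s ∈ K0 := by rw [hKs]; exact mem_insert_self _ _
  have hcs := (hAK s hsK0).1
  have hsv : s ≠ v := by rintro rfl; exact hs hv
  have hsNb : s ∈ Nb H (Part (sw c a v) o) y := (mem_L ha hcv).2 ⟨Or.inr ⟨hsv, hcs⟩, hyK s hsK0⟩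
  have hsub : ∀ L, Qcl H (q o) (Part (sw c a v) o) y L → L = K := by
    intro L hL
    refine eq_of_subset_of_card_le ?_ (by rw [hL.2.2, hK.2.2])
    intro w hw
    have := hL.1 hw
    rw [← heq] at this
    rcases mem_union.1 this with h' | h'
    · exact h'
    · exact absurd (mem_of_mem_erase h') (hKv L hL w hw).1
  have hsK : s ∈ K := by
    have := hsNb
    rw [← heq] at this
    rcases mem_union.1 this with h' | h'
    · exact h'
    · exact absurd (mem_of_mem_erase h') hs
  have hsZ : s ∈ Z H (q o) (Part (sw (sw c a v) v y) o) y := by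
    rw [hP2]
    exact mem_Z.2 ⟨by simpa using hsNb, fun L hL => by rw [hsub L hL]; exact hsK⟩
  have hfin := list_le C h2 sw_self hsZ
  have hcs2 := Z_mem_col hsZ
  obtain ⟨v', hv'⟩ : (ZZ.erase v).Nonempty := card_pos.1 (by rw [card_erase_of_mem hv]; omega)
  have hv'1 := mem_erase.1 hv'
  have hyK' : y ∉ K := fun hh => hyo (hKv K hK y hh).2.2.2.1
  have hinv : ∀ z, z ∈ Part (sw c a v) o → sw (sw c a v) v y z = some o := by
    intro z hz; rw [← hP2] at hz; simpa using hz
  have hmem : insert v' (insert a (insert y (K.erase s))) ⊆ Nb H (Part (sw (sw (sw c a v) v y) y s) o) s := by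
    have hsv' : s ≠ v' := by rintro rfl; exact hs hv'1.2
    have hsa : s ≠ a := by rintro rfl; simp [ha] at hcs
    have M : ∀ z, z ∈ Part (sw c a v) o → z ≠ s → H.Adj s z → z ∈ Nb H (Part (sw (sw (sw c a v) v y) y s) o) s := by
      intro z hz hzs hadj
      rw [mem_L sw_self hcs2]
      exact ⟨Or.inr ⟨hzs, hinv z hz⟩, hadj⟩
    apply insert_subset
    · apply M v' _ hsv'.symm (hK0.2.1 _ hsK0 _ (hZK _ hv'1.2) hsv')
      have := hbig (mem_union_right _ hv')
      exact (mem_Nb.1 this).1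
    apply insert_subset
    · apply M a _ hsa.symm (hAK s hsK0).2.symm
      rw [Part_sw ha hcv, if_pos rfl]; exact mem_insert_self _ _
    apply insert_subset
    · rw [mem_L sw_self hcs2]; exact ⟨Or.inl rfl, (hyK s hsK0).symm⟩
    · intro z hz
      have hz' := mem_erase.1 hz
      exact M z (mem_Nb.1 (hK.1 hz'.2)).1 hz'.1 (hK.2.1 _ hsK _ hz'.2 (Ne.symm hz'.1))
  have c6 := (card_le_card hmem).trans hfin
  rw [card_insert_of_notMem, card_insert_of_notMem, card_insert_of_notMem, card_erase_of_mem hsK, hK.2.2] at c6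
  · omega
  · simp [hyK']
  · simp only [mem_insert, mem_erase, not_or, not_and]
    exact ⟨hya'.symm, fun _ hh => (hKv K hK a hh).2.1 rfl⟩
  · simp only [mem_insert, mem_erase, not_or, not_and]
    refine ⟨?_, ?_, fun _ hh => (hKv K hK v' hh).1 hv'1.2⟩
    · rintro rfl; have := (hAK _ (hZK _ hv'1.2)).1; simp [ha] at this
    · rintro rfl; exact hyo (hAK _ (hZK _ hv'1.2)).1

end
end St4

namespace St4
set_option linter.all false
open Finset
open scoped Classical
noncomputable section
variable {V : Type*} [Fintype V] {H : SimpleGraph V} {k : ℕ} {o : Fin k} {q : Fin k → ℕ}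

def Kick (H : SimpleGraph V) (o : Fin k) (q : Fin k → ℕ) (c0 c : V → Option (Fin k)) (a v : V) : Prop :=
  (c0 a ≠ some o ∧ v ∈ Z H (q o) (Part c o) a) ∨ ∃ j, j ≠ o ∧ c v = some j ∧ H.Adj a v ∧ Tight H q c j a

structure PEx (H : SimpleGraph V) (o : Fin k) (q : Fin k → ℕ) (c0 : V → Option (Fin k)) (n m : ℕ)
    (x : ℕ → V) (par : ℕ → ℕ) (st : ℕ → V → Option (Fin k)) : Prop where
  npos : 0 < n
  mn : m ≤ n
  x0 : c0 (x 0) = none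
  st0 : st 0 = c0
  par_lt : ∀ i, 0 < i → i < n → par i < i
  par_le : ∀ i, 0 < i → i < n → par i ≤ m
  kick : ∀ i, 0 < i → i < n → Kick H o q c0 (st (par i)) (x (par i)) (x i)
  st_eq : ∀ i, 0 < i → i < n → st i = sw (st (par i)) (x (par i)) (x i)
  inj : ∀ i j, i < n → j < n → x i = x j → i = j
  mono : ∀ i j, 0 < i → i ≤ j → j < n → par i ≤ par j
  closed : ∀ i < m, ∀ v, Kick H o q c0 (st i) (x i) v → ∃ j < n, x j = v ∧ (j = 0 ∨ par j ≤ i)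

lemma PEx.le_card {c0 : V → Option (Fin k)} {n m x par st} (P : PEx H o q c0 n m x par st) : n ≤ Fintype.card V := by
  have : Function.Injective (fun i : Fin n => x i) := by
    intro i j hij
    exact Fin.ext (P.inj i j i.2 j.2 hij)
  simpa using Fintype.card_le_of_injective _ this

lemma exists_PEx (c0 : V → Option (Fin k)) (w : V) (hw : c0 w = none) :
    ∃ n x par st, PEx H o q c0 n n x par st ∧ x 0 = w := by
  by_contra hno
  push Not at hno
  have key : ∀ N : ℕ, ∃ n m x par st, PEx H o q c0 n m x par st ∧ x 0 = w ∧ N ≤ n + m := by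
    intro N
    induction N with
    | zero =>
      refine ⟨1, 0, fun _ => w, fun _ => 0, fun _ => c0, ⟨by omega, by omega, hw, rfl, ?_, ?_, ?_, ?_, ?_, ?_, ?_⟩, rfl, by omega⟩ <;> intros <;> omega
    | succ N ih =>
      obtain ⟨n, m, x, par, st, P, hx, hN⟩ := ih
      have hmn : m < n := by
        rcases lt_or_eq_of_le P.mn with h | h
        · exact h
        · subst h; exact absurd hx (hno _ _ _ _ P)
      by_cases hall : ∀ v, Kick H o q c0 (st m) (x m) v → ∃ j < n, x j = v
      · refine ⟨n, m + 1, x, par, st, { P with mn := hmn, par_le := ?_, closed := ?_ }, hx, by omega⟩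
        · intro i h1 h2; have := P.par_le i h1 h2; omega
        · intro i hi v hv
          rcases lt_or_eq_of_le (Nat.lt_succ_iff.1 hi) with h | h
          · exact P.closed i h v hv
          · subst h
            obtain ⟨j, hj, hjv⟩ := hall v hv
            refine ⟨j, hj, hjv, ?_⟩
            rcases Nat.eq_zero_or_pos j with h | h
            · exact Or.inl h
            · exact Or.inr (P.par_le j h hj)
      · push Not at hall
        obtain ⟨v, hv, hvn⟩ := hall
        have hx' : ∀ i, i < n → Function.update x n v i = x i := fun i hi => Function.update_of_ne hi.ne _ _
        have hp' : ∀ i, i < n → Function.update par n m i = par i := fun i hi => Function.update_of_ne hi.ne _ _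
        set s' := sw (st m) (x m) v
        have hs' : ∀ i, i < n → Function.update st n s' i = st i := fun i hi => Function.update_of_ne hi.ne _ _
        have hpl : ∀ i, 0 < i → i < n → par i < n := fun i h1 h2 => (P.par_lt i h1 h2).trans h2
        have hcase : ∀ i, i < n + 1 → i < n ∨ i = n := fun i hi => by omega
        refine ⟨n + 1, m, Function.update x n v, Function.update par n m, Function.update st n s', ⟨by omega, by omega, ?_, ?_, ?_, ?_, ?_, ?_, ?_, ?_, ?_⟩, ?_, by omega⟩
        · rw [hx' 0 P.npos]; exact P.x0
        · rw [hs' 0 P.npos]; exact P.st0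
        · intro i h0 h1
          rcases hcase i h1 with h | rfl
          · rw [hp' i h]; exact P.par_lt i h0 h
          · simpa using hmn
        · intro i h0 h1
          rcases hcase i h1 with h | rfl
          · rw [hp' i h]; exact P.par_le i h0 h
          · simp
        · intro i h0 h1
          rcases hcase i h1 with h | rfl
          · rw [hp' i h, hx' i h, hx' _ (hpl i h0 h), hs' _ (hpl i h0 h)]; exact P.kick i h0 h
          · rw [Function.update_self, Function.update_self, hx' m hmn, hs' m hmn]; exact hv
        · intro i h0 h1
          rcases hcase i h1 with h | rfl
          · rw [hp' i h, hx' i h, hs' i h, hx' _ (hpl i h0 h), hs' _ (hpl i h0 h)]; exact P.st_eq i h0 h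
          · rw [Function.update_self, Function.update_self, Function.update_self, hx' m hmn, hs' m hmn]
        · intro i j hi hj
          rcases hcase i hi with h | rfl <;> rcases hcase j hj with h' | rfl
          · rw [hx' i h, hx' j h']; exact P.inj i j h h'
          · rw [hx' i h, Function.update_self]; intro he; exact absurd he (hvn i h)
          · rw [hx' j h', Function.update_self]; intro he; exact absurd he.symm (hvn j h')
          · intro; rfl
        · intro i j h0 hij hj
          rcases hcase j hj with h' | rfl
          · rw [hp' i (by omega), hp' j h']; exact P.mono i j h0 hij h'
          · rw [Function.update_self]
            rcases hcase i (by omega) with h | rfl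
            · rw [hp' i h]; exact P.par_le i h0 h
            · simp
        · intro i hi z hz
          rw [hs' i (by omega), hx' i (by omega)] at hz
          obtain ⟨j, hj, hjz, hj'⟩ := P.closed i hi z hz
          exact ⟨j, by omega, by rw [hx' j hj]; exact hjz, by rw [hp' j hj]; exact hj'⟩
        · rw [hx' 0 P.npos]; exact hx
  obtain ⟨n, m, x, par, st, P, _, hN⟩ := key (2 * Fintype.card V + 1)
  have := P.le_card
  have := P.mn
  omega

inductive Anc (par : ℕ → ℕ) : ℕ → ℕ → Prop
  | refl (i : ℕ) : Anc par i i
  | step {j i : ℕ} : 0 < i → Anc par j (par i) → Anc par j i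

structure Ex (H : SimpleGraph V) (o : Fin k) (q : Fin k → ℕ) (c0 : V → Option (Fin k)) (n : ℕ)
    (x : ℕ → V) (par : ℕ → ℕ) (st : ℕ → V → Option (Fin k)) : Prop where
  C : Ctx H o q
  O : Opt H o q c0
  P : PEx H o q c0 n n x par st

variable {c0 : V → Option (Fin k)} {n : ℕ} {x : ℕ → V} {par : ℕ → ℕ} {st : ℕ → V → Option (Fin k)}

lemma Ex.par_n (X : Ex H o q c0 n x par st) {i : ℕ} (h0 : 0 < i) (hi : i < n) : par i < n :=
  (X.P.par_lt i h0 hi).trans hi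

lemma Ex.anc_le (X : Ex H o q c0 n x par st) {j i : ℕ} (h : Anc par j i) (hi : i < n) : j ≤ i := by
  induction h with
  | refl => exact le_rfl
  | step h0 _ ih =>
    have := X.P.par_lt _ h0 hi
    have := ih (by omega)
    omega

lemma Anc.trans' {a b c : ℕ} (h1 : Anc par a b) (h2 : Anc par b c) : Anc par a c := by
  induction h2 with
  | refl => exact h1
  | step h0 _ ih => exact Anc.step h0 ih

lemma anc_par {i : ℕ} (h : 0 < i) : Anc par (par i) i := Anc.step h (Anc.refl _)

lemma Anc.of_ne {j i : ℕ} (h : Anc par j i) (hne : j ≠ i) : 0 < i ∧ Anc par j (par i) := by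
  cases h with
  | refl => exact absurd rfl hne
  | step h0 h => exact ⟨h0, h⟩

lemma Anc.next {l i : ℕ} (h : Anc par l i) (hne : l ≠ i) : ∃ l', 0 < l' ∧ par l' = l ∧ Anc par l' i := by
  induction h with
  | refl => exact absurd rfl hne
  | @step i h0 h ih =>
    by_cases hl : l = par i
    · exact ⟨i, h0, hl.symm, Anc.refl _⟩
    · obtain ⟨l', h1, h2, h3⟩ := ih hl
      exact ⟨l', h1, h2, Anc.step h0 h3⟩

lemma Ex.anc_lin (X : Ex H o q c0 n x par st) {a b i : ℕ} (ha : Anc par a i) (hb : Anc par b i) (hi : i < n)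
    (hab : a ≤ b) : Anc par a b := by
  induction hb with
  | refl => exact ha
  | @step i h0 hb ih =>
    have h1 := X.P.par_lt _ h0 hi
    have h2 := X.anc_le hb (by omega)
    exact ih (ha.of_ne (by omega)).2 (by omega)

lemma Ex.main (X : Ex H o q c0 n x par st) : ∀ i, i < n → Opt H o q (st i) ∧ st i (x i) = none ∧
    ∀ v, (∀ l, Anc par l i → x l ≠ v) → st i v = c0 v := by
  intro i
  induction i using Nat.strong_induction_on with
  | _ i ih =>
    intro hi
    rcases Nat.eq_zero_or_pos i with rfl | h0
    · rw [X.P.st0]; exact ⟨X.O, X.P.x0, fun _ _ => rfl⟩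
    have hp := X.P.par_lt i h0 hi
    obtain ⟨h1, h2, h3⟩ := ih (par i) hp (by omega)
    rw [X.P.st_eq i h0 hi]
    refine ⟨?_, sw_self, ?_⟩
    · rcases X.P.kick i h0 hi with hk | ⟨j, hj, hk1, hk2, hk3⟩
      · exact S3 h1 h2 hk.2
      · exact (S4aux h1 h2 hj hk1 hk2 hk3).1
    · intro v hv
      rw [sw_ne (Ne.symm (hv i (Anc.refl _))) (Ne.symm (hv _ (anc_par h0)))]
      exact h3 v fun l hl => hv l (Anc.step h0 hl)

lemma Ex.opt (X : Ex H o q c0 n x par st) {i : ℕ} (hi : i < n) : Opt H o q (st i) := (X.main i hi).1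
lemma Ex.self (X : Ex H o q c0 n x par st) {i : ℕ} (hi : i < n) : st i (x i) = none := (X.main i hi).2.1
lemma Ex.unm (X : Ex H o q c0 n x par st) {i : ℕ} (hi : i < n) {v : V} (h : ∀ l, Anc par l i → x l ≠ v) :
    st i v = c0 v := (X.main i hi).2.2 v h

lemma Ex.unm' (X : Ex H o q c0 n x par st) {i y : ℕ} (hi : i < n) (hy : y < n) (h : ¬ Anc par y i) :
    st i (x y) = c0 (x y) := by
  refine X.unm hi fun l hl he => h ?_
  have := X.anc_le hl hi
  rwa [← X.P.inj l y (by omega) hy he]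

lemma Ex.later (X : Ex H o q c0 n x par st) {i y : ℕ} (hiy : i < y) (hy : y < n) : st i (x y) = c0 (x y) := by
  refine X.unm' (by omega) hy fun h => ?_
  have := X.anc_le h (by omega)
  omega

lemma Ex.st_next (X : Ex H o q c0 n x par st) {l i : ℕ} (h : Anc par l i) (hi : i < n) (h0 : 0 < l) :
    st i (x (par l)) = c0 (x l) := by
  induction h with
  | refl =>
    have hp := X.P.par_lt _ h0 hi
    rw [X.P.st_eq _ h0 hi, sw_old, X.later hp hi]
    intro he
    have := X.P.inj _ _ hi (by omega) he
    omega
  | @step i hi0 h ih =>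
    have hp := X.P.par_lt _ hi0 hi
    have hl := X.anc_le h (by omega)
    have hpl := X.P.par_lt l h0 (by omega)
    rw [X.P.st_eq _ hi0 hi, sw_ne, ih (by omega)]
    · intro he; have := X.P.inj _ _ (by omega) hi he; omega
    · intro he; have := X.P.inj _ _ (by omega) (by omega) he; omega

lemma Ex.T1 (X : Ex H o q c0 n x par st) {i : ℕ} (hi : i < n) (h : c0 (x i) = some o) :
    0 < i ∧ c0 (x (par i)) ≠ some o ∧ x i ∈ Z H (q o) (Part (st (par i)) o) (x (par i)) := by
  have h0 : 0 < i := by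
    rcases Nat.eq_zero_or_pos i with rfl | h0
    · rw [X.P.x0] at h; simp at h
    · exact h0
  refine ⟨h0, ?_⟩
  rcases X.P.kick i h0 hi with hk | ⟨j, hj, hk1, hk2, hk3⟩
  · exact hk
  · rw [X.later (X.P.par_lt i h0 hi) hi, h] at hk1
    simp at hk1; exact absurd hk1.symm hj

lemma Ex.W (X : Ex H o q c0 n x par st) {y : ℕ} (hy : y < n) (h0 : 0 < y) (h : c0 (x y) ≠ some o) :
    ∃ j, j ≠ o ∧ c0 (x y) = some j ∧ H.Adj (x (par y)) (x y) ∧ Tight H q (st (par y)) j (x (par y)) ∧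
      Tight H q (st y) j (x y) := by
  have hp := X.P.par_lt y h0 hy
  have hl := X.later hp hy
  rcases X.P.kick y h0 hy with hk | ⟨j, hj, hk1, hk2, hk3⟩
  · exact absurd (hl ▸ Z_mem_col hk.2) h
  · refine ⟨j, hj, hl ▸ hk1, hk2, hk3, ?_⟩
    rw [X.P.st_eq y h0 hy]
    exact (S4aux (X.opt (by omega)) (X.self (by omega)) hj hk1 hk2 hk3).2

lemma Ex.exit_not (X : Ex H o q c0 n x par st) {g y : ℕ} (h : Anc par g y) (hy : y < n) (hg : c0 (x g) = some o) :
    st y (x g) ≠ some o := by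
  have hgy := X.anc_le h hy
  by_cases he : g = y
  · subst he; rw [X.self hy]; simp
  · obtain ⟨l, h0, hl, hA⟩ := h.next he
    have hly := X.anc_le hA hy
    rw [← hl, X.st_next hA hy h0]
    intro hT
    have := (X.T1 (by omega) hT).2.1
    rw [hl] at this
    exact this hg

lemma Ex.exit (X : Ex H o q c0 n x par st) {y : ℕ} {v : V} (hy : y < n) (hv : c0 v = some o) (h : st y v ≠ some o) :
    ∃ g, Anc par g y ∧ x g = v := by
  by_contra hn
  push Not at hn
  exact h (by rw [X.unm hy hn, hv])

lemma Ex.ent (X : Ex H o q c0 n x par st) {y : ℕ} {v : V} (hy : y < n) (hv : c0 v ≠ some o) (h : st y v = some o) :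
    ∃ u, 0 < u ∧ Anc par u y ∧ c0 (x u) = some o ∧ x (par u) = v := by
  by_cases hn : ∀ l, Anc par l y → x l ≠ v
  · exact absurd (X.unm hy hn ▸ h) hv
  push Not at hn
  obtain ⟨l, hl, rfl⟩ := hn
  have hly : l ≠ y := by rintro rfl; rw [X.self hy] at h; simp at h
  obtain ⟨u, h0, rfl, hA⟩ := hl.next hly
  exact ⟨u, h0, hA, by rw [← X.st_next hA hy h0]; exact h, rfl⟩

/-- membership in A_i of an originally-`o` vertex goes down to ancestors -/
lemma Ex.down (X : Ex H o q c0 n x par st) {i y : ℕ} {v : V} (hy : y < n) (h : Anc par i y) (hv : c0 v = some o)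
    (hs : st y v = some o) : st i v = some o := by
  have hiy := X.anc_le h hy
  rw [X.unm (by omega), hv]
  rintro l hl rfl
  exact X.exit_not (hl.trans' h) hy hv hs

lemma Ex.up (X : Ex H o q c0 n x par st) {i y : ℕ} {v : V} (hy : y < n) (h : Anc par i y) (hv : c0 v ≠ some o)
    (hs : st i v = some o) : st y v = some o := by
  have hiy := X.anc_le h hy
  obtain ⟨u, h0, hA, hu, rfl⟩ := X.ent (by omega) hv hs
  rw [X.st_next (hA.trans' h) hy h0, hu]

lemma Ex.kickZ (X : Ex H o q c0 n x par st) {i u : ℕ} (hi : i < n) (hu : u < n) (hW : c0 (x i) ≠ some o)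
    (hT : c0 (x u) = some o) (h : x u ∈ Z H (q o) (Part (st i) o) (x i)) : par u ≤ i := by
  obtain ⟨j, hj, he, hj'⟩ := X.P.closed i hi (x u) (Or.inl ⟨hW, h⟩)
  have := X.P.inj _ _ hj hu he
  subst this
  have := (X.T1 hj hT).1
  omega

lemma Ex.F1 (X : Ex H o q c0 n x par st) {i y : ℕ} {j : Fin k} (hy : y < n) (h0 : 0 < y) (hi : i < par y)
    (hadj : H.Adj (x i) (x y)) (hj : j ≠ o) (hc : c0 (x y) = some j) : ¬ Tight H q (st i) j (x i) := by
  intro hT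
  have hp := X.P.par_lt y h0 hy
  obtain ⟨j', hj', he, h'⟩ := X.P.closed i (by omega) (x y) (Or.inr ⟨j, hj, by rw [X.later (by omega) hy, hc], hadj, hT⟩)
  have := X.P.inj _ _ hj' hy he
  subst this
  omega

lemma Ex.F1n (X : Ex H o q c0 n x par st) {i y : ℕ} (hy : y < n) (h0 : 0 < y) (hi : i < par y)
    (hadj : H.Adj (x i) (x y)) (hW : c0 (x y) ≠ some o) : Tight H q (st i) o (x i) := by
  obtain ⟨j, hj, hc, -⟩ := X.W hy h0 hW
  have hp := X.P.par_lt y h0 hy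
  exact S2t X.C (X.opt (by omega)) (X.self (by omega)) hj (X.F1 hy h0 hi hadj hj hc)

/-- nonloose V1-type vertex: its list is contained in Z of the parent -/
lemma Ex.F1q (X : Ex H o q c0 n x par st) {g : ℕ} {v : V} (hg : g < n) (hT : c0 (x g) = some o)
    (ht : Tight H q (st g) o (x g)) (hv : st g v = some o) (hadj : H.Adj (x g) v) (hne : v ≠ x (par g)) :
    v ∈ Z H (q o) (Part (st (par g)) o) (x (par g)) := by
  obtain ⟨h0, hW, hZ⟩ := X.T1 hg hT
  have hp := X.P.par_lt g h0 hg
  unfold Tight at ht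
  have hm : v ∈ Nb H (Part (st g) o) (x g) := by simp [hv, hadj]
  rw [X.P.st_eq g h0 hg] at ht hm
  exact F1pp X.C (X.opt (by omega)) (X.self (by omega)) hZ ht hm hne

lemma Ex.EP_lt (X : Ex H o q c0 n x par st) {y g g' : ℕ} (hy : y < n) (hW : c0 (x y) ≠ some o) (hg : Anc par g y)
    (hg' : Anc par g' y) (hT : c0 (x g) = some o) (hT' : c0 (x g') = some o) (hlt : g < g')
    (hadj : H.Adj (x g) (x y)) : ¬ H.Adj (x g) (x g') := by
  intro had
  have hne : g' ≠ y := by rintro rfl; exact hW hT'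
  obtain ⟨h0, hA⟩ := hg'.of_ne hne
  have hp := X.P.par_lt y h0 hy
  have hle := X.anc_le hA (by omega)
  have hgn : g < n := by omega
  have ht := X.F1n hy h0 (by omega) hadj hW
  obtain ⟨g0, gW, -⟩ := X.T1 hgn hT
  have hpg := X.P.par_lt g g0 hgn
  have hZ := X.F1q hgn hT ht (v := x g') (by rw [X.later hlt (by omega), hT']) had
    (by intro he; have := X.P.inj _ _ (by omega) (by omega) he; omega)
  have h1 := X.kickZ (by omega) (by omega) gW hT' hZ
  have h2 := X.anc_lin hg hg' hy hlt.le
  have h3 := X.anc_le (h2.of_ne hlt.ne).2 (by have := X.P.par_lt g' (by omega) (by omega); omega)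
  omega

lemma Ex.EP (X : Ex H o q c0 n x par st) {y : ℕ} {v v' : V} (hy : y < n) (hW : c0 (x y) ≠ some o)
    (hv : c0 v = some o) (hv' : c0 v' = some o) (hs : st y v ≠ some o) (hs' : st y v' ≠ some o)
    (ha : H.Adj (x y) v) (ha' : H.Adj (x y) v') : ¬ H.Adj v v' := by
  obtain ⟨g, hg, rfl⟩ := X.exit hy hv hs
  obtain ⟨g', hg', rfl⟩ := X.exit hy hv' hs'
  intro h
  rcases lt_trichotomy g g' with hlt | rfl | hlt
  · exact X.EP_lt hy hW hg hg' hv hv' hlt ha.symm h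
  · exact absurd h (by simp)
  · exact X.EP_lt hy hW hg' hg hv' hv hlt ha'.symm h.symm

end
end St4

namespace St4
set_option linter.all false
open Finset
open scoped Classical
noncomputable section
variable {V : Type*} [Fintype V] {H : SimpleGraph V} {k : ℕ} {o : Fin k} {q : Fin k → ℕ}
variable {c0 : V → Option (Fin k)} {n : ℕ} {x : ℕ → V} {par : ℕ → ℕ} {st : ℕ → V → Option (Fin k)}

lemma Ex.xne (X : Ex H o q c0 n x par st) {i j : ℕ} (hi : i < n) (hj : j < n) (h : i ≠ j) : x i ≠ x j :=
  fun he => h (X.P.inj _ _ hi hj he)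

lemma Ex.G (X : Ex H o q c0 n x par st) {b y u : ℕ} {K : Finset V} (hy : y < n) (hby : b ≤ y)
    (hWb : c0 (x b) ≠ some o) (hWy : c0 (x y) ≠ some o) (hK : Qcl H (q o) (Part (st b) o) (x y) K)
    (hu0 : 0 < u) (hub : Anc par u b) (huT : c0 (x u) = some o) (hh : x (par u) ∈ K) :
    Tight H q (st (par u)) o (x (par u)) ∧
    K = insert (x (par u)) ((Nb H (Part (st (par u)) o) (x (par u))).erase (x u)) ∧
    ¬ H.Adj (x y) (x u) ∧ (∀ v ∈ K, v ≠ x (par u) → c0 v = some o) ∧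
    (∀ t ∈ Nb H (Part (st (par u)) o) (x (par u)), t ≠ x u → ∀ z, st (par u) z = some o → H.Adj t z →
      z ∈ Nb H (Part (st (par u)) o) (x (par u))) ∧
    x u ∈ Nb H (Part (st (par u)) o) (x (par u)) := by
  have hub' := X.anc_le hub (by omega)
  have hne : u ≠ b := by rintro rfl; exact hWb huT
  obtain ⟨hb0, hubp⟩ := hub.of_ne hne
  have hpb := X.P.par_lt b hb0 (by omega)
  have hpu := X.P.par_lt u hu0 (by omega)
  have hupb := X.anc_le hubp (by omega)
  have hpby := X.P.mono b y hb0 hby hy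
  have hy0 : 0 < y := by omega
  obtain ⟨-, hWh, huZ⟩ := X.T1 (show u < n by omega) huT
  obtain ⟨j, hj, hcj, -, -, -⟩ := X.W hy hy0 hWy
  have hpyl := X.P.par_lt y hy0 hy
  have hhy : H.Adj (x (par u)) (x y) := (mem_Nb.1 (hK.1 hh)).2.symm
  have hnt := X.F1 hy hy0 (show par u < par y by omega) hhy hj hcj
  have hopt := X.opt (show par u < n by omega)
  have hself := X.self (show par u < n by omega)
  have hT : Tight H q (st (par u)) o (x (par u)) := S2t X.C hopt hself hj hnt
  obtain ⟨hQ, hZ⟩ := nonloose_Qcl hopt hself hT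
  have hKm : ∀ v ∈ K, st b v = some o ∧ H.Adj (x y) v := fun v hv => by simpa using hK.1 hv
  -- no two entered
  have hent : ∀ v ∈ K, v ≠ x (par u) → c0 v = some o := by
    intro v hv hvne
    by_contra hc
    obtain ⟨u2, h20, h2A, h2T, rfl⟩ := X.ent (by omega) hc (hKm v hv).1
    have h2b := X.anc_le h2A (by omega)
    have h2p := X.P.par_lt u2 h20 (by omega)
    -- symmetric helper
    have aux : ∀ r s, 0 < r → 0 < s → Anc par r b → Anc par s b → c0 (x r) = some o → c0 (x s) = some o →
        c0 (x (par r)) ≠ some o → c0 (x (par s)) ≠ some o →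
        par r < par s → H.Adj (x (par r)) (x (par s)) → H.Adj (x (par r)) (x y) → H.Adj (x (par s)) (x y) → False := by
      intro r s hr0 hs0 hrA hsA hrT hsT hrW hsW hlt hadj hry hsy
      have hrb := X.anc_le hrA (by omega)
      have hsb := X.anc_le hsA (by omega)
      have hrp := X.P.par_lt r hr0 (by omega)
      have hsp := X.P.par_lt s hs0 (by omega)
      have hrs : r ≤ par s := by
        -- Anc (par r) (par s), next is r
        by_contra hlt2
        push Not at hlt2
        have hA1 : Anc par (par s) b := (anc_par hs0).trans' hsA
        have h3 := X.anc_lin hA1 hrA (by omega) hlt2.le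
        have h4 := X.anc_le (h3.of_ne hlt2.ne).2 (by omega)
        omega
      have hrs' : r ≠ par s := by rintro rfl; exact hsW hrT
      have hA1 : Anc par (par s) b := (anc_par hs0).trans' hsA
      have h3 := X.anc_lin hrA hA1 (by omega) hrs
      obtain ⟨hps0, h4⟩ := h3.of_ne hrs'
      have hpps := X.P.par_lt (par s) hps0 (by omega)
      have h5 := X.anc_le h4 (by omega)
      have hsb' : s ≠ b := by rintro rfl; exact hWb hsT
      have h6 := X.anc_le (hsA.of_ne hsb').2 (by omega)
      obtain ⟨i, hi, hci, -, -, hti⟩ := X.W (show par s < n by omega) hps0 hsW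
      have n1 := X.F1 (show par s < n by omega) hps0 (show par r < par (par s) by omega) hadj hi hci
      have n2 := X.F1 hy hy0 (show par r < par y by omega) hry hj hcj
      have hij : i = j := by
        by_contra hij
        exact n2 (S2t X.C (X.opt (by omega)) (X.self (by omega)) hij n1)
      subst hij
      exact X.F1 hy hy0 (show par s < par y by omega) hsy hj hcj hti
    have hadj2 := (hKm _ hv).2.symm
    rcases lt_trichotomy (par u) (par u2) with h | h | h
    · exact aux u u2 hu0 h20 hub h2A huT h2T hWh hc h (hK.2.1 _ hh _ hv (Ne.symm hvne)) hhy hadj2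
    · rw [h] at hvne; exact hvne rfl
    · exact aux u2 u h20 hu0 h2A hub h2T huT hc hWh h (hK.2.1 _ hv _ hh hvne) hadj2 hhy
  have hsub : K.erase (x (par u)) ⊆ (Nb H (Part (st (par u)) o) (x (par u))).erase (x u) := by
    intro v hv
    have hv' := mem_erase.1 hv
    have hc := hent v hv'.2 hv'.1
    refine mem_erase.2 ⟨?_, ?_⟩
    · rintro rfl; exact X.exit_not hub (by omega) huT (hKm _ hv'.2).1
    · simp only [mem_Nb, mem_Part]
      exact ⟨X.down (by omega) ((anc_par hu0).trans' hub) hc (hKm _ hv'.2).1, hK.2.1 _ hh _ hv'.2 (Ne.symm hv'.1)⟩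
  have huN : x u ∈ Nb H (Part (st (par u)) o) (x (par u)) := Z_sub_Nb huZ
  have heq := eq_of_subset_of_card_le hsub (by
    rw [card_erase_of_mem hh, card_erase_of_mem huN, hK.2.2, hQ.2.2])
  have hKeq : K = insert (x (par u)) ((Nb H (Part (st (par u)) o) (x (par u))).erase (x u)) := by
    rw [← heq, insert_erase hh]
  have hyu : ¬ H.Adj (x y) (x u) := by
    intro hadj
    have huK : x u ∉ K := fun h => X.exit_not hub (by omega) huT (hKm _ h).1
    have h1 : Clq H (insert (x u) K) := hK.2.1.insert fun v hv => by
      rw [hKeq] at hv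
      rcases mem_insert.1 hv with rfl | hv
      · exact (mem_Nb.1 huN).2.symm
      · have hv' := mem_erase.1 hv
        exact hQ.2.1 _ huN _ hv'.2 (Ne.symm hv'.1)
    have h2 : Clq H (insert (x y) (insert (x u) K)) := h1.insert fun v hv => by
      rcases mem_insert.1 hv with rfl | hv
      · exact hadj
      · exact (hKm v hv).2
    have := X.C.om _ h2
    rw [card_insert_of_notMem, card_insert_of_notMem huK, hK.2.2] at this
    · omega
    · simp only [mem_insert, not_or]
      exact ⟨X.xne (by omega) (by omega) (by omega), fun h => by simpa using (hKm _ h).2⟩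
  refine ⟨hT, hKeq, hyu, hent, ?_, huN⟩
  refine LB X.C hopt hself hT huN hj (by rw [X.later (by omega) hy, hcj]) hhy.symm ?_ hyu
  intro v hv hvu
  refine (hKm v ?_).2
  rw [hKeq]; exact mem_insert_of_mem (mem_erase.2 ⟨hvu, hv⟩)

lemma Ex.out_card (X : Ex H o q c0 n x par st) {y : ℕ} {K L : Finset V} (hy : y < n)
    (hK : Qcl H (q o) (Part (st y) o) (x y) K) (hL : ∀ v ∈ L, H.Adj (x y) v) (hLc : #L = q o) (hd : Disjoint K L) :
    q o ≤ #(L.filter fun v => st y v ≠ some o) + 1 := by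
  have h1 := S2le X.C (X.opt hy) (X.self hy) o
  have h2 : K ∪ L.filter (fun v => st y v = some o) ⊆ Nb H (Part (st y) o) (x y) := by
    refine union_subset hK.1 ?_
    intro v hv
    have := mem_filter.1 hv
    simp [this.2, hL v this.1]
  have h3 := (card_le_card h2).trans h1
  rw [card_union_of_disjoint (hd.mono_right (filter_subset _ _)), hK.2.2] at h3
  have h4 := card_filter_add_card_filter_not (s := L) (fun v => st y v = some o)
  simp only [ne_eq]
  omega

lemma Ex.out_le (X : Ex H o q c0 n x par st) {y : ℕ} {L : Finset V} (hy : y < n) (hW : c0 (x y) ≠ some o)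
    (hL : ∀ v ∈ L, H.Adj (x y) v) (hc : Clq H L) (h0 : ∀ v ∈ L, st y v ≠ some o ∧ c0 v = some o) : #L ≤ 1 := by
  rw [card_le_one]
  intro v hv w hw
  by_contra hne
  exact X.EP hy hW (h0 v hv).2 (h0 w hw).2 (h0 v hv).1 (h0 w hw).1 (hL v hv) (hL w hw) (hc v hv w hw hne)

lemma Kv (C : Ctx H o q) {c : V → Option (Fin k)} (h : Opt H o q c) {a v y : V} (ha : c a = none)
    (hv : v ∈ Z H (q o) (Part c o) a) (hy : c y ≠ some o) (hya : y ≠ a) :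
    ∃ K, Clq H K ∧ #K = q o ∧ ∀ z ∈ K, (z = a ∨ (z ≠ v ∧ c z = some o)) ∧ H.Adj y z := by
  have hcv := Z_mem_col hv
  have hyv : y ≠ v := by rintro rfl; exact hy hcv
  obtain ⟨K, hK⟩ := S1 (S3 h ha hv) (y := y) (by rwa [sw_ne hyv hya])
  exact ⟨K, hK.2.1, hK.2.2, fun z hz => (mem_L ha hcv).1 (hK.1 hz)⟩

lemma Ex.Claim1 (X : Ex H o q c0 n x par st) {y : ℕ} {K : Finset V} (hy : y < n) (hW : c0 (x y) ≠ some o)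
    (hK : Qcl H (q o) (Part (st y) o) (x y) K) : ∀ v ∈ K, c0 v = some o := by
  intro v hv
  by_contra hc
  have q0 := X.C.q0
  have hvs : st y v = some o := by simpa using (mem_Nb.1 (hK.1 hv)).1
  obtain ⟨u, hu0, huA, huT, rfl⟩ := X.ent hy hc hvs
  obtain ⟨hT, hKeq, hyu, hent, hLB, huN⟩ := X.G hy le_rfl hW hW hK hu0 huA huT hv
  have huy := X.anc_le huA hy
  have hpu := X.P.par_lt u hu0 (by omega)
  have hopt := X.opt (show par u < n by omega)
  have hself := X.self (show par u < n by omega)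
  obtain ⟨hQ, hZ⟩ := nonloose_Qcl hopt hself hT
  set N := Nb H (Part (st (par u)) o) (x (par u)) with hN
  have hNc : #N = q o := hT
  obtain ⟨t, ht⟩ : (N.erase (x u)).Nonempty := card_pos.1 (by rw [card_erase_of_mem huN]; omega)
  have ht' := mem_erase.1 ht
  obtain ⟨L, hLc, hLq, hLm⟩ := Kv X.C hopt hself (v := t) (y := x y) (by rw [hZ]; exact ht'.2)
    (by rw [X.later (by omega) hy]; exact hW) (X.xne hy (by omega) (by omega))
  have hNe : #((N.erase (x u)).erase t) + 2 = q o := by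
    rw [card_erase_of_mem ht, card_erase_of_mem huN]; omega
  have hhL : x (par u) ∉ L := by
    intro hh
    have : L.erase (x (par u)) ⊆ (N.erase (x u)).erase t := by
      intro z hz
      have hz' := mem_erase.1 hz
      have h1 := hLm z hz'.2
      have h2 := h1.1.resolve_left hz'.1
      refine mem_erase.2 ⟨h2.1, mem_erase.2 ⟨?_, ?_⟩⟩
      · rintro rfl; exact hyu h1.2
      · rw [hN]; simp only [mem_Nb, mem_Part]; exact ⟨h2.2, hLc _ hh _ hz'.2 (Ne.symm hz'.1)⟩
    have := card_le_card this
    rw [card_erase_of_mem hh, hLq] at this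
    omega
  have hLm' : ∀ z ∈ L, z ≠ t ∧ st (par u) z = some o ∧ z ≠ x u := by
    intro z hz
    have h1 := hLm z hz
    have h2 := h1.1.resolve_left (by rintro rfl; exact hhL hz)
    exact ⟨h2.1, h2.2, by rintro rfl; exact hyu h1.2⟩
  have hLN : ∀ s ∈ L, s ∉ N := by
    intro s hs hsN
    have h1 := hLm' s hs
    have : L ⊆ (N.erase (x u)).erase t := by
      intro z hz
      have hz' := hLm' z hz
      refine mem_erase.2 ⟨hz'.1, mem_erase.2 ⟨hz'.2.2, ?_⟩⟩
      by_cases hzs : z = s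
      · rwa [hzs]
      · exact hLB s hsN h1.2.2 z hz'.2.1 (hLc _ hs _ hz (Ne.symm hzs))
    have := card_le_card this
    omega
  have hd : Disjoint K L := by
    rw [disjoint_left]
    intro z hz hzL
    rw [hKeq] at hz
    rcases mem_insert.1 hz with rfl | hz
    · exact hhL hzL
    · exact hLN z hzL (mem_of_mem_erase hz)
  have h1 := X.out_card hy hK (fun v hv => (hLm v hv).2) hLq hd
  have h2 := X.out_le (L := L.filter fun v => st y v ≠ some o) hy hW
    (fun v hv => (hLm v (mem_filter.1 hv).1).2) (hLc.mono (filter_subset _ _)) (by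
      intro z hz
      have hz' := mem_filter.1 hz
      refine ⟨hz'.2, ?_⟩
      by_contra hcz
      exact hz'.2 (X.up hy ((anc_par hu0).trans' huA) hcz (hLm' z hz'.1).2.1))
  omega

lemma Ex.NT3 (X : Ex H o q c0 n x par st) {y u g : ℕ} {f : V} (hq3 : q o = 3) (hy : y < n) (hu : u < n)
    (huT : c0 (x u) = some o) (hgA : Anc par g y) (hgT : c0 (x g) = some o) (hf : c0 f = some o)
    (hfy : st y f = some o) (hT : Tight H q (st (par u)) o (x (par u)))
    (hgN : x g ∈ Nb H (Part (st (par u)) o) (x (par u))) (hfN : f ∈ Nb H (Part (st (par u)) o) (x (par u)))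
    (huN : x u ∈ Nb H (Part (st (par u)) o) (x (par u))) (hgu : x g ≠ x u) (hfu : f ≠ x u) (hfg : f ≠ x g)
    (hLB : ∀ t ∈ Nb H (Part (st (par u)) o) (x (par u)), t ≠ x u → ∀ z, st (par u) z = some o → H.Adj t z →
      z ∈ Nb H (Part (st (par u)) o) (x (par u)))
    (hhy : st y (x (par u)) ≠ some o) : False := by
  obtain ⟨hu0, hWh, huZ⟩ := X.T1 hu huT
  have hpu := X.P.par_lt u hu0 hu
  have hopt := X.opt (show par u < n by omega)
  have hself := X.self (show par u < n by omega)
  obtain ⟨hQ, hZ⟩ := nonloose_Qcl hopt hself hT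
  have hgy := X.anc_le hgA hy
  obtain ⟨hg0, hW2, hgZ⟩ := X.T1 (show g < n by omega) hgT
  have hpg := X.P.par_lt g hg0 (by omega)
  have hle := X.kickZ (show par u < n by omega) (show g < n by omega) hWh hgT (by rw [hZ]; exact hgN)
  have hne : par g ≠ par u := by
    intro he; apply hhy; rw [← he, X.st_next hgA hy hg0, hgT]
  have hlt : par g < par u := by omega
  have hN3 : ∀ z ∈ Nb H (Part (st (par u)) o) (x (par u)), z = x u ∨ z = f ∨ z = x g := by
    have : ({x u, f, x g} : Finset V) = Nb H (Part (st (par u)) o) (x (par u)) := by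
      apply eq_of_subset_of_card_le
      · intro z hz; simp only [mem_insert, mem_singleton] at hz; rcases hz with rfl | rfl | rfl <;> assumption
      · rw [hQ.2.2, hq3, card_insert_of_notMem, card_insert_of_notMem] <;> simp [hfg, hfu.symm, hgu.symm]
    intro z hz; rw [← this] at hz; simpa using hz
  have hN0 : ∀ z ∈ Nb H (Part (st (par u)) o) (x (par u)), c0 z = some o := by
    intro z hz; rcases hN3 z hz with rfl | rfl | rfl <;> assumption
  have hopt2 := X.opt (show par g < n by omega)
  have hself2 := X.self (show par g < n by omega)
  obtain ⟨K2, hK2, huK2⟩ : ∃ K2, Qcl H (q o) (Part (st (par g)) o) (x (par g)) K2 ∧ x u ∉ K2 := by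
    by_contra hall
    push Not at hall
    obtain ⟨K, hK⟩ := S2c hopt2 hself2 o
    have : x u ∈ Z H (q o) (Part (st (par g)) o) (x (par g)) :=
      mem_Z.2 ⟨by simpa using mem_Nb.1 (hK.1 (hall K hK)), hall⟩
    have := X.kickZ (by omega) hu hW2 huT this
    omega
  have hgK2 := Z_sub hK2 hgZ
  have hfK2 : f ∈ K2 := by
    by_contra hfK
    refine hfu (extra_uniq X.C hopt2 hself2 hgZ hK2 ?_ ?_ ?_ ?_ hfK huK2)
    · exact X.down hy ((anc_par hg0).trans' hgA) hf hfy
    · rw [X.later (by omega) hu, huT]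
    · exact hQ.2.1 _ hgN _ hfN hfg.symm
    · exact hQ.2.1 _ hgN _ huN hgu
  obtain ⟨z, hz⟩ : ((K2.erase (x g)).erase f).Nonempty := card_pos.1 (by
    rw [card_erase_of_mem (by simp [hfg, hfK2]), card_erase_of_mem hgK2, hK2.2.2]; omega)
  simp only [mem_erase] at hz
  obtain ⟨hzf, hzg, hzK⟩ := hz
  have hz0 := X.Claim1 (by omega) hW2 hK2 z hzK
  have hzu : z ≠ x u := by rintro rfl; exact huK2 hzK
  have hzh : st (par u) z ≠ some o := by
    intro hs
    have := hLB _ hgN hgu z hs (hK2.2.1 _ hgK2 _ hzK (Ne.symm hzg))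
    rcases hN3 z this with h | h | h <;> contradiction
  obtain ⟨e, heA, rfl⟩ := X.exit (by omega) hz0 hzh
  have heu := X.anc_le heA (by omega)
  obtain ⟨he0, hW3, heZ⟩ := X.T1 (show e < n by omega) hz0
  have hpe := X.P.par_lt e he0 (by omega)
  have hs3 := X.st_next heA (by omega) he0
  rw [hz0] at hs3
  have hno : ∀ t ∈ Nb H (Part (st (par u)) o) (x (par u)), t ≠ x u → ¬ H.Adj t (x (par e)) := by
    intro t ht htu hadj
    exact hW3 (hN0 _ (hLB t ht htu _ hs3 hadj))
  have hopt3 := X.opt (show par e < n by omega)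
  have hself3 := X.self (show par e < n by omega)
  obtain ⟨K3, hK3⟩ := S2c hopt3 hself3 o
  have hd : ∀ t ∈ Nb H (Part (st (par u)) o) (x (par u)), st (par e) t = some o := by
    intro t ht
    exact X.down (show par u < n by omega) ((anc_par he0).trans' heA) (hN0 t ht) (by simpa using (mem_Nb.1 ht).1)
  refine hfg (extra_uniq X.C hopt3 hself3 heZ hK3 (hd _ hfN) (hd _ hgN) ?_ ?_ ?_ ?_)
  · exact hK2.2.1 _ hzK _ hfK2 hzf
  · exact hK2.2.1 _ hzK _ hgK2 hzg
  · intro h; exact hno _ hfN hfu (mem_Nb.1 (hK3.1 h)).2.symm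
  · intro h; exact hno _ hgN hgu (mem_Nb.1 (hK3.1 h)).2.symm

lemma Ex.NoTwin (X : Ex H o q c0 n x par st) {a y : ℕ} {K : Finset V} (hy : y < n) (hay : a < y)
    (hWa : c0 (x a) ≠ some o) (hW : c0 (x y) ≠ some o) (hKa : Qcl H (q o) (Part (st a) o) (x a) K)
    (hKy : Qcl H (q o) (Part (st y) o) (x y) K) : False := by
  have q0 := X.C.q0
  have hy0 : 0 < y := by omega
  have hopt := X.opt (show a < n by omega)
  have hself := X.self (show a < n by omega)
  obtain ⟨j, hj, hcj, -⟩ := X.W hy hy0 hW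
  have hsy : st a (x y) = some j := by rw [X.later hay hy, hcj]
  have hyK : ∀ v ∈ K, H.Adj (x y) v := fun v hv => (mem_Nb.1 (hKy.1 hv)).2
  have haK : ∀ v ∈ K, st a v = some o ∧ H.Adj (x a) v := fun v hv => by simpa using hKa.1 hv
  rcases DichO X.C hopt hself with hZ | hE
  swap
  · exact LE2 X.C hopt hself hE hj hsy hKa hyK
  have hKZ : K = Z H (q o) (Part (st a) o) (x a) := Qcl_uniq hKa hZ
  have hxya : x y ≠ x a := X.xne hy (by omega) (by omega)
  have hnya : ¬ H.Adj (x y) (x a) := by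
    intro hadj
    have h1 : Clq H (insert (x a) K) := hKa.2.1.insert fun b hb => (haK b hb).2
    have h2 : Clq H (insert (x y) (insert (x a) K)) := h1.insert fun b hb => by
      rcases mem_insert.1 hb with rfl | hb
      · exact hadj
      · exact hyK b hb
    have := X.C.om _ h2
    rw [card_insert_of_notMem, card_insert_of_notMem, hKa.2.2] at this
    · omega
    · intro hh; simpa using (haK _ hh).2
    · simp only [mem_insert, not_or]; exact ⟨hxya, fun hh => by simpa using hyK _ hh⟩
  have hext : ∀ v ∈ K, ∃ e, st a e = some o ∧ e ∉ K ∧ (∀ w ∈ K, w ≠ v → H.Adj w e) ∧ ¬ H.Adj v e := by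
    intro v hv
    obtain ⟨L, hLc, hLq, hLm0⟩ := Kv X.C hopt hself (v := v) (y := x y) (by rw [← hKZ]; exact hv)
      (by rw [hsy]; simpa using hj) hxya
    have hLm : ∀ z ∈ L, z ≠ v ∧ st a z = some o ∧ H.Adj (x y) z := by
      intro z hz
      have h1 := hLm0 z hz
      have h2 := h1.1.resolve_left (by rintro rfl; exact hnya h1.2)
      exact ⟨h2.1, h2.2, h1.2⟩
    have hQL : Qcl H (q o) (Part (st a) o) (x y) L := ⟨fun z hz => by simp [(hLm z hz).2], hLc, hLq⟩
    obtain ⟨w, hwL, hwK⟩ : ∃ w ∈ L, w ∈ K := by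
      by_contra hno
      push Not at hno
      have hd : Disjoint K L := by rw [disjoint_left]; intro z h1 h2; exact hno z h2 h1
      have h1 := X.out_card hy hKy (fun v hv => (hLm v hv).2.2) hLq hd
      set Out := L.filter (fun v => st y v ≠ some o) with hOut
      by_cases hall : ∀ z ∈ Out, c0 z = some o
      · have h2 := X.out_le (L := Out) hy hW (fun v hv => (hLm v (mem_filter.1 hv).1).2.2)
          (hLc.mono (filter_subset _ _)) (fun z hz => ⟨(mem_filter.1 hz).2, hall z hz⟩)
        omega
      · push Not at hall
        obtain ⟨z, hz, hzc⟩ := hall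
        have hz' := mem_filter.1 hz
        obtain ⟨u, hu0, huA, huT, rfl⟩ := X.ent (by omega) hzc (hLm z hz'.1).2.1
        obtain ⟨hT, hLeq, hyu, hent, hLB, huN⟩ := X.G hy hay.le hWa hW hQL hu0 huA huT hz'.1
        have hua := X.anc_le huA (by omega)
        have h2 := X.out_le (L := Out.erase (x (par u))) hy hW
          (fun v hv => (hLm v (mem_filter.1 (mem_of_mem_erase hv)).1).2.2)
          (hLc.mono ((erase_subset _ _).trans (filter_subset _ _))) (fun z hz => by
            have hz1 := mem_erase.1 hz
            have hz2 := mem_filter.1 hz1.2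
            exact ⟨hz2.2, hent z hz2.1 hz1.1⟩)
        have h3 := card_erase_of_mem hz
        have hq3 : q o = 3 := by omega
        obtain ⟨g, hg⟩ : (Out.erase (x (par u))).Nonempty := card_pos.1 (by omega)
        have hg1 := mem_erase.1 hg
        have hg2 := mem_filter.1 hg1.2
        have hNm : ∀ z ∈ L, z ≠ x (par u) → z ∈ Nb H (Part (st (par u)) o) (x (par u)) ∧ z ≠ x u := by
          intro z hz hzne
          rw [hLeq] at hz
          have := mem_erase.1 ((mem_insert.1 hz).resolve_left hzne)
          exact ⟨this.2, this.1⟩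
        obtain ⟨f, hf⟩ : ((L.erase (x (par u))).erase g).Nonempty := card_pos.1 (by
          rw [card_erase_of_mem (by simp [hg1.1, hg2.1]), card_erase_of_mem hz'.1, hLq]; omega)
        simp only [mem_erase] at hf
        obtain ⟨hfg, hfh, hfL⟩ := hf
        have hf0 := hent f hfL hfh
        have hg0 := hent g hg2.1 hg1.1
        have hfy : st y f = some o := by
          by_contra hfy
          have hfO : f ∈ Out.erase (x (par u)) := mem_erase.2 ⟨hfh, mem_filter.2 ⟨hfL, hfy⟩⟩
          exact hfg (card_le_one.1 h2 f hfO g hg)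
        obtain ⟨g', hgA, rfl⟩ := X.exit hy hg0 hg2.2
        exact X.NT3 hq3 hy (by omega) huT hgA hg0 hf0 hfy hT (hNm _ hg2.1 hg1.1).1 (hNm _ hfL hfh).1 huN
          (hNm _ hg2.1 hg1.1).2 (hNm _ hfL hfh).2 hfg hLB hz'.2
    have hwZ : w ∈ Z H (q o) (Part (st a) o) (x a) := by rw [← hKZ]; exact hwK
    have hone : #(L \ K) ≤ 1 := by
      rw [card_le_one]
      intro e he e' he'
      have e1 := mem_sdiff.1 he
      have e2 := mem_sdiff.1 he'
      exact extra_uniq X.C hopt hself hwZ hKa (hLm _ e1.1).2.1 (hLm _ e2.1).2.1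
        (hLc _ hwL _ e1.1 (by rintro rfl; exact e1.2 hwK)) (hLc _ hwL _ e2.1 (by rintro rfl; exact e2.2 hwK)) e1.2 e2.2
    have hin : L ∩ K ⊆ K.erase v := by
      intro z hz
      have hz' := mem_inter.1 hz
      exact mem_erase.2 ⟨(hLm z hz'.1).1, hz'.2⟩
    have c1 := card_sdiff_add_card_inter L K
    have c2 := card_le_card hin
    have c3 := card_erase_of_mem hv
    rw [hKa.2.2] at c3
    have heq := eq_of_subset_of_card_le hin (by omega)
    obtain ⟨e, he⟩ := card_pos.1 (show 0 < #(L \ K) by omega)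
    have he' := mem_sdiff.1 he
    have hadj : ∀ w ∈ K, w ≠ v → H.Adj w e := by
      intro w hw hwv
      have : w ∈ L ∩ K := by rw [heq]; exact mem_erase.2 ⟨hwv, hw⟩
      exact hLc _ (mem_inter.1 this).1 _ he'.1 (by rintro rfl; exact he'.2 hw)
    refine ⟨e, (hLm e he'.1).2.1, he'.2, hadj, ?_⟩
    intro hve
    have h1 : Clq H (insert e K) := hKa.2.1.insert fun w hw => by
      by_cases hwv : w = v
      · rw [hwv]; exact hve.symm
      · exact (hadj w hw hwv).symm
    have := hopt.free o _ (insert_subset (by simpa using (hLm e he'.1).2.1) (fun w hw => by simpa using (haK w hw).1)) h1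
    rw [card_insert_of_notMem he'.2, hKa.2.2] at this
    omega
  obtain ⟨v1, v2, v3, h1, h2, h3, h12, h13, h23⟩ : ∃ v1 v2 v3, v1 ∈ K ∧ v2 ∈ K ∧ v3 ∈ K ∧ v1 ≠ v2 ∧ v1 ≠ v3 ∧ v2 ≠ v3 := by
    have := two_lt_card.1 (show 2 < #K by rw [hKa.2.2]; omega)
    obtain ⟨a, ha, b, hb, c, hc, h⟩ := this
    exact ⟨a, b, c, ha, hb, hc, h⟩
  obtain ⟨e1, s1, n1, a1, b1⟩ := hext v1 h1
  obtain ⟨e2, s2, n2, a2, b2⟩ := hext v2 h2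
  have := extra_uniq X.C hopt hself (u := v3) (by rw [← hKZ]; exact h3) hKa s1 s2 (a1 v3 h3 h13.symm) (a2 v3 h3 h23.symm) n1 n2
  subst this
  exact b1 (a2 v1 h1 h12)

lemma Ex.OVa (X : Ex H o q c0 n x par st) {u y : ℕ} {K : Finset V} (hu : u < n) (hy : y < n) (hlt : par u < y)
    (huT : c0 (x u) = some o) (hW : c0 (x y) ≠ some o) (huZ : x u ∈ Z H (q o) (Part (st y) o) (x y))
    (hK : Qcl H (q o) (Part (st y) o) (x y) K) :
    Qcl H (q o) (Part (st (par u)) o) (x (par u)) (Z H (q o) (Part (st (par u)) o) (x (par u))) ∧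
    ¬ Tight H q (st u) o (x u) ∧ ∃ e, st (par u) e = some o ∧ e ∉ Z H (q o) (Part (st (par u)) o) (x (par u)) ∧
      H.Adj (x u) e ∧ K = insert e ((Z H (q o) (Part (st (par u)) o) (x (par u))).filter (H.Adj e)) := by
  have q0 := X.C.q0
  obtain ⟨hu0, hWa, huZa⟩ := X.T1 hu huT
  have hpu := X.P.par_lt u hu0 hu
  have han : par u < n := by omega
  have hopt := X.opt han
  have hself := X.self han
  have hy0 : 0 < y := by omega
  have huK := Z_sub hK huZ
  have hK0 := X.Claim1 hy hW hK
  have hKm : ∀ v ∈ K, st y v = some o ∧ H.Adj (x y) v := fun v hv => by simpa using hK.1 hv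
  have hKa : ∀ v ∈ K, st (par u) v = some o := by
    intro v hv
    by_contra hs
    obtain ⟨g, hgA, rfl⟩ := X.exit han (hK0 v hv) hs
    have hT := hK0 _ hv
    have hga := X.anc_le hgA han
    have hgne : g ≠ par u := by rintro h; rw [h] at hT; exact hWa hT
    have hgu : x g ≠ x u := X.xne (by omega) hu (by omega)
    obtain ⟨hg0, hWg, hgZ⟩ := X.T1 (show g < n by omega) hT
    have hpg := X.P.par_lt g hg0 (by omega)
    have hloose : ¬ Tight H q (st g) o (x g) := by
      intro ht
      have := X.F1q (by omega) hT ht (v := x u) (by rw [X.later (by omega) hu, huT]) (hK.2.1 _ hv _ huK hgu)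
        (X.xne hu (by omega) (by omega))
      have := X.kickZ (by omega) hu hWg huT this
      omega
    have h1 : par y ≤ g := by
      by_contra hlt
      push Not at hlt
      exact hloose (X.F1n hy hy0 hlt (hKm _ hv).2.symm hW)
    obtain ⟨ha0, hA⟩ := hgA.of_ne hgne
    have hpa := X.P.par_lt _ ha0 han
    have h2 := X.anc_le hA (by omega)
    have h3 := X.P.mono (par u) y ha0 hlt.le hy
    have : g = par y := by omega
    exact X.exit_not (y := y) (by rw [this]; exact anc_par hy0) hy hT (hKm _ hv).1
  have hnq : ¬ ∀ v ∈ K, H.Adj (x (par u)) v := by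
    intro hall
    exact X.NoTwin hy hlt hWa hW ⟨fun v hv => by simp [hKa v hv, hall v hv], hK.2⟩ hK
  push Not at hnq
  obtain ⟨e, heK, hea⟩ := hnq
  have hue : H.Adj (x u) e := hK.2.1 _ huK _ heK (by rintro rfl; exact hea (mem_Z.1 huZa).1.2)
  have hse := hKa e heK
  have hane : e ≠ x (par u) := by rintro rfl; rw [hself] at hse; simp at hse
  have hmem : e ∈ Nb H (Part (st u) o) (x u) := by
    rw [X.P.st_eq u hu0 hu, mem_L hself (Z_mem_col huZa)]
    exact ⟨Or.inr ⟨hue.ne', hse⟩, hue⟩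
  have hZe : e ∉ Z H (q o) (Part (st (par u)) o) (x (par u)) := fun h => hea (mem_Z.1 h).1.2
  have hQ : Qcl H (q o) (Part (st (par u)) o) (x (par u)) (Z H (q o) (Part (st (par u)) o) (x (par u))) := by
    rcases DichO X.C hopt hself with hZ | hE
    · exact hZ
    · exfalso
      rw [X.P.st_eq u hu0 hu] at hmem
      rcases (E2_list X.C hopt hself hE huZa).2 e hmem with h | h
      · exact hane h
      · exact hea (mem_Nb.1 h).2
  refine ⟨hQ, ?_, e, hse, hZe, hue, ?_⟩
  · intro ht
    exact hZe (X.F1q hu huT ht (by simpa using (mem_Nb.1 hmem).1) hue hane)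
  · set ZZ := Z H (q o) (Part (st (par u)) o) (x (par u)) with hZZ
    have hsub : K ⊆ insert e (ZZ.filter (H.Adj e)) := by
      intro v hv
      by_cases hve : v = e
      · rw [hve]; exact mem_insert_self _ _
      refine mem_insert_of_mem (mem_filter.2 ⟨?_, hK.2.1 _ heK _ hv (Ne.symm hve)⟩)
      by_contra hvZ
      have hvu : v ≠ x u := by rintro rfl; exact hvZ huZa
      exact hve (extra_uniq X.C hopt hself huZa hQ (hKa v hv) hse (hK.2.1 _ huK _ hv hvu.symm) hue hvZ hZe)
    refine eq_of_subset_of_card_le hsub ?_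
    rw [card_insert_of_notMem (by simp [hZe]), hK.2.2]
    have : ZZ.filter (H.Adj e) ≠ ZZ := by
      intro hall
      have hall' := filter_eq_self.1 hall
      have hcl : Clq H (insert e ZZ) := hQ.2.1.insert hall'
      have := hopt.free o _ (insert_subset (by simpa using hse) (fun w hw => (mem_Nb.1 (Z_sub_Nb hw)).1)) hcl
      rw [card_insert_of_notMem hZe, hQ.2.2] at this
      omega
    have := card_lt_card ((filter_subset (H.Adj e) ZZ).ssubset_of_ne this)
    rw [hQ.2.2] at this
    omega

lemma Ex.OV (X : Ex H o q c0 n x par st) {u y y' : ℕ} {K K' : Finset V} (hu : u < n) (hy : y < n) (hy' : y' < n)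
    (hlt : par u < y) (hlt' : par u < y')
    (huT : c0 (x u) = some o) (hW : c0 (x y) ≠ some o) (hW' : c0 (x y') ≠ some o)
    (huZ : x u ∈ Z H (q o) (Part (st y) o) (x y)) (huZ' : x u ∈ Z H (q o) (Part (st y') o) (x y'))
    (hK : Qcl H (q o) (Part (st y) o) (x y) K) (hK' : Qcl H (q o) (Part (st y') o) (x y') K') : K = K' := by
  obtain ⟨hQ, -, e, h1, h2, h3, h4⟩ := X.OVa hu hy hlt huT hW huZ hK
  obtain ⟨-, -, e', h1', h2', h3', h4'⟩ := X.OVa hu hy' hlt' huT hW' huZ' hK'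
  obtain ⟨hu0, hWa, huZa⟩ := X.T1 hu huT
  have hpu := X.P.par_lt u hu0 hu
  have := extra_uniq X.C (X.opt (by omega)) (X.self (by omega)) huZa hQ h1 h1' h3 h3' h2 h2'
  rw [h4, h4', this]

lemma Ex.OV_uniq (X : Ex H o q c0 n x par st) {u y y' : ℕ} (hu : u < n) (hy : y < n) (hy' : y' < n)
    (hlt : par u < y) (hlt' : par u < y')
    (huT : c0 (x u) = some o) (hW : c0 (x y) ≠ some o) (hW' : c0 (x y') ≠ some o)
    (huZ : x u ∈ Z H (q o) (Part (st y) o) (x y)) (huZ' : x u ∈ Z H (q o) (Part (st y') o) (x y')) : y = y' := by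
  obtain ⟨K, hK⟩ := S2c (X.opt hy) (X.self hy) o
  obtain ⟨K', hK'⟩ := S2c (X.opt hy') (X.self hy') o
  have he := X.OV hu hy hy' hlt hlt' huT hW hW' huZ huZ' hK hK'
  subst he
  rcases lt_trichotomy y y' with h | h | h
  · exact (X.NoTwin hy' h hW hW' hK hK').elim
  · exact h
  · exact (X.NoTwin hy h hW' hW hK' hK).elim

lemma Ex.OV_notE2 (X : Ex H o q c0 n x par st) {u y : ℕ} (hu : u < n) (hy : y < n) (hlt : par u < y)
    (huT : c0 (x u) = some o) (hW : c0 (x y) ≠ some o) (huZ : x u ∈ Z H (q o) (Part (st y) o) (x y)) :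
    ¬ E2 H (q o) (Part (st y) o) (x y) := by
  rintro ⟨s, t, hst, -, hs, ht, -, -, h1, h2, -⟩
  have := X.OV hu hy hy hlt hlt huT hW hW huZ huZ h1 h2
  have hs' : s ∈ insert t (Z H (q o) (Part (st y) o) (x y)) := this ▸ mem_insert_self _ _
  rcases mem_insert.1 hs' with h | h
  · exact hst h
  · exact hs h

end
end St4

namespace St4
set_option linter.all false
open Finset
open scoped Classical
noncomputable section
variable {V : Type*} [Fintype V] {H : SimpleGraph V} {k : ℕ} {o : Fin k} {q : Fin k → ℕ}
variable {c0 : V → Option (Fin k)} {n : ℕ} {x : ℕ → V} {par : ℕ → ℕ} {st : ℕ → V → Option (Fin k)}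

lemma dcount (R S : Finset ℕ) (At ZP : ℕ → ℕ → Prop) (h : ℕ → ℕ)
    (hper : ∀ u ∈ R, ∑ y ∈ S.filter (fun y => ZP y u), h y + #(R.filter (fun w => At w u)) +
      #(S.filter (fun y => At u y ∧ ZP y u)) ≤ #(R.filter (fun b => At u b)) + #(S.filter (fun y => At u y)))
    (hF : ∀ y ∈ S, #(R.filter (fun u => At u y ∧ ¬ ZP y u)) < h y * #(R.filter (fun u => ZP y u)))
    (hS : S.Nonempty) : False := by
  have h1 := Finset.sum_le_sum hper
  have h2 := Finset.sum_lt_sum_of_nonempty hS hF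
  simp only [Finset.sum_add_distrib] at h1
  have e1 : ∑ u ∈ R, ∑ y ∈ S.filter (fun y => ZP y u), h y = ∑ y ∈ S, h y * #(R.filter (fun u => ZP y u)) := by
    simp only [Finset.sum_filter]
    rw [Finset.sum_comm]
    refine Finset.sum_congr rfl fun y _ => ?_
    rw [← Finset.sum_filter, Finset.sum_const, smul_eq_mul, mul_comm]
  have e2 : ∑ u ∈ R, #(R.filter (fun w => At w u)) = ∑ u ∈ R, #(R.filter (fun w => At u w)) := by
    simp only [Finset.card_filter]
    rw [Finset.sum_comm]
  have e3 : ∑ u ∈ R, #(S.filter (fun y => At u y)) = ∑ u ∈ R, #(S.filter (fun y => At u y ∧ ZP y u)) +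
      ∑ y ∈ S, #(R.filter (fun u => At u y ∧ ¬ ZP y u)) := by
    have : ∑ y ∈ S, #(R.filter (fun u => At u y ∧ ¬ ZP y u)) = ∑ u ∈ R, #(S.filter (fun y => At u y ∧ ¬ ZP y u)) := by
      simp only [Finset.card_filter]
      rw [Finset.sum_comm]
    rw [this, ← Finset.sum_add_distrib]
    refine Finset.sum_congr rfl fun u _ => ?_
    rw [← Finset.card_filter_add_card_filter_not (s := S.filter (fun y => At u y)) (fun y => ZP y u),
      Finset.filter_filter, Finset.filter_filter]
  omega

def AtP (H : SimpleGraph V) (o : Fin k) (q : Fin k → ℕ) (x : ℕ → V) (st : ℕ → V → Option (Fin k)) (u b : ℕ) : Prop :=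
  ∃ j, j ≠ o ∧ st u (x b) = some j ∧ H.Adj (x u) (x b) ∧ Tight H q (st u) j (x u)

lemma Ex.At_sub (X : Ex H o q c0 n x par st) {u : ℕ} (hu : u < n) {j : Fin k} (hj : j ≠ o)
    (ht : Tight H q (st u) j (x u)) :
    Nb H (Part (st u) j) (x u) ⊆ ((range n).filter (AtP H o q x st u)).image x := by
  intro v hv
  simp only [mem_Nb, mem_Part] at hv
  obtain ⟨b, hb, rfl, -⟩ := X.P.closed u hu v (Or.inr ⟨j, hj, hv.1, hv.2, ht⟩)
  exact mem_image_of_mem _ (by simp only [mem_filter, mem_range]; exact ⟨hb, j, hj, hv.1, hv.2, ht⟩)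

lemma Ex.At1 (X : Ex H o q c0 n x par st) {u : ℕ} (hu : u < n) :
    1 ≤ #((range n).filter (AtP H o q x st u)) := by
  obtain ⟨j, hj, -⟩ := X.C.two o
  obtain ⟨j', hj', hjj⟩ := X.C.two j
  have key : ∃ i, i ≠ o ∧ Tight H q (st u) i (x u) := by
    by_cases h : Tight H q (st u) j (x u)
    · exact ⟨j, hj, h⟩
    · exact ⟨j', hj', S2t X.C (X.opt hu) (X.self hu) hjj.symm h⟩
  obtain ⟨i, hi, ht⟩ := key
  have h1 := (card_le_card (X.At_sub hu hi ht)).trans card_image_le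
  unfold Tight at ht
  have := X.C.qpos i
  omega

lemma Ex.At4 (X : Ex H o q c0 n x par st) {u : ℕ} (hu : u < n) (hT : ¬ Tight H q (st u) o (x u)) :
    4 ≤ #((range n).filter (AtP H o q x st u)) := by
  have ht : ∀ j ∈ univ.erase o, Tight H q (st u) j (x u) := fun j hj =>
    S2t X.C (X.opt hu) (X.self hu) (ne_of_mem_erase hj).symm hT
  have h1 : (univ.erase o).biUnion (fun j => Nb H (Part (st u) j) (x u)) ⊆
      ((range n).filter (AtP H o q x st u)).image x :=
    biUnion_subset.2 fun j hj => X.At_sub hu (ne_of_mem_erase hj) (ht j hj)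
  have h2 := (card_le_card h1).trans card_image_le
  rw [card_biUnion] at h2
  · rw [Finset.sum_congr rfl (fun j hj => ht j hj)] at h2
    exact X.C.four.trans h2
  · intro i _ j _ hij
    rw [Function.onFun, Finset.disjoint_left]
    intro v hv hv'
    simp only [mem_Nb, mem_Part] at hv hv'
    rw [hv.1] at hv'
    exact hij (by simpa using hv'.1)

lemma Ex.sp (X : Ex H o q c0 n x par st) {b : ℕ} (hb : b < n) (hT : c0 (x b) = some o) :
    #(((range n).filter (fun u => c0 (x u) = some o)).filter (fun u => AtP H o q x st u b)) +
      #(Z H (q o) (Part (st (par b)) o) (x (par b))) ≤ #(Nb H (Part (st b) o) (x b)) := by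
  obtain ⟨h0, hW, hZ⟩ := X.T1 hb hT
  have hp := X.P.par_lt b h0 hb
  have hpn : par b < n := by omega
  have ha := X.self hpn
  obtain ⟨K, hK⟩ := S2c (X.opt hpn) ha o
  have hls := list_sub ha hZ hK
  rw [← X.P.st_eq b h0 hb] at hls
  set Zp := Z H (q o) (Part (st (par b)) o) (x (par b)) with hZp
  have hsub : insert (x (par b)) (Zp.erase (x b)) ⊆ Nb H (Part (st b) o) (x b) :=
    (insert_subset_insert _ (erase_subset_erase _ (Z_sub hK))).trans hls
  have hnot : x (par b) ∉ Zp := by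
    intro h
    have := (mem_Nb.1 (Z_sub_Nb h)).2
    exact H.loopless.irrefl _ this
  have hc : #(insert (x (par b)) (Zp.erase (x b))) = #Zp := by
    rw [card_insert_of_notMem (fun h => hnot (mem_of_mem_erase h)), card_erase_of_mem hZ]
    have := card_pos.2 ⟨_, hZ⟩
    omega
  set B := ((range n).filter (fun u => c0 (x u) = some o)).filter (fun u => AtP H o q x st u b)
  have hi : #(B.image x) = #B := by
    apply card_image_of_injOn
    intro i hi j hj hij
    simp only [B, coe_filter, mem_filter, mem_range, Set.mem_setOf_eq] at hi hj
    exact X.P.inj _ _ hi.1.1 hj.1.1 hij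
  rw [← hi, ← hc, ← card_union_of_disjoint]
  · refine card_le_card (union_subset ?_ hsub)
    intro v hv
    obtain ⟨u, hu, rfl⟩ := mem_image.1 hv
    simp only [B, mem_filter, mem_range] at hu
    obtain ⟨⟨hu, huT⟩, j, hj, hs, hadj, ht⟩ := hu
    obtain ⟨g, hg, hgx⟩ := X.exit hu hT (by rw [hs]; simpa using hj)
    have hgu := X.anc_le hg hu
    have hgb := X.P.inj _ _ (by omega) hb hgx
    subst hgb
    have hlt : g < u := by
      rcases eq_or_lt_of_le hgu with h | h
      · subst h; exact absurd hadj (H.loopless.irrefl _)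
      · exact h
    simp only [mem_Nb, mem_Part]
    exact ⟨by rw [X.later hlt hu, huT], hadj.symm⟩
  · rw [Finset.disjoint_left]
    intro v hv hv2
    obtain ⟨u, hu, rfl⟩ := mem_image.1 hv
    simp only [B, mem_filter, mem_range] at hu
    obtain ⟨⟨hu, huT⟩, j, hj, hs, hadj, ht⟩ := hu
    obtain ⟨g, hg, hgx⟩ := X.exit hu hT (by rw [hs]; simpa using hj)
    have hgu := X.anc_le hg hu
    have hgb := X.P.inj _ _ (by omega) hb hgx
    subst hgb
    have hlt : g ≠ u := by
      rintro rfl; exact absurd hadj (H.loopless.irrefl _)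
    obtain ⟨hu0, hgp⟩ := hg.of_ne hlt
    have h3 := X.anc_le hgp (X.par_n hu0 hu)
    rcases mem_insert.1 hv2 with h | h
    · have := X.P.inj _ _ hu hpn h
      omega
    · have := X.kickZ hpn hu hW huT (mem_of_mem_erase h)
      omega

lemma Ex.F (X : Ex H o q c0 n x par st) {y : ℕ} (hy : y < n) (hW : c0 (x y) ≠ some o) :
    #(((range n).filter (fun u => c0 (x u) = some o)).filter (fun u => AtP H o q x st u y ∧
      ¬ x u ∈ Z H (q o) (Part (st y) o) (x y))) + #(Z H (q o) (Part (st y) o) (x y))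
      ≤ #(Nb H (Part (st y) o) (x y)) + 1 := by
  set B := ((range n).filter (fun u => c0 (x u) = some o)).filter (fun u => AtP H o q x st u y ∧
      ¬ x u ∈ Z H (q o) (Part (st y) o) (x y))
  have hi : #(B.image x) = #B := by
    apply card_image_of_injOn
    intro i hi j hj hij
    simp only [B, coe_filter, mem_filter, mem_range, Set.mem_setOf_eq] at hi hj
    exact X.P.inj _ _ hi.1.1 hj.1.1 hij
  have hsub : B.image x ∪ Z H (q o) (Part (st y) o) (x y) ⊆ insert (x (par y)) (Nb H (Part (st y) o) (x y)) := by
    refine union_subset ?_ (Z_sub_Nb.trans (subset_insert _ _))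
    intro v hv
    obtain ⟨u, hu, rfl⟩ := mem_image.1 hv
    simp only [B, mem_filter, mem_range] at hu
    obtain ⟨⟨hu, huT⟩, ⟨j, hj, hs, hadj, ht⟩, hZ⟩ := hu
    by_cases hst : st y (x u) = some o
    · exact mem_insert_of_mem (by simp only [mem_Nb, mem_Part]; exact ⟨hst, hadj.symm⟩)
    obtain ⟨g, hg, hgx⟩ := X.exit hy huT hst
    have hgy := X.anc_le hg hy
    have hgb := X.P.inj _ _ (by omega) hu hgx
    subst hgb
    have hne : g ≠ y := by rintro rfl; exact hW huT
    obtain ⟨hy0, hgp⟩ := hg.of_ne hne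
    have h3 := X.anc_le hgp (X.par_n hy0 hy)
    obtain ⟨l, hl, hlx, hl2⟩ := X.P.closed g hu (x y) (Or.inr ⟨j, hj, hs, hadj, ht⟩)
    have := X.P.inj _ _ hl hy hlx
    subst this
    have : g = par l := by omega
    rw [this]; exact mem_insert_self _ _
  rw [← hi, ← card_union_of_disjoint]
  · exact (card_le_card hsub).trans (card_insert_le _ _)
  · rw [Finset.disjoint_left]
    intro v hv
    obtain ⟨u, hu, rfl⟩ := mem_image.1 hv
    simp only [B, mem_filter, mem_range] at hu
    exact hu.2.2

lemma Ex.Zc (X : Ex H o q c0 n x par st) {y : ℕ} (hy : y < n) (hW : c0 (x y) ≠ some o) :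
    #(Z H (q o) (Part (st y) o) (x y)) ≤ #(((range n).filter (fun u => c0 (x u) = some o)).filter (fun u =>
      x u ∈ Z H (q o) (Part (st y) o) (x y))) := by
  refine (card_le_card ?_).trans (card_image_le (f := x))
  intro v hv
  obtain ⟨l, hl, rfl, -⟩ := X.P.closed y hy v (Or.inl ⟨hW, hv⟩)
  refine mem_image_of_mem _ ?_
  simp only [mem_filter, mem_range]
  refine ⟨⟨hl, ?_⟩, hv⟩
  obtain ⟨K, hK⟩ := S2c (X.opt hy) (X.self hy) o
  exact X.Claim1 hy hW hK _ (Z_sub hK hv)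

lemma E2_card {r : ℕ} {A : Finset V} {v : V} (h : E2 H r A v) : #(Z H r A v) + 1 = r ∧ #(Nb H A v) = r + 1 := by
  obtain ⟨s, t, hst, -, hs, ht, hN, hc, -⟩ := h
  refine ⟨hc, ?_⟩
  rw [hN, card_insert_of_notMem, card_insert_of_notMem ht]
  · omega
  · simp [hst, hs]

lemma Ex.per (X : Ex H o q c0 n x par st) {u : ℕ} (hu : u < n) (hT : c0 (x u) = some o) :
    ∑ y ∈ ((range n).filter (fun y => c0 (x y) ≠ some o)).filter (fun y => x u ∈ Z H (q o) (Part (st y) o) (x y)),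
      (if E2 H (q o) (Part (st y) o) (x y) then 2 else 1) +
      #(((range n).filter (fun u => c0 (x u) = some o)).filter (fun w => AtP H o q x st w u)) +
      #(((range n).filter (fun y => c0 (x y) ≠ some o)).filter (fun y => AtP H o q x st u y ∧
        x u ∈ Z H (q o) (Part (st y) o) (x y))) ≤ #((range n).filter (AtP H o q x st u)) := by
  obtain ⟨h0, hW, hZ⟩ := X.T1 hu hT
  have hp := X.P.par_lt u h0 hu
  have hpn : par u < n := by omega
  have hsp := X.sp hu hT
  have hle := S2le X.C (X.opt hu) (X.self hu) o
  set Y := ((range n).filter (fun y => c0 (x y) ≠ some o)).filter (fun y => x u ∈ Z H (q o) (Part (st y) o) (x y)) with hY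
  have hpY : par u ∈ Y := by simp only [hY, mem_filter, mem_range]; exact ⟨⟨hpn, hW⟩, hZ⟩
  have hYm : ∀ y ∈ Y, y < n ∧ c0 (x y) ≠ some o ∧ x u ∈ Z H (q o) (Part (st y) o) (x y) ∧ par u ≤ y := by
    intro y hy
    simp only [hY, mem_filter, mem_range] at hy
    exact ⟨hy.1.1, hy.1.2, hy.2, X.kickZ hy.1.1 hu hy.1.2 hT hy.2⟩
  have hAY : #(((range n).filter (fun y => c0 (x y) ≠ some o)).filter (fun y => AtP H o q x st u y ∧
        x u ∈ Z H (q o) (Part (st y) o) (x y))) ≤ #(Y.erase (par u)) := by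
    apply card_le_card
    intro y hy
    simp only [mem_filter, mem_range] at hy
    refine mem_erase.2 ⟨?_, by simp only [hY, mem_filter, mem_range]; exact ⟨hy.1, hy.2.2⟩⟩
    rintro rfl
    obtain ⟨j, hj, hs, -⟩ := hy.2.1
    rw [X.st_next (Anc.refl u) hu h0, hT] at hs
    exact hj (by simpa using hs.symm)
  have hE1 : ∀ y ∈ Y.erase (par u), par u < y ∧ ¬ E2 H (q o) (Part (st y) o) (x y) := by
    intro y hy
    obtain ⟨h1, h2, h3, h4⟩ := hYm y (mem_of_mem_erase hy)
    have := ne_of_mem_erase hy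
    exact ⟨by omega, X.OV_notE2 hu h1 (by omega) hT h2 h3⟩
  have hE2 : #(Y.erase (par u)) ≤ 1 := by
    refine card_le_one.2 fun y hy y' hy' => ?_
    obtain ⟨h1, h2, h3, h4⟩ := hYm y (mem_of_mem_erase hy)
    obtain ⟨h1', h2', h3', h4'⟩ := hYm y' (mem_of_mem_erase hy')
    exact X.OV_uniq hu h1 h1' (hE1 y hy).1 (hE1 y' hy').1 hT h2 h2' h3 h3'
  have hE3 : (Y.erase (par u)).Nonempty → Qcl H (q o) (Part (st (par u)) o) (x (par u)) (Z H (q o) (Part (st (par u)) o) (x (par u))) ∧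
    ¬ Tight H q (st u) o (x u) := by
    rintro ⟨y, hy⟩
    obtain ⟨h1, h2, h3, h4⟩ := hYm y (mem_of_mem_erase hy)
    obtain ⟨K, hK⟩ := S2c (X.opt h1) (X.self h1) o
    obtain ⟨a1, a2, -⟩ := X.OVa hu h1 (hE1 y hy).1 hT h2 h3 hK
    exact ⟨a1, a2⟩
  have hsum : ∑ y ∈ Y, (if E2 H (q o) (Part (st y) o) (x y) then 2 else 1) =
      (if E2 H (q o) (Part (st (par u)) o) (x (par u)) then 2 else 1) + #(Y.erase (par u)) := by
    rw [← Finset.add_sum_erase _ _ hpY, Finset.sum_congr rfl (fun y hy => if_neg (hE1 y hy).2)]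
    simp
  rw [hsum]
  by_cases hE : E2 H (q o) (Part (st (par u)) o) (x (par u))
  · have hem : Y.erase (par u) = ∅ := by
      rw [← not_nonempty_iff_eq_empty]
      exact fun h => E2_not_Qcl hE (hE3 h).1
    have hl := (E2_list X.C (X.opt hpn) (X.self hpn) hE hZ).1
    rw [← X.P.st_eq u h0 hu] at hl
    have h4 := X.At4 hu (by unfold Tight; omega)
    have := E2_card hE
    rw [hem] at hAY ⊢
    rw [if_pos hE]
    simp only [card_empty] at hAY ⊢
    omega
  · have hq := (DichO X.C (X.opt hpn) (X.self hpn)).resolve_right hE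
    have hq3 := hq.2.2
    rw [if_neg hE]
    by_cases ht : Tight H q (st u) o (x u)
    · have hem : Y.erase (par u) = ∅ := by
        rw [← not_nonempty_iff_eq_empty]
        exact fun h => (hE3 h).2 ht
      have h1 := X.At1 hu
      unfold Tight at ht
      rw [hem] at hAY ⊢
      simp only [card_empty] at hAY ⊢
      omega
    · have h4 := X.At4 hu ht
      omega

lemma Ex.false (X : Ex H o q c0 n x par st) : False := by
  refine dcount ((range n).filter (fun u => c0 (x u) = some o)) ((range n).filter (fun y => c0 (x y) ≠ some o))
    (AtP H o q x st) (fun y u => x u ∈ Z H (q o) (Part (st y) o) (x y))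
    (fun y => if E2 H (q o) (Part (st y) o) (x y) then 2 else 1) ?_ ?_ ⟨0, ?_⟩
  · intro u hu
    simp only [mem_filter, mem_range] at hu
    have h1 := X.per hu.1 hu.2
    have e := Finset.card_filter_add_card_filter_not (s := (range n).filter (AtP H o q x st u)) (fun b => c0 (x b) = some o)
    rw [Finset.filter_comm, Finset.filter_comm (q := fun b => ¬ c0 (x b) = some o)] at e
    rw [← e] at h1
    convert h1
  · intro y hy
    simp only [mem_filter, mem_range] at hy
    have h1 := X.F hy.1 hy.2
    have h2 := X.Zc hy.1 hy.2
    have h3 := S2le X.C (X.opt hy.1) (X.self hy.1) o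
    have h4 := X.C.q0
    suffices h : #(((range n).filter (fun u => c0 (x u) = some o)).filter (fun u => AtP H o q x st u y ∧
      ¬ x u ∈ Z H (q o) (Part (st y) o) (x y))) < (if E2 H (q o) (Part (st y) o) (x y) then 2 else 1) *
        #(((range n).filter (fun u => c0 (x u) = some o)).filter (fun u =>
      x u ∈ Z H (q o) (Part (st y) o) (x y))) by convert h
    by_cases hE : E2 H (q o) (Part (st y) o) (x y)
    · have := E2_card hE
      simp only [if_pos hE]
      omega
    · have hq := ((DichO X.C (X.opt hy.1) (X.self hy.1)).resolve_right hE).2.2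
      simp only [if_neg hE]
      omega
  · simp only [mem_filter, mem_range]
    exact ⟨X.P.npos, by rw [X.P.x0]; simp⟩

lemma exists_Opt (C : Ctx H o q) : ∃ c, Opt H o q c := by
  obtain ⟨A, hA, hAm⟩ := exists_max_image (univ.filter (fun A : Finset V => Fr H (q o) A)) card
    ⟨∅, by simp only [mem_filter, mem_univ, true_and]; intro K hK _; rw [subset_empty.1 hK]; simp⟩
  simp only [mem_filter, mem_univ, true_and] at hA hAm
  let S : Finset (V → Option (Fin k)) := univ.filter (fun c => (∀ j, Fr H (q j) (Part c j)) ∧ #(Part c o) = #A)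
  obtain ⟨c1, h1, h1m⟩ := exists_max_image S cov ⟨fun v => if v ∈ A then some o else none, by
    have ho : Part (fun v => if v ∈ A then some o else none) o = A := by
      ext v; by_cases hv : v ∈ A <;> simp [hv]
    simp only [S, mem_filter, mem_univ, true_and]
    refine ⟨fun j => ?_, by rw [ho]⟩
    by_cases hj : j = o
    · subst hj; rw [ho]; exact hA
    · intro K hK _
      have : Part (fun v => if v ∈ A then some o else none) j = ∅ := by
        ext v; by_cases hv : v ∈ A <;> simp [hv, Ne.symm hj]
      rw [this] at hK
      rw [subset_empty.1 hK]; simp⟩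
  obtain ⟨c, h2, h2m⟩ := exists_min_image (S.filter (fun c => cov c = cov c1)) (En H o) ⟨c1, by simp only [mem_filter]; exact ⟨h1, trivial⟩⟩
  simp only [S, mem_filter, mem_univ, true_and] at h1 h1m h2 h2m
  refine ⟨c, h2.1.1, fun B hB => ?_, fun c' hf he => ?_, fun c' hf he hc => ?_⟩
  · rw [h2.1.2]; exact hAm B hB
  · rw [h2.2]; exact h1m c' ⟨hf, he.trans h2.1.2⟩
  · exact h2m c' ⟨⟨hf, he.trans h2.1.2⟩, hc.trans h2.2⟩

lemma main (C : Ctx H o q) : ∃ c : V → Option (Fin k), Opt H o q c ∧ ∀ v, c v ≠ none := by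
  obtain ⟨c, hc⟩ := exists_Opt C
  refine ⟨c, hc, fun w hw => ?_⟩
  obtain ⟨n, x, par, st, P, -⟩ := exists_PEx (H := H) (o := o) (q := q) c w hw
  exact Ex.false ⟨C, hc, P⟩

lemma Clq_iff {K : Finset V} : Clq H K ↔ H.IsClique (K : Set V) := by
  constructor
  · intro h a ha b hb hab; exact h a ha b hb hab
  · intro h a ha b hb hab; exact h ha hb hab

lemma Fr_iff {r : ℕ} {A : Finset V} {S : Set V} (hS : ∀ v, v ∈ A ↔ v ∈ S) : Fr H r A ↔ H.CliqueFreeOn S (r + 1) := by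
  constructor
  · intro h t hts ht
    have := h t (fun v hv => (hS v).2 (hts hv)) (Clq_iff.2 ht.isClique)
    have := ht.card_eq
    omega
  · intro h K hK hc
    by_contra hlt
    obtain ⟨t, htK, ht⟩ := exists_subset_card_eq (show r + 1 ≤ #K by omega)
    exact h (fun v hv => (hS v).1 (hK (htK hv))) ⟨Clq_iff.1 (hc.mono htK), ht⟩

end
end St4

/-- Let `H` be a finite simple graph with `Δ(H) ≥ 9`, let `k ≥ 3` and
`p 0 ≥ p 1 ≥ … ≥ p (k-1) ≥ 2` with `p 0 ≥ p 1 ≥ 4` and `∑ i, p i = Δ(H) − 1 + k`.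
If `ω(H) = p 0`, then `V(H)` can be partitioned into sets `P 0, …, P (k-1)` such
that each `H[P i]` is `K_{p i}`-free and `P 0` is a `K_{p 0}`-free subset of
maximum cardinality. -/
theorem statement4 {V : Type*} [Fintype V] (H : SimpleGraph V) [DecidableRel H.Adj]
    (hΔ : 9 ≤ H.maxDegree)
    (k : ℕ) (hk : 3 ≤ k) (p : Fin k → ℕ)
    (hmono : ∀ i j : Fin k, i ≤ j → p j ≤ p i)
    (hp2 : ∀ i, 2 ≤ p i)
    (hp4 : 4 ≤ p ⟨1, by omega⟩)
    (hsum : ∑ i, p i = H.maxDegree - 1 + k)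
    (hω : H.cliqueNum = p ⟨0, by omega⟩) :
    ∃ P : Fin k → Set V,
      (∀ x : V, ∃! i, x ∈ P i) ∧
      (∀ i, H.CliqueFreeOn (P i) (p i)) ∧
      (∀ W : Set V, H.CliqueFreeOn W (p ⟨0, by omega⟩) → W.ncard ≤ (P ⟨0, by omega⟩).ncard) := by
  classical
  have h01 := hmono ⟨0, by omega⟩ ⟨1, by omega⟩ (by simp)
  have hpq : ∀ j, p j = (p j - 1) + 1 := fun j => by have := hp2 j; omega
  have hsq : ∑ j, (p j - 1) + 1 = H.maxDegree := by
    have : ∑ j, p j = ∑ j, (p j - 1) + k := by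
      rw [Finset.sum_congr rfl (fun j _ => hpq j), Finset.sum_add_distrib]
      simp
    omega
  have C : St4.Ctx H (⟨0, by omega⟩ : Fin k) (fun j => p j - 1) := by
    refine ⟨by show 3 ≤ p _ - 1; omega, fun j => by have := hp2 j; show 1 ≤ p j - 1; omega, fun v => ?_, ?_, fun j => ?_, fun K hK => ?_⟩
    · rw [hsq]
      refine le_trans (le_of_eq ?_) (H.degree_le_maxDegree v)
      rw [← SimpleGraph.card_neighborFinset_eq_degree]
      congr 1
      ext z; simp
    · have hs : ({⟨1, by omega⟩, ⟨2, by omega⟩} : Finset (Fin k)) ⊆ Finset.univ.erase ⟨0, by omega⟩ := by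
        intro z hz
        simp only [Finset.mem_insert, Finset.mem_singleton] at hz
        rcases hz with rfl | rfl <;> simp
      refine le_trans ?_ (Finset.sum_le_sum_of_subset hs)
      rw [Finset.sum_pair (by simp)]
      have := hp2 ⟨2, by omega⟩
      omega
    · by_cases hj : j = ⟨1, by omega⟩
      · refine ⟨⟨2, by omega⟩, by simp, by rw [hj]; simp⟩
      · exact ⟨⟨1, by omega⟩, by simp, Ne.symm hj⟩
    · rw [← hpq, ← hω]
      exact (St4.Clq_iff.1 hK).card_le_cliqueNum
  obtain ⟨c, hc, hn⟩ := St4.main C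
  have hmem : ∀ i v, v ∈ St4.Part c i ↔ v ∈ {v | c v = some i} := fun i v => by simp
  refine ⟨fun i => {v | c v = some i}, fun v => ?_, fun i => ?_, fun W hW => ?_⟩
  · obtain ⟨i, hi⟩ := Option.ne_none_iff_exists'.1 (hn v)
    refine ⟨i, hi, fun j hj => ?_⟩
    simp only [Set.mem_setOf_eq] at hj
    rw [hi] at hj
    simpa using hj.symm
  · rw [hpq]
    exact (St4.Fr_iff (hmem i)).1 (hc.free i)
  · rw [hpq] at hW
    have h1 := hc.mx W.toFinset ((St4.Fr_iff (fun v => by simp)).2 hW)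
    have e : {v | c v = some (⟨0, by omega⟩ : Fin k)} = (St4.Part c ⟨0, by omega⟩ : Set V) := by
      ext v; simp
    beta_reduce
    rw [e, Set.ncard_coe_finset, Set.ncard_eq_toFinset_card']
    exact h1
end

section
/- Let H be a finite simple graph and let p, q ≥ 3 be integers with p + q = Δ(H) + 1. Let S ∈ F be chosen so that, among all members of F, the number of q-cliques of H[V(H) ∖ S] is minimum. Then every vertex v of V(H) ∖ S either lies in at most two q-cliques of H[V(H) ∖ S], or lies in a (q+1)-clique of H[V(H) ∖ S] whose vertex set is a connected component of H[V(H) ∖ S]. -/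
/-- The number of `r`-cliques of `H` contained in the vertex set `W`
(i.e. the number of `r`-cliques of the induced subgraph `H[W]`). -/
noncomputable def cliqueCountOn {V : Type*} (H : SimpleGraph V) (W : Set V) (r : ℕ) : ℕ :=
  {t : Finset V | ↑t ⊆ W ∧ H.IsNClique r t}.ncard

/-- `S ∈ 𝓕`: `S` is a `K_p`-free subset of `V(H)` of maximum cardinality and, subject
to this, the number of `(p−1)`-cliques of `H[S]` is minimum. -/
def memF {V : Type*} (H : SimpleGraph V) (p : ℕ) (S : Set V) : Prop :=
  H.CliqueFreeOn S p ∧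
  (∀ W : Set V, H.CliqueFreeOn W p → W.ncard ≤ S.ncard) ∧
  (∀ W : Set V, H.CliqueFreeOn W p →
    (∀ U : Set V, H.CliqueFreeOn U p → U.ncard ≤ W.ncard) →
    cliqueCountOn H S (p - 1) ≤ cliqueCountOn H W (p - 1))

/-- Let `p, q ≥ 3` with `p + q = Δ(H) + 1` and let `S ∈ 𝓕` minimize the number of
`q`-cliques of `H[V ∖ S]` among all members of `𝓕`. Then every vertex `v ∉ S` lies
in at most two `q`-cliques of `H[V ∖ S]`, or lies in a `(q+1)`-clique of `H[V ∖ S]`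
whose vertex set is a connected component of `H[V ∖ S]`. -/
theorem statement6 {V : Type*} [Fintype V] (H : SimpleGraph V) [DecidableRel H.Adj]
    (p q : ℕ) (hp : 3 ≤ p) (hq : 3 ≤ q) (hpq : p + q = H.maxDegree + 1)
    (S : Set V) (hSF : memF H p S)
    (hSmin : ∀ T : Set V, memF H p T → cliqueCountOn H Sᶜ q ≤ cliqueCountOn H Tᶜ q) :
    ∀ v ∈ Sᶜ,
      ({t : Finset V | ↑t ⊆ Sᶜ ∧ H.IsNClique q t ∧ v ∈ t}.ncard ≤ 2) ∨
      (∃ t : Finset V, ↑t ⊆ Sᶜ ∧ H.IsNClique (q + 1) t ∧ v ∈ t ∧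
        ∀ x ∈ t, ∀ y ∈ Sᶜ, H.Adj x y → y ∈ t) := by
  classical
  obtain ⟨hfree, hmax, -⟩ := hSF
  have hdeg : ∀ x ∈ Sᶜ,
      (Finset.univ.filter (fun y => y ∈ Sᶜ ∧ H.Adj x y)).card ≤ q := by
    intro x hx
    have h1 : ¬ H.CliqueFreeOn (insert x S) p := by
      intro h
      have h2 := hmax _ h
      rw [Set.ncard_insert_of_notMem hx (Set.toFinite S)] at h2
      omega
    simp only [SimpleGraph.CliqueFreeOn, not_forall, not_not] at h1
    obtain ⟨t, htS, ht⟩ := h1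
    have hxt : x ∈ t := by
      by_contra hxt
      refine hfree (t := t) ?_ ht
      intro y hy
      rcases htS hy with rfl | h
      · exact absurd hy hxt
      · exact h
    have h3 : t.erase x ⊆ Finset.univ.filter (fun y => y ∈ S ∧ H.Adj x y) := by
      intro y hy
      obtain ⟨hyx, hyt⟩ := Finset.mem_erase.1 hy
      simp only [Finset.mem_filter, Finset.mem_univ, true_and]
      refine ⟨?_, ht.1 hxt hyt (Ne.symm hyx)⟩
      rcases htS hyt with h | h
      · exact absurd h hyx
      · exact h
    have h4 := Finset.card_le_card h3
    rw [Finset.card_erase_of_mem hxt, ht.2] at h4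
    have h5 : Disjoint (Finset.univ.filter (fun y => y ∈ S ∧ H.Adj x y))
        (Finset.univ.filter (fun y => y ∈ Sᶜ ∧ H.Adj x y)) := by
      rw [Finset.disjoint_left]
      intro y hy hy'
      simp only [Finset.mem_filter] at hy hy'
      exact hy'.2.1 hy.2.1
    have h6 : (Finset.univ.filter (fun y => y ∈ S ∧ H.Adj x y)) ∪
        (Finset.univ.filter (fun y => y ∈ Sᶜ ∧ H.Adj x y)) ⊆ H.neighborFinset x := by
      intro y hy
      simp only [Finset.mem_union, Finset.mem_filter] at hy
      rw [SimpleGraph.mem_neighborFinset]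
      rcases hy with h | h
      · exact h.2.2
      · exact h.2.2
    have h7 := Finset.card_le_card h6
    rw [Finset.card_union_of_disjoint h5, SimpleGraph.card_neighborFinset_eq_degree] at h7
    have h8 := H.degree_le_maxDegree x
    omega
  intro v hv
  by_cases hle : {t : Finset V | ↑t ⊆ Sᶜ ∧ H.IsNClique q t ∧ v ∈ t}.ncard ≤ 2
  · exact Or.inl hle
  right
  rw [not_le, Set.two_lt_ncard (Set.toFinite _)] at hle
  obtain ⟨t₁, h₁, t₂, h₂, t₃, h₃, h12, h13, h23⟩ := hle
  obtain ⟨u, hu⟩ : ∃ u, u = insert v (Finset.univ.filter (fun y => y ∈ Sᶜ ∧ H.Adj v y)) :=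
    ⟨_, rfl⟩
  have hucard : u.card ≤ q + 1 := by
    rw [hu]
    exact (Finset.card_insert_le _ _).trans (Nat.succ_le_succ (hdeg v hv))
  have huS : (u : Set V) ⊆ Sᶜ := by
    intro y hy
    rw [hu] at hy
    simp only [Finset.coe_insert, Finset.coe_filter, Set.mem_insert_iff, Set.mem_ofPred_eq] at hy
    rcases hy with rfl | h
    · exact hv
    · exact h.2.1
  have hsub : ∀ t : Finset V, (↑t ⊆ Sᶜ ∧ H.IsNClique q t ∧ v ∈ t) → t ⊆ u := by
    rintro t ⟨hS, hc, hvt⟩ y hy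
    rw [hu]
    by_cases hyv : y = v
    · simp [hyv]
    · refine Finset.mem_insert_of_mem ?_
      simp only [Finset.mem_filter, Finset.mem_univ, true_and]
      exact ⟨hS hy, hc.1 hvt hy (Ne.symm hyv)⟩
  have hu1 : u.card = q + 1 := by
    by_contra hne
    have e1 := Finset.eq_of_subset_of_card_le (hsub t₁ h₁) (by rw [h₁.2.1.2]; omega)
    have e2 := Finset.eq_of_subset_of_card_le (hsub t₂ h₂) (by rw [h₂.2.1.2]; omega)
    exact h12 (e1.trans e2.symm)
  have hmiss : ∀ t : Finset V, (↑t ⊆ Sᶜ ∧ H.IsNClique q t ∧ v ∈ t) →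
      ∀ a ∈ u, a ∉ t → t = u.erase a := by
    intro t ht a ha hat
    refine Finset.eq_of_subset_of_card_le (Finset.subset_erase.2 ⟨hsub t ht, hat⟩) ?_
    rw [Finset.card_erase_of_mem ha, ht.2.1.2, hu1]
    omega
  have hclq : H.IsNClique (q + 1) u := by
    refine ⟨?_, hu1⟩
    intro x hx y hy hxy
    by_contra hadj
    have key : ∀ t : Finset V, (↑t ⊆ Sᶜ ∧ H.IsNClique q t ∧ v ∈ t) →
        t = u.erase x ∨ t = u.erase y := by
      intro t ht
      by_cases hxt : x ∈ t
      · by_cases hyt : y ∈ t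
        · exact absurd (ht.2.1.1 hxt hyt hxy) hadj
        · exact Or.inr (hmiss t ht y hy hyt)
      · exact Or.inl (hmiss t ht x hx hxt)
    have k1 := key t₁ h₁
    have k2 := key t₂ h₂
    have k3 := key t₃ h₃
    rcases k1 with k1 | k1 <;> rcases k2 with k2 | k2 <;> rcases k3 with k3 | k3 <;>
      first
        | exact h12 (k1.trans k2.symm)
        | exact h13 (k1.trans k3.symm)
        | exact h23 (k2.trans k3.symm)
  refine ⟨u, huS, hclq, by rw [hu]; exact Finset.mem_insert_self _ _, ?_⟩
  intro x hx y hy hxy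
  have hsub2 : u.erase x ⊆ Finset.univ.filter (fun y => y ∈ Sᶜ ∧ H.Adj x y) := by
    intro z hz
    obtain ⟨hzx, hzu⟩ := Finset.mem_erase.1 hz
    simp only [Finset.mem_filter, Finset.mem_univ, true_and]
    exact ⟨huS hzu, hclq.1 hx hzu (Ne.symm hzx)⟩
  have heq := Finset.eq_of_subset_of_card_le hsub2 (by
    rw [Finset.card_erase_of_mem hx, hu1]
    exact hdeg x (huS hx))
  have hy2 : y ∈ Finset.univ.filter (fun y => y ∈ Sᶜ ∧ H.Adj x y) := by
    simp only [Finset.mem_filter, Finset.mem_univ, true_and]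
    exact ⟨hy, hxy⟩
  rw [← heq] at hy2
  exact Finset.mem_of_mem_erase hy2
end

section
/- Let H be a finite simple graph and let p, q ≥ 3 be integers with p + q = Δ(H) + 1. Let S ∈ F be chosen so that, among all members of F, the number of q-cliques of H[V(H) ∖ S] is minimum. Let K⁰ be a q-clique of H[V(H) ∖ S] containing a vertex v_0, let y_0 ∈ A_{v_0} ∖ {v_0} be such that (S ∪ {v_0}) ∖ {y_0} ∈ F, and let K¹ be a q-clique of H[((V(H) ∖ S) ∖ {v_0}) ∪ {y_0}] containing y_0. If K¹ ∩ (K⁰ ∖ {v_0}) ≠ ∅, then |K¹ ∩ (K⁰ ∖ {v_0})| ≥ q − 2. -/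
/-- `A_v`: the set of vertices `y ∈ S ∪ {v}` lying in every `p`-clique of
`H[S ∪ {v}]` that contains `v`. -/
def ASet {V : Type*} (H : SimpleGraph V) (p : ℕ) (S : Set V) (v : V) : Set V :=
  {y ∈ S ∪ {v} | ∀ t : Finset V, ↑t ⊆ S ∪ {v} → H.IsNClique p t → v ∈ t → y ∈ t}

/-- Let `p, q ≥ 3` with `p + q = Δ(H) + 1`, let `S ∈ 𝓕` minimize the number of
`q`-cliques of `H[V ∖ S]` among all members of `𝓕`. Let `K⁰` be a `q`-clique of
`H[V ∖ S]` containing `v₀`, let `y₀ ∈ A_{v₀} ∖ {v₀}` be such that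
`(S ∪ {v₀}) ∖ {y₀} ∈ 𝓕`, and let `K¹` be a `q`-clique of
`H[((V ∖ S) ∖ {v₀}) ∪ {y₀}]` containing `y₀`.
If `K¹ ∩ (K⁰ ∖ {v₀}) ≠ ∅`, then `|K¹ ∩ (K⁰ ∖ {v₀})| ≥ q − 2`. -/
theorem statement8 {V : Type*} [Fintype V] [DecidableEq V]
    (H : SimpleGraph V) [DecidableRel H.Adj]
    (p q : ℕ) (hp : 3 ≤ p) (hq : 3 ≤ q) (hpq : p + q = H.maxDegree + 1)
    (S : Set V) (hSF : memF H p S)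
    (hSmin : ∀ T : Set V, memF H p T → cliqueCountOn H Sᶜ q ≤ cliqueCountOn H Tᶜ q)
    (v₀ : V)
    (K₀ : Finset V) (hK₀ : ↑K₀ ⊆ Sᶜ) (hK₀clique : H.IsNClique q K₀) (hv₀K₀ : v₀ ∈ K₀)
    (y₀ : V) (hy₀ : y₀ ∈ ASet H p S v₀ \ {v₀})
    (hy₀F : memF H p ((S ∪ {v₀}) \ {y₀}))
    (K₁ : Finset V) (hK₁ : ↑K₁ ⊆ (Sᶜ \ {v₀}) ∪ {y₀})
    (hK₁clique : H.IsNClique q K₁) (hy₀K₁ : y₀ ∈ K₁)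
    (hne : (K₁ ∩ K₀.erase v₀).Nonempty) :
    q - 2 ≤ (K₁ ∩ K₀.erase v₀).card := by
  classical
  obtain ⟨w, hw⟩ := hne
  rw [Finset.mem_inter, Finset.mem_erase] at hw
  obtain ⟨hw1, hwv, hw0⟩ := hw
  have hwS : w ∉ S := hK₀ hw0
  have hyv : y₀ ≠ v₀ := fun h => hy₀.2 h
  have hyS : y₀ ∈ S := by
    rcases hy₀.1.1 with h | h
    · exact h
    · exact absurd h hyv
  have hyK0 : y₀ ∉ K₀ := fun h => hK₀ h hyS
  have hvK1 : v₀ ∉ K₁ := by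
    intro h
    rcases hK₁ h with h | h
    · exact h.2 rfl
    · exact hyv h.symm
  have hK1S : ∀ x ∈ K₁, x ≠ y₀ → x ∉ S := by
    intro x hx hxy
    rcases hK₁ hx with h | h
    · exact h.1
    · exact absurd h hxy
  -- a `p`-clique through `w` in `S ∪ {w}`
  have hex : ∃ t : Finset V, (t : Set V) ⊆ insert w S ∧ H.IsNClique p t := by
    by_contra hcon
    have hfree : H.CliqueFreeOn (insert w S) p := fun t ht hc => hcon ⟨t, ht, hc⟩
    have h1 := hSF.2.1 _ hfree
    rw [Set.ncard_insert_of_notMem hwS (Set.toFinite S)] at h1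
    omega
  obtain ⟨t, htS, htc⟩ := hex
  have hwt : w ∈ t := by
    by_contra h
    refine hSF.1 (fun x hx => ?_) htc
    rcases htS hx with h' | h'
    · exact absurd (h' ▸ hx) h
    · exact h'
  have htS' : ∀ x ∈ t.erase w, x ∈ S := by
    intro x hx
    rw [Finset.mem_erase] at hx
    rcases htS hx.2 with h' | h'
    · exact absurd h' hx.1
    · exact h'
  set U := (K₀ ∪ K₁.erase y₀).erase w with hU
  have hUS : ∀ x ∈ U, x ∉ S := by
    intro x hx
    simp only [hU, Finset.mem_erase, Finset.mem_union] at hx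
    rcases hx.2 with h | h
    · exact hK₀ h
    · exact hK1S x h.2 h.1
  have hdisj : Disjoint (t.erase w) U := by
    rw [Finset.disjoint_left]
    exact fun x hx hx' => hUS x hx' (htS' x hx)
  have hsub : t.erase w ∪ U ⊆ H.neighborFinset w := by
    intro x hx
    rw [SimpleGraph.mem_neighborFinset]
    simp only [hU, Finset.mem_erase, Finset.mem_union] at hx
    rcases hx with h | ⟨hne, h | h⟩
    · exact htc.1 hwt h.2 (Ne.symm h.1)
    · exact hK₀clique.1 hw0 h (Ne.symm hne)
    · exact hK₁clique.1 hw1 h.2 (Ne.symm hne)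
  have hcard := Finset.card_le_card hsub
  rw [Finset.card_union_of_disjoint hdisj, SimpleGraph.card_neighborFinset_eq_degree,
    Finset.card_erase_of_mem hwt, htc.2, hU,
    Finset.card_erase_of_mem (Finset.mem_union_left _ hw0)] at hcard
  have hdeg := H.degree_le_maxDegree w
  have hun := Finset.card_union_add_card_inter K₀ (K₁.erase y₀)
  rw [Finset.card_erase_of_mem hy₀K₁, hK₀clique.2, hK₁clique.2] at hun
  have heq : K₀ ∩ K₁.erase y₀ = K₁ ∩ K₀.erase v₀ := by
    ext x
    simp only [Finset.mem_inter, Finset.mem_erase]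
    constructor
    · rintro ⟨a, _, c⟩
      exact ⟨c, fun h => hvK1 (h ▸ c), a⟩
    · rintro ⟨a, _, c⟩
      exact ⟨c, fun h => hyK0 (h ▸ c), a⟩
  rw [heq] at hun
  omega
end

section
/- Let H be a finite simple graph and let p, q ≥ 3 be integers with p + q = Δ(H) + 1. Let S ∈ F be chosen so that, among all members of F, the number of q-cliques of H[V(H) ∖ S] is minimum, and let K⁰ be a q-clique of H[V(H) ∖ S] containing a vertex v_0. If there exists a vertex y ∈ A_{v_0} ∖ {v_0} and a q-clique K^y of H[((V(H) ∖ S) ∖ {v_0}) ∪ {y}] containing y such that |K^y ∩ (K⁰ ∖ {v_0})| = q − 2, then H contains a complete subgraph on Δ(H) − 1 vertices. -/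
/-- Adding an outside vertex to `S ∈ 𝓕` creates a `p`-clique through it. -/
theorem exists_clique_through {V : Type*} [Fintype V] [DecidableEq V]
    (H : SimpleGraph V) (p : ℕ) (S : Set V) (hSF : memF H p S) (v : V) (hv : v ∉ S) :
    ∃ P : Finset V, H.IsNClique p P ∧ v ∈ P ∧ ∀ x ∈ P, x ≠ v → x ∈ S := by
  by_contra hcon
  push Not at hcon
  have hfree : H.CliqueFreeOn (insert v S) p := by
    intro t ht hcl
    by_cases hvt : v ∈ t
    · obtain ⟨x, hx, hxv, hxS⟩ := hcon t hcl hvt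
      rcases ht hx with h | h
      · exact hxv h
      · exact hxS h
    · refine hSF.1 (fun x hx => ?_) hcl
      rcases ht hx with h | h
      · exact absurd (h ▸ hx) hvt
      · exact h
  have h1 := hSF.2.1 _ hfree
  rw [Set.ncard_insert_of_notMem hv (Set.toFinite S)] at h1
  omega

/-- If `b ∉ S` has at most `p - 1` neighbours in `S`, one of which is `y`, then `b` is adjacent
to every vertex of every `(p-1)`-clique of `H[S]` through `y`. -/
theorem adj_of_few_neighbors {V : Type*} [Fintype V] [DecidableEq V]
    (H : SimpleGraph V) (p : ℕ) (hp : 3 ≤ p) (S : Set V) (hSF : memF H p S)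
    (b y : V) (hb : b ∉ S) (hy : y ∈ S) (hby : H.Adj b y)
    (N : Finset V) (hN : ∀ x, x ∈ N ↔ x ∈ S ∧ H.Adj b x) (hNc : N.card ≤ p - 1)
    (Q : Finset V) (hQS : ∀ x ∈ Q, x ∈ S) (hQ : H.IsNClique (p - 1) Q) (hyQ : y ∈ Q) :
    ∀ x ∈ Q, H.Adj b x := by
  obtain ⟨P, hP, hbP, hPS⟩ := exists_clique_through H p S hSF b hb
  have hPN : P.erase b = N := by
    apply Finset.eq_of_subset_of_card_le
    · intro x hx
      rw [Finset.mem_erase] at hx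
      exact (hN x).2 ⟨hPS x hx.2 hx.1, hP.1 hbP hx.2 hx.1.symm⟩
    · rw [Finset.card_erase_of_mem hbP, hP.2]; exact hNc
  have hNcard : N.card = p - 1 := by
    rw [← hPN, Finset.card_erase_of_mem hbP, hP.2]
  have hyN : y ∈ N := (hN y).2 ⟨hy, hby⟩
  have hNcl : H.IsNClique (p - 1) N :=
    ⟨hP.1.subset (by rw [← hPN]; exact_mod_cast Finset.erase_subset b P), hNcard⟩
  suffices hQN : Q = N by
    intro x hx
    rw [hQN] at hx
    exact ((hN x).1 hx).2
  by_contra hne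
  have hyb : y ≠ b := fun h => hb (h ▸ hy)
  -- the swapped set
  have hWmem : ∀ x, x ∈ insert b (S \ {y}) ↔ x = b ∨ (x ∈ S ∧ x ≠ y) := by
    intro x; simp
  -- a clique of the swapped set through `b` lies in `insert b (N.erase y)`
  have hWb : ∀ t : Finset V, (↑t : Set V) ⊆ insert b (S \ {y}) → H.IsClique (↑t : Set V) →
      b ∈ t → t.erase b ⊆ N.erase y := by
    intro t ht hcl hbt x hx
    rw [Finset.mem_erase] at hx
    rcases (hWmem x).1 (ht hx.2) with h | h
    · exact absurd h hx.1
    · exact Finset.mem_erase.2 ⟨h.2, (hN x).2 ⟨h.1, hcl hbt hx.2 hx.1.symm⟩⟩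
  have hWS : ∀ t : Finset V, (↑t : Set V) ⊆ insert b (S \ {y}) → b ∉ t →
      ∀ x ∈ t, x ∈ S ∧ x ≠ y := by
    intro t ht hbt x hx
    rcases (hWmem x).1 (ht hx) with h | h
    · exact absurd (h ▸ hx) hbt
    · exact h
  have hfree : H.CliqueFreeOn (insert b (S \ {y})) p := by
    intro t ht hcl
    by_cases hbt : b ∈ t
    · have h1 := Finset.card_le_card (hWb t ht hcl.1 hbt)
      rw [Finset.card_erase_of_mem hbt, Finset.card_erase_of_mem hyN, hcl.2] at h1
      omega
    · exact hSF.1 (fun x hx => (hWS t ht hbt x hx).1) hcl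
  have hcard : (insert b (S \ {y})).ncard = S.ncard := by
    rw [Set.ncard_insert_of_notMem (fun h => hb h.1) (Set.toFinite _)]
    exact Set.ncard_sdiff_singleton_add_one hy (Set.toFinite S)
  have hcount := hSF.2.2 _ hfree (fun U hU => hcard ▸ hSF.2.1 U hU)
  unfold cliqueCountOn at hcount
  set A : Set (Finset V) := {t : Finset V | ↑t ⊆ S ∧ H.IsNClique (p - 1) t} with hA
  have hsub : {t : Finset V | ↑t ⊆ insert b (S \ {y}) ∧ H.IsNClique (p - 1) t} ⊆
      insert (P.erase y) (A \ {Q, N}) := by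
    rintro t ⟨ht, hcl⟩
    by_cases hbt : b ∈ t
    · left
      apply Finset.eq_of_subset_of_card_le
      · intro x hx
        by_cases hxb : x = b
        · subst hxb; exact Finset.mem_erase.2 ⟨hyb.symm, hbP⟩
        · have h2 := hWb t ht hcl.1 hbt (Finset.mem_erase.2 ⟨hxb, hx⟩)
          rw [← hPN] at h2
          simp only [Finset.mem_erase] at h2 ⊢
          exact ⟨h2.1, h2.2.2⟩
      · rw [hcl.2]
        have hyP : y ∈ P := by
          rw [← hPN] at hyN; exact (Finset.mem_erase.1 hyN).2
        rw [Finset.card_erase_of_mem hyP, hP.2]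
    · right
      have h3 := hWS t ht hbt
      refine ⟨⟨fun x hx => (h3 x hx).1, hcl⟩, ?_⟩
      rintro (h | h)
      · exact (h3 y (h ▸ hyQ)).2 rfl
      · exact (h3 y (h ▸ hyN)).2 rfl
  have h4 := Set.ncard_le_ncard hsub (Set.toFinite _)
  have h5 := Set.ncard_insert_le (P.erase y) (A \ {Q, N})
  have hQNA : ({Q, N} : Set (Finset V)) ⊆ A := by
    rintro t (h | h)
    · rw [h]; exact ⟨fun x hx => hQS x hx, hQ⟩
    · rw [h]; exact ⟨fun x hx => ((hN x).1 hx).1, hNcl⟩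
  have h6 := Set.ncard_diff_add_ncard_of_subset hQNA (Set.toFinite A)
  rw [Set.ncard_pair hne] at h6
  omega

/-- Let `p, q ≥ 3` with `p + q = Δ(H) + 1`, let `S ∈ 𝓕` minimize the number of
`q`-cliques of `H[V ∖ S]` among all members of `𝓕`, and let `K⁰` be a `q`-clique
of `H[V ∖ S]` containing `v₀`. If there exist `y ∈ A_{v₀} ∖ {v₀}` and a `q`-clique
`Kʸ` of `H[((V ∖ S) ∖ {v₀}) ∪ {y}]` containing `y` with `|Kʸ ∩ (K⁰ ∖ {v₀})| = q − 2`,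
then `H` contains a complete subgraph on `Δ(H) − 1` vertices. -/
theorem statement9 {V : Type*} [Fintype V] [DecidableEq V]
    (H : SimpleGraph V) [DecidableRel H.Adj]
    (p q : ℕ) (hp : 3 ≤ p) (hq : 3 ≤ q) (hpq : p + q = H.maxDegree + 1)
    (S : Set V) (hSF : memF H p S)
    (hSmin : ∀ T : Set V, memF H p T → cliqueCountOn H Sᶜ q ≤ cliqueCountOn H Tᶜ q)
    (v₀ : V)
    (K₀ : Finset V) (hK₀ : ↑K₀ ⊆ Sᶜ) (hK₀clique : H.IsNClique q K₀) (hv₀K₀ : v₀ ∈ K₀)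
    (hexists : ∃ y ∈ ASet H p S v₀ \ {v₀}, ∃ Ky : Finset V,
      ↑Ky ⊆ (Sᶜ \ {v₀}) ∪ {y} ∧ H.IsNClique q Ky ∧ y ∈ Ky ∧
      (Ky ∩ K₀.erase v₀).card = q - 2) :
    ∃ t : Finset V, H.IsNClique (H.maxDegree - 1) t := by
  classical
  obtain ⟨y, ⟨⟨hyS', hyA⟩, hyv⟩, Ky, hKyS, hKy, hyKy, hB⟩ := hexists
  have hyv : y ≠ v₀ := hyv
  have hv₀S : v₀ ∉ S := hK₀ hv₀K₀
  have hyS : y ∈ S := by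
    rcases hyS' with h | h
    · exact h
    · exact absurd h hyv
  have hyK₀ : y ∉ K₀ := fun h => hK₀ h hyS
  set B := Ky ∩ K₀.erase v₀ with hBdef
  have hBK : ∀ b ∈ B, b ∈ Ky ∧ b ≠ v₀ ∧ b ∈ K₀ := by
    intro b hb
    simpa [hBdef] using hb
  obtain ⟨P, hP, hvP, hPS⟩ := exists_clique_through H p S hSF v₀ hv₀S
  have hyP : y ∈ P := by
    refine hyA P (fun x hx => ?_) hP hvP
    by_cases h : x = v₀
    · right; exact h
    · left; exact hPS x hx h
  have hQc : H.IsNClique (p - 1) (P.erase v₀) :=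
    ⟨hP.1.subset (by exact_mod_cast Finset.erase_subset v₀ P),
      by rw [Finset.card_erase_of_mem hvP, hP.2]⟩
  have hv₀Ky : v₀ ∉ Ky := by
    intro h
    rcases hKyS h with h | h
    · exact h.2 rfl
    · exact hyv h.symm
  -- every vertex of `B` is adjacent to all of `P`
  have hBP : ∀ b ∈ B, ∀ x ∈ P.erase v₀, H.Adj b x := by
    intro b hb
    obtain ⟨hbKy, hbv, hbK₀⟩ := hBK b hb
    have hbS : b ∉ S := hK₀ hbK₀
    have hby : b ≠ y := fun h => hbS (h ▸ hyS)
    refine adj_of_few_neighbors H p hp S hSF b y hbS hyS (hKy.1 hbKy hyKy hby)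
      ((H.neighborFinset b).filter (· ∈ S)) (by intro x; simp [and_comm]) ?_
      (P.erase v₀) (fun x hx => hPS x (Finset.mem_of_mem_erase hx) (Finset.ne_of_mem_erase hx))
      hQc (Finset.mem_erase.2 ⟨hyv, hyP⟩)
    have hdeg := H.degree_le_maxDegree b
    rw [← H.card_neighborFinset_eq_degree,
      ← Finset.card_filter_add_card_filter_not (s := H.neighborFinset b) (· ∈ S)] at hdeg
    have hsub : ((K₀ ∪ Ky).erase b).erase y ⊆ (H.neighborFinset b).filter (fun x => ¬ x ∈ S) := by
      intro x hx
      simp only [Finset.mem_erase, Finset.mem_union] at hx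
      obtain ⟨hxy, hxb, hx | hx⟩ := hx
      · simp only [Finset.mem_filter, SimpleGraph.mem_neighborFinset]
        exact ⟨hK₀clique.1 hbK₀ hx (Ne.symm hxb), hK₀ hx⟩
      · simp only [Finset.mem_filter, SimpleGraph.mem_neighborFinset]
        refine ⟨hKy.1 hbKy hx (Ne.symm hxb), ?_⟩
        rcases hKyS hx with h | h
        · exact h.1
        · exact absurd h hxy
    have h1 := Finset.card_le_card hsub
    rw [Finset.card_erase_of_mem (by simp [hyKy, hby.symm]),
      Finset.card_erase_of_mem (by simp [hbKy])] at h1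
    have h2 := Finset.card_union_add_card_inter K₀ Ky
    have h3 : K₀ ∩ Ky = B := by
      ext x
      simp only [hBdef, Finset.mem_inter, Finset.mem_erase]
      constructor
      · rintro ⟨h, h'⟩
        exact ⟨h', fun e => hv₀Ky (e ▸ h'), h⟩
      · rintro ⟨h, -, h'⟩
        exact ⟨h', h⟩
    rw [h3, hB, hK₀clique.2, hKy.2] at h2
    omega
  have hBadj : ∀ b ∈ B, ∀ x ∈ P, H.Adj b x := by
    intro b hb x hx
    by_cases h : x = v₀
    · rw [h]
      exact hK₀clique.1 (hBK b hb).2.2 hv₀K₀ (hBK b hb).2.1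
    · exact hBP b hb x (Finset.mem_erase.2 ⟨h, hx⟩)
  refine ⟨P ∪ B, ?_, ?_⟩
  · intro a ha c hc hac
    simp only [Finset.coe_union, Set.mem_union, Finset.mem_coe] at ha hc
    rcases ha with ha | ha <;> rcases hc with hc | hc
    · exact hP.1 ha hc hac
    · exact (hBadj c hc a ha).symm
    · exact hBadj a ha c hc
    · exact hKy.1 (hBK a ha).1 (hBK c hc).1 hac
  · have hdisj : Disjoint P B := by
      rw [Finset.disjoint_left]
      intro x hxP hxB
      exact H.loopless.irrefl x (hBadj x hxB x hxP)
    rw [Finset.card_union_of_disjoint hdisj, hP.2, hB]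
    omega
end

section
/- Let H be a finite simple graph and let p, q ≥ 3 be integers with p + q = Δ(H) + 1. Let S ∈ F be chosen so that, among all members of F, the number of q-cliques of H[V(H) ∖ S] is minimum, and let K⁰ be a q-clique of H[V(H) ∖ S] containing a vertex v_0. Suppose there exist two distinct vertices y_0, y_0' ∈ A_{v_0} ∖ {v_0} such that for each y ∈ {y_0, y_0'} there is a q-clique K^y of H[((V(H) ∖ S) ∖ {v_0}) ∪ {y}] containing y with K^y ∩ K⁰ ≠ ∅. Then H contains a complete subgraph on Δ(H) − 1 vertices. -/
/-- Two cliques that are completely joined have a clique as union. -/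
lemma aux_union {V : Type*} [DecidableEq V] (H : SimpleGraph V) (A B : Finset V) (a b n : ℕ)
    (hA : H.IsNClique a A) (hB : H.IsNClique b B)
    (hAB : ∀ x ∈ A, ∀ y ∈ B, H.Adj x y) (hn : a + b = n) :
    ∃ t : Finset V, H.IsNClique n t := by
  refine ⟨A ∪ B, ?_, ?_⟩
  · intro x hx y hy hxy
    simp only [Finset.coe_union, Set.mem_union, Finset.mem_coe] at hx hy
    rcases hx with hx | hx <;> rcases hy with hy | hy
    · exact hA.1 hx hy hxy
    · exact hAB x hx y hy
    · exact (hAB y hy x hx).symm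
    · exact hB.1 hx hy hxy
  · rw [Finset.card_union_of_disjoint, hA.2, hB.2, hn]
    rw [Finset.disjoint_left]
    intro x hx hy
    exact (hAB x hx x hy).ne rfl

lemma aux_erase {V : Type*} [DecidableEq V] (H : SimpleGraph V) (A : Finset V) (a : ℕ)
    (hA : H.IsNClique a A) (x : V) (hx : x ∈ A) : H.IsNClique (a - 1) (A.erase x) := by
  refine ⟨?_, ?_⟩
  · intro u hu w hw huw
    exact hA.1 (Finset.mem_of_mem_erase hu) (Finset.mem_of_mem_erase hw) huw
  · rw [Finset.card_erase_of_mem hx, hA.2]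

lemma aux_insert {V : Type*} [DecidableEq V] (H : SimpleGraph V) (A : Finset V) (a : ℕ)
    (hA : H.IsNClique a A) (x : V) (hx : ∀ y ∈ A, H.Adj x y) :
    H.IsNClique (a + 1) (insert x A) := hA.insert hx

/-- Every vertex outside `S` is completely joined to a `(p-1)`-clique of `S`. -/
lemma aux_ex {V : Type*} [Fintype V] (H : SimpleGraph V) (p : ℕ) (S : Set V)
    (hSF : memF H p S) (w : V) (hw : w ∉ S) :
    ∃ C : Finset V, ↑C ⊆ S ∧ H.IsNClique (p - 1) C ∧ ∀ c ∈ C, H.Adj w c := by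
  classical
  have h : ¬ H.CliqueFreeOn (insert w S) p := by
    intro h
    have := hSF.2.1 _ h
    rw [Set.ncard_insert_of_notMem hw (Set.toFinite _)] at this
    omega
  simp only [SimpleGraph.CliqueFreeOn] at h
  push Not at h
  obtain ⟨t, htS, ht⟩ := h
  have hwt : w ∈ t := by
    by_contra hwt
    refine hSF.1 ?_ ht
    intro x hx
    rcases htS hx with rfl | h
    · exact absurd hx hwt
    · exact h
  refine ⟨t.erase w, ?_, aux_erase H t p ht w hwt, ?_⟩
  · intro x hx
    have hx' := Finset.mem_erase.1 (Finset.mem_coe.1 hx)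
    rcases htS hx'.2 with rfl | h
    · exact absurd rfl hx'.1
    · exact h
  · intro c hc
    have hc' := Finset.mem_erase.1 hc
    exact ht.1 hwt hc'.2 (Ne.symm hc'.1)

/-- If `w` has exactly `p-1` neighbours in `S`, each of them lies in a unique
`(p-1)`-clique of `S`. -/
lemma aux_count {V : Type*} [Fintype V] (H : SimpleGraph V) (p : ℕ) (hp : 3 ≤ p) (S : Set V)
    (hSF : memF H p S) (w : V) (hw : w ∉ S) (N : Finset V)
    (hN : ∀ x, x ∈ S → H.Adj w x → x ∈ N) (hNc : N.card ≤ p - 1)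
    (y : V) (hyN : y ∈ N) (C D : Finset V) (hCS : ↑C ⊆ S) (hDS : ↑D ⊆ S)
    (hC : H.IsNClique (p - 1) C) (hD : H.IsNClique (p - 1) D)
    (hyC : y ∈ C) (hyD : y ∈ D) : C = D := by
  classical
  by_contra hne
  have hyS : y ∈ S := hCS hyC
  have hyw : y ≠ w := fun h => hw (h ▸ hyS)
  set S' : Set V := insert w (S \ {y}) with hS'
  have key : ∀ t : Finset V, ↑t ⊆ S' → H.IsClique ↑t → w ∈ t → t ⊆ insert w (N.erase y) := by
    intro t ht htc hwt x hx
    rcases ht hx with rfl | h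
    · simp
    · refine Finset.mem_insert_of_mem (Finset.mem_erase.2 ⟨h.2, hN x h.1 (htc hwt hx ?_)⟩)
      rintro rfl
      exact hw h.1
  have hcard : (insert w (N.erase y)).card ≤ p - 1 := by
    have h1 := Finset.card_insert_le w (N.erase y)
    have h2 := Finset.card_erase_of_mem hyN
    have : 0 < N.card := Finset.card_pos.2 ⟨y, hyN⟩
    omega
  have hsub : ∀ t : Finset V, ↑t ⊆ S' → w ∉ t → ↑t ⊆ S \ {y} := by
    intro t ht hwt x hx
    rcases ht hx with rfl | h
    · exact absurd hx hwt
    · exact h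
  have hfree : H.CliqueFreeOn S' p := by
    intro t ht htc
    by_cases hwt : w ∈ t
    · have := Finset.card_le_card (key t ht htc.1 hwt)
      rw [htc.2] at this
      omega
    · exact hSF.1 (fun x hx => (hsub t ht hwt hx).1) htc
  have hnc : S'.ncard = S.ncard := by
    rw [hS', Set.ncard_insert_of_notMem (fun h => hw h.1) (Set.toFinite _)]
    exact Set.ncard_sdiff_singleton_add_one hyS (Set.toFinite _)
  have hle := hSF.2.2 S' hfree (fun U hU => by rw [hnc]; exact hSF.2.1 U hU)
  unfold cliqueCountOn at hle
  set 𝒮 := {t : Finset V | ↑t ⊆ S ∧ H.IsNClique (p - 1) t} with h𝒮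
  have hss : {t : Finset V | ↑t ⊆ S' ∧ H.IsNClique (p - 1) t} ⊆
      insert (insert w (N.erase y)) ((𝒮 \ {C}) \ {D}) := by
    rintro t ⟨ht, htc⟩
    by_cases hwt : w ∈ t
    · left
      exact Finset.eq_of_subset_of_card_le (key t ht htc.1 hwt) (by rw [htc.2]; exact hcard)
    · right
      have h3 := hsub t ht hwt
      refine ⟨⟨⟨fun x hx => (h3 hx).1, htc⟩, ?_⟩, ?_⟩
      · rintro rfl
        exact (h3 hyC).2 rfl
      · rintro rfl
        exact (h3 hyD).2 rfl
  have h1 := Set.ncard_le_ncard hss (Set.toFinite _)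
  have h2 := Set.ncard_insert_le (insert w (N.erase y)) ((𝒮 \ {C}) \ {D})
  have h3 : ((𝒮 \ {C}) \ {D}).ncard + 1 = (𝒮 \ {C}).ncard :=
    Set.ncard_sdiff_singleton_add_one ⟨⟨hDS, hD⟩, fun h => hne (Set.mem_singleton_iff.1 h).symm⟩
      (Set.toFinite _)
  have h4 : (𝒮 \ {C}).ncard + 1 = 𝒮.ncard :=
    Set.ncard_sdiff_singleton_add_one ⟨hCS, hC⟩ (Set.toFinite _)
  omega

/-- Let `p, q ≥ 3` with `p + q = Δ(H) + 1`, let `S ∈ 𝓕` minimize the number of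
`q`-cliques of `H[V ∖ S]` among all members of `𝓕`, and let `K⁰` be a `q`-clique
of `H[V ∖ S]` containing `v₀`. Suppose there are two distinct vertices
`y₀, y₀' ∈ A_{v₀} ∖ {v₀}` such that for each of them there is a `q`-clique `Kʸ`
of `H[((V ∖ S) ∖ {v₀}) ∪ {y}]` containing `y` with `Kʸ ∩ K⁰ ≠ ∅`. Then `H`
contains a complete subgraph on `Δ(H) − 1` vertices. -/
theorem statement10 {V : Type*} [Fintype V] [DecidableEq V]
    (H : SimpleGraph V) [DecidableRel H.Adj]
    (p q : ℕ) (hp : 3 ≤ p) (hq : 3 ≤ q) (hpq : p + q = H.maxDegree + 1)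
    (S : Set V) (hSF : memF H p S)
    (hSmin : ∀ T : Set V, memF H p T → cliqueCountOn H Sᶜ q ≤ cliqueCountOn H Tᶜ q)
    (v₀ : V)
    (K₀ : Finset V) (hK₀ : ↑K₀ ⊆ Sᶜ) (hK₀clique : H.IsNClique q K₀) (hv₀K₀ : v₀ ∈ K₀)
    (y₀ y₀' : V) (hne : y₀ ≠ y₀')
    (hy₀ : y₀ ∈ ASet H p S v₀ \ {v₀}) (hy₀' : y₀' ∈ ASet H p S v₀ \ {v₀})
    (hcl : ∀ y ∈ ({y₀, y₀'} : Set V), ∃ Ky : Finset V,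
      ↑Ky ⊆ (Sᶜ \ {v₀}) ∪ {y} ∧ H.IsNClique q Ky ∧ y ∈ Ky ∧ (Ky ∩ K₀).Nonempty) :
    ∃ t : Finset V, H.IsNClique (H.maxDegree - 1) t := by
  classical
  have hdeg : ∀ w, (H.neighborFinset w).card ≤ p + q - 1 := by
    intro w
    have := H.degree_le_maxDegree w
    rw [← H.card_neighborFinset_eq_degree] at this
    omega
  have hfree := hSF.1
  have hv₀S : v₀ ∉ S := hK₀ hv₀K₀
  obtain ⟨Q, hQS, hQ, hvQ⟩ := aux_ex H p S hSF v₀ hv₀S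
  have hQp : H.IsNClique p (insert v₀ Q) := by
    have := aux_insert H Q _ hQ v₀ hvQ
    rwa [show p - 1 + 1 = p by omega] at this
  have hAQ : ∀ y ∈ ASet H p S v₀ \ {v₀}, y ∈ Q ∧ y ∈ S := by
    intro y hy
    have h1 : y ∈ insert v₀ Q := by
      refine hy.1.2 _ ?_ hQp (Finset.mem_insert_self _ _)
      intro x hx
      rcases Finset.mem_insert.1 (Finset.mem_coe.1 hx) with rfl | h
      · right; rfl
      · left; exact hQS h
    have h2 : y ∈ Q := by
      rcases Finset.mem_insert.1 h1 with h | h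
      · exact absurd h hy.2
      · exact h
    exact ⟨h2, hQS h2⟩
  obtain ⟨hyQ, hyS⟩ := hAQ _ hy₀
  obtain ⟨hyQ', hyS'⟩ := hAQ _ hy₀'
  have hYQ : ∀ y ∈ ({y₀, y₀'} : Set V), y ∈ Q := by
    rintro y (rfl | rfl) <;> assumption
  choose! KY hKY1 hKY2 hKY3 hKY4 using hcl
  set NS : V → Finset V := fun w => (H.neighborFinset w).filter (· ∈ S) with hNS
  set NT : V → Finset V := fun w => (H.neighborFinset w).filter (· ∉ S) with hNT
  have mNS : ∀ w x, x ∈ NS w ↔ H.Adj w x ∧ x ∈ S := by intro w x; simp [hNS]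
  have mNT : ∀ w x, x ∈ NT w ↔ H.Adj w x ∧ x ∉ S := by intro w x; simp [hNT]
  have hsum : ∀ w, (NS w).card + (NT w).card ≤ p + q - 1 := by
    intro w
    have := Finset.card_filter_add_card_filter_not (s := H.neighborFinset w) (· ∈ S)
    have h2 := hdeg w
    simp only [hNS, hNT]
    omega
  -- members of `KY y` other than `y` lie outside `S` and differ from `v₀`
  have hKYmem : ∀ y ∈ ({y₀, y₀'} : Set V), ∀ x ∈ KY y, x ≠ y → x ∉ S ∧ x ≠ v₀ := by
    intro y hy x hx hxy
    rcases hKY1 y hy hx with h | h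
    · exact ⟨h.1, h.2⟩
    · exact absurd h hxy
  have hYv : ∀ y ∈ ({y₀, y₀'} : Set V), v₀ ∉ KY y := by
    intro y hy hv
    refine (hKYmem y hy v₀ hv ?_).2 rfl
    rintro rfl
    exact hv₀S (hQS (hYQ _ hy))
  have hK₀e : ∀ w ∈ K₀, K₀.erase w ⊆ NT w := by
    intro w hw x hx
    have hx' := Finset.mem_erase.1 hx
    exact (mNT _ _).2 ⟨hK₀clique.1 hw hx'.2 (Ne.symm hx'.1), hK₀ hx'.2⟩
  have hNTlow : ∀ w ∈ K₀, q - 1 ≤ (NT w).card := by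
    intro w hw
    have := Finset.card_le_card (hK₀e w hw)
    rwa [Finset.card_erase_of_mem hw, hK₀clique.2] at this
  have hNSlow : ∀ w ∈ K₀, p - 1 ≤ (NS w).card := by
    intro w hw
    obtain ⟨C, hCS, hC, hwC⟩ := aux_ex H p S hSF w (hK₀ hw)
    rw [← hC.2]
    exact Finset.card_le_card fun x hx => (mNS _ _).2 ⟨hwC x hx, hCS hx⟩
  have hNSup : ∀ w ∈ K₀, (NS w).card ≤ p := by
    intro w hw
    have := hNTlow w hw
    have := hsum w
    omega
  -- adjacency of `w ∈ KY y` to `y`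
  have hadj : ∀ y ∈ ({y₀, y₀'} : Set V), ∀ w ∈ K₀, w ∈ KY y → y ∈ NS w := by
    intro y hy w hw hwy
    refine (mNS _ _).2 ⟨hKY2 y hy |>.1 hwy (hKY3 y hy) ?_, hQS (hYQ y hy)⟩
    rintro rfl
    exact hK₀ hw (hQS (hYQ _ hy))
  -- F2
  have F2 : ∀ y ∈ ({y₀, y₀'} : Set V), ∀ C D : Finset V, ↑C ⊆ S → ↑D ⊆ S →
      H.IsNClique (p - 1) C → H.IsNClique (p - 1) D → y ∈ C → y ∈ D →
      ((C ∪ D) \ Q).card ≤ 1 := by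
    intro y hy C D hCS hDS hC hD hyC hyD
    have hyQ1 := hYQ y hy
    have hA : Q.erase y ∪ ((C ∪ D) \ Q) ⊆ NS y := by
      intro x hx
      have hx3 : x ≠ y ∧ (x ∈ Q ∨ x ∈ C ∨ x ∈ D) := by
        simp only [Finset.mem_union, Finset.mem_erase, Finset.mem_sdiff] at hx
        rcases hx with h | h
        · exact ⟨h.1, Or.inl h.2⟩
        · exact ⟨fun e => h.2 (e ▸ hyQ1), Or.inr h.1⟩
      obtain ⟨hxy, h | h | h⟩ := hx3
      · exact (mNS _ _).2 ⟨hQ.1 hyQ1 h hxy.symm, hQS h⟩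
      · exact (mNS _ _).2 ⟨hC.1 hyC h hxy.symm, hCS h⟩
      · exact (mNS _ _).2 ⟨hD.1 hyD h hxy.symm, hDS h⟩
    have hB : insert v₀ ((KY y).erase y) ⊆ NT y := by
      intro x hx
      rcases Finset.mem_insert.1 hx with rfl | h
      · exact (mNT _ _).2 ⟨(hvQ y hyQ1).symm, hv₀S⟩
      · have h' := Finset.mem_erase.1 h
        exact (mNT _ _).2 ⟨(hKY2 y hy).1 (hKY3 y hy) h'.2 (Ne.symm h'.1),
          (hKYmem y hy x h'.2 h'.1).1⟩
    have h1 := Finset.card_le_card hA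
    have h2 := Finset.card_le_card hB
    rw [Finset.card_insert_of_notMem (fun h => hYv y hy (Finset.mem_of_mem_erase h)),
      Finset.card_erase_of_mem (hKY3 y hy), (hKY2 y hy).2] at h2
    rw [Finset.card_union_of_disjoint, Finset.card_erase_of_mem hyQ1, hQ.2] at h1
    · have := hsum y
      omega
    · rw [Finset.disjoint_left]
      intro x hx hx'
      exact (Finset.mem_sdiff.1 hx').2 (Finset.mem_of_mem_erase hx)
  -- F2b
  have F2b : ∀ y ∈ ({y₀, y₀'} : Set V), ∀ C : Finset V, ↑C ⊆ S →
      H.IsNClique (p - 1) C → y ∈ C → ∀ a ∈ Q, a ∉ C → ∀ b ∈ Q, b ≠ a → b ∈ C := by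
    intro y hy C hCS hC hyC a ha haC b hb hba
    by_contra hbC
    have h1 := F2 y hy C C hCS hCS hC hC hyC hyC
    rw [Finset.union_self] at h1
    have h2 : (Q \ C).card = (C \ Q).card :=
      Finset.card_sdiff_comm (by rw [hQ.2, hC.2])
    have h3 : ({a, b} : Finset V) ⊆ Q \ C := by
      intro x hx
      rcases Finset.mem_insert.1 hx with rfl | h
      · exact Finset.mem_sdiff.2 ⟨ha, haC⟩
      · rw [Finset.mem_singleton.1 h]
        exact Finset.mem_sdiff.2 ⟨hb, hbC⟩
    have h4 := Finset.card_le_card h3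
    rw [Finset.card_pair hba.symm] at h4
    omega
  -- F3
  have F3 : ∀ y ∈ ({y₀, y₀'} : Set V), ∀ C D : Finset V, ↑C ⊆ S → ↑D ⊆ S →
      H.IsNClique (p - 1) C → H.IsNClique (p - 1) D → y ∈ C → y ∈ D →
      ∀ a ∈ Q, a ∉ C → ∀ b ∈ Q, b ∉ D → a = b := by
    intro y hy C D hCS hDS hC hD hyC hyD a ha haC b hb hbD
    by_contra hab
    have h1 := F2 y hy C D hCS hDS hC hD hyC hyD
    have hex : ∀ E : Finset V, H.IsNClique (p - 1) E → ∀ e ∈ Q, e ∉ E → ∃ u ∈ E, u ∉ Q := by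
      intro E hE e he heE
      by_contra hcon
      push Not at hcon
      have := Finset.eq_of_subset_of_card_le (s := E) (t := Q) hcon (by rw [hQ.2, hE.2])
      exact heE (this ▸ he)
    obtain ⟨u, huC, huQ⟩ := hex C hC a ha haC
    obtain ⟨u', huD, huQ'⟩ := hex D hD b hb hbD
    have huu : u = u' := by
      refine Finset.card_le_one.1 h1 u ?_ u' ?_
      · exact Finset.mem_sdiff.2 ⟨Finset.mem_union_left _ huC, huQ⟩
      · exact Finset.mem_sdiff.2 ⟨Finset.mem_union_right _ huD, huQ'⟩
    subst huu
    have hall : ∀ x ∈ Q, H.Adj u x := by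
      intro x hx
      have hux : u ≠ x := fun h => huQ (h ▸ hx)
      by_cases hxa : x = a
      · subst hxa
        exact hD.1 huD (F2b y hy D hDS hD hyD b hb hbD x hx hab) hux
      · exact hC.1 huC (F2b y hy C hCS hC hyC a ha haC x hx hxa) hux
    have hbig := aux_insert H Q _ hQ u hall
    rw [show p - 1 + 1 = p by omega] at hbig
    refine hfree ?_ hbig
    intro x hx
    rcases Finset.mem_insert.1 (Finset.mem_coe.1 hx) with rfl | h
    · exact hCS huC
    · exact hQS h
  -- F4
  have F4 : ∀ y ∈ ({y₀, y₀'} : Set V), ∀ w ∈ K₀, w ∈ KY y → p ≤ (NS w).card →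
      ∀ x ∈ K₀, x ≠ v₀ → x ∈ KY y := by
    intro y hy w hw hwy hpw
    have hcq : (NT w).card ≤ (K₀.erase w).card := by
      rw [Finset.card_erase_of_mem hw, hK₀clique.2]
      have := hsum w
      omega
    have heq := Finset.eq_of_subset_of_card_le (hK₀e w hw) hcq
    have hsub : (KY y).erase y ⊆ K₀.erase v₀ := by
      intro x hx
      have hx' := Finset.mem_erase.1 hx
      have hxx := hKYmem y hy x hx'.2 hx'.1
      refine Finset.mem_erase.2 ⟨hxx.2, ?_⟩
      by_cases hxw : x = w
      · rw [hxw]; exact hw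
      · have : x ∈ NT w := (mNT _ _).2 ⟨(hKY2 y hy).1 hwy hx'.2 (Ne.symm hxw), hxx.1⟩
        rw [← heq] at this
        exact Finset.mem_of_mem_erase this
    have heq2 := Finset.eq_of_subset_of_card_le hsub (by
      rw [Finset.card_erase_of_mem hv₀K₀, Finset.card_erase_of_mem (hKY3 y hy),
        hK₀clique.2, (hKY2 y hy).2])
    intro x hx hxv
    have : x ∈ K₀.erase v₀ := Finset.mem_erase.2 ⟨hxv, hx⟩
    rw [← heq2] at this
    exact Finset.mem_of_mem_erase this
  -- the intersection vertex
  have hmeet : ∀ y ∈ ({y₀, y₀'} : Set V), ∃ w ∈ K₀, w ≠ v₀ ∧ w ∈ KY y := by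
    intro y hy
    obtain ⟨w, hw⟩ := hKY4 y hy
    have hw' := Finset.mem_inter.1 hw
    exact ⟨w, hw'.2, fun h => hYv y hy (h ▸ hw'.1), hw'.1⟩
  -- F5
  have F5 : ∀ y ∈ ({y₀, y₀'} : Set V), ∀ a ∈ K₀, a ≠ v₀ → a ∉ KY y →
      ∀ b ∈ K₀, b ≠ v₀ → b ≠ a → b ∈ KY y := by
    intro y hy a ha hav haK b hb hbv hba
    by_contra hbK
    obtain ⟨w, hw, hwv, hwy⟩ := hmeet y hy
    have hwny : w ≠ y := by
      rintro rfl
      exact hK₀ hw (hQS (hYQ _ hy))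
    have hsub : insert v₀ (insert a (insert b (((KY y).erase y).erase w))) ⊆ NT w := by
      intro x hx
      simp only [Finset.mem_insert] at hx
      have hin : ∀ z ∈ K₀, z ≠ w → z ∈ NT w := fun z hz hzw =>
        hK₀e w hw (Finset.mem_erase.2 ⟨hzw, hz⟩)
      rcases hx with rfl | rfl | rfl | h
      · exact hin _ hv₀K₀ hwv.symm
      · exact hin _ ha (fun h => haK (h ▸ hwy))
      · exact hin _ hb (fun h => hbK (h ▸ hwy))
      · have h1 := Finset.mem_erase.1 h
        have h2 := Finset.mem_erase.1 h1.2
        exact (mNT _ _).2 ⟨(hKY2 y hy).1 hwy h2.2 (Ne.symm h1.1), (hKYmem y hy x h2.2 h2.1).1⟩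
    have hc := Finset.card_le_card hsub
    have n3 : b ∉ ((KY y).erase y).erase w := fun h =>
      hbK (Finset.mem_of_mem_erase (Finset.mem_of_mem_erase h))
    have n2 : a ∉ insert b (((KY y).erase y).erase w) := by
      intro h
      rcases Finset.mem_insert.1 h with h | h
      · exact hba h.symm
      · exact haK (Finset.mem_of_mem_erase (Finset.mem_of_mem_erase h))
    have n1 : v₀ ∉ insert a (insert b (((KY y).erase y).erase w)) := by
      intro h
      rcases Finset.mem_insert.1 h with h | h
      · exact hav h.symm
      rcases Finset.mem_insert.1 h with h | h
      · exact hbv h.symm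
      · exact hYv y hy (Finset.mem_of_mem_erase (Finset.mem_of_mem_erase h))
    rw [Finset.card_insert_of_notMem n1, Finset.card_insert_of_notMem n2,
      Finset.card_insert_of_notMem n3,
      Finset.card_erase_of_mem (Finset.mem_erase.2 ⟨hwny, hwy⟩),
      Finset.card_erase_of_mem (hKY3 y hy), (hKY2 y hy).2] at hc
    have := hsum w
    have := hNSlow w hw
    omega
  -- F6
  have F6 : ∀ y ∈ ({y₀, y₀'} : Set V), ∀ w ∈ K₀, w ∈ KY y → ∀ C : Finset V, ↑C ⊆ S →
      H.IsNClique (p - 1) C → (∀ c ∈ C, H.Adj w c) → y ∉ C →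
      ∀ x ∈ K₀, x ≠ v₀ → x ∈ KY y := by
    intro y hy w hw hwy C hCS hC hwC hyC
    refine F4 y hy w hw hwy ?_
    have hsub : insert y C ⊆ NS w := by
      intro x hx
      rcases Finset.mem_insert.1 hx with rfl | h
      · exact hadj _ hy w hw hwy
      · exact (mNS _ _).2 ⟨hwC x h, hCS h⟩
    have := Finset.card_le_card hsub
    rw [Finset.card_insert_of_notMem hyC, hC.2] at this
    omega
  have m0 : y₀ ∈ ({y₀, y₀'} : Set V) := Or.inl rfl
  have m1 : y₀' ∈ ({y₀, y₀'} : Set V) := Or.inr rfl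
  -- F7
  have F7 : ∀ w ∈ K₀, w ∈ KY y₀ → w ∈ KY y₀' → ∀ C : Finset V, ↑C ⊆ S →
      H.IsNClique (p - 1) C → (∀ c ∈ C, H.Adj w c) → ∃ y ∈ ({y₀, y₀'} : Set V), y ∈ C := by
    intro w hw hw0 hw1 C hCS hC hwC
    by_contra hcon
    push Not at hcon
    have hsub : insert y₀ (insert y₀' C) ⊆ NS w := by
      intro x hx
      rcases Finset.mem_insert.1 hx with rfl | h
      · exact hadj _ m0 w hw hw0
      rcases Finset.mem_insert.1 h with rfl | h
      · exact hadj _ m1 w hw hw1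
      · exact (mNS _ _).2 ⟨hwC x h, hCS h⟩
    have := Finset.card_le_card hsub
    rw [Finset.card_insert_of_notMem, Finset.card_insert_of_notMem (hcon _ m1), hC.2] at this
    · have := hNSup w hw
      omega
    · intro h
      rcases Finset.mem_insert.1 h with h | h
      · exact hne h
      · exact hcon _ m0 h
  -- the two ways to finish
  have finK : ∀ a ∈ K₀, (∀ w ∈ K₀, w ≠ v₀ → w ≠ a → ∀ x ∈ Q, H.Adj w x) →
      ∃ t : Finset V, H.IsNClique (H.maxDegree - 1) t := by
    intro a ha h
    refine aux_union H (K₀.erase a) Q (q - 1) (p - 1) _ (aux_erase H K₀ q hK₀clique a ha) hQ ?_ (by omega)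
    intro w hw x hx
    have hw' := Finset.mem_erase.1 hw
    by_cases hwv : w = v₀
    · rw [hwv]; exact hvQ x hx
    · exact h w hw'.2 hwv hw'.1 x hx
  have finQ : ∀ a ∈ Q, (∀ w ∈ K₀, w ≠ v₀ → ∀ x ∈ Q, x ≠ a → H.Adj w x) →
      ∃ t : Finset V, H.IsNClique (H.maxDegree - 1) t := by
    intro a ha h
    refine aux_union H K₀ (Q.erase a) q (p - 1 - 1) _ hK₀clique (aux_erase H Q _ hQ a ha) ?_ (by omega)
    intro w hw x hx
    have hx' := Finset.mem_erase.1 hx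
    by_cases hwv : w = v₀
    · rw [hwv]; exact hvQ x hx'.2
    · exact h w hw hwv x hx'.2 hx'.1
  by_cases hP : ∃ y ∈ ({y₀, y₀'} : Set V), ∃ D : Finset V, ↑D ⊆ S ∧
      H.IsNClique (p - 1) D ∧ y ∈ D ∧ D ≠ Q
  · obtain ⟨y, hy, D, hDS, hD, hyD, hDQ⟩ := hP
    have hbig : ∀ w ∈ K₀, w ∈ KY y → p ≤ (NS w).card := by
      intro w hw hwy
      by_contra hlt
      exact hDQ (aux_count H p hp S hSF w (hK₀ hw) (NS w)
        (fun x hx hxa => (mNS _ _).2 ⟨hxa, hx⟩) (by omega) y (hadj y hy w hw hwy) D Q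
        hDS hQS hD hQ hyD (hYQ y hy))
    obtain ⟨w, hw, hwv, hwy⟩ := hmeet y hy
    have hfull := F4 y hy w hw hwy (hbig w hw hwy)
    have hfull2 : ∀ y' ∈ ({y₀, y₀'} : Set V), ∀ x ∈ K₀, x ≠ v₀ → x ∈ KY y' := by
      intro y' hy'
      obtain ⟨w', hw', hwv', hwy'⟩ := hmeet y' hy'
      exact F4 y' hy' w' hw' hwy' (hbig w' hw' (hfull w' hw' hwv'))
    have hnon : ∀ w ∈ K₀, w ≠ v₀ → ∀ a ∈ Q, ¬ H.Adj w a →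
        ∃ C : Finset V, ↑C ⊆ S ∧ H.IsNClique (p - 1) C ∧ y₀ ∈ C ∧ a ∉ C := by
      intro w hw hwv a ha hwa
      obtain ⟨C, hCS, hC, hwC⟩ := aux_ex H p S hSF w (hK₀ hw)
      obtain ⟨z, hz, hzC⟩ := F7 w hw (hfull2 _ m0 w hw hwv) (hfull2 _ m1 w hw hwv) C hCS hC hwC
      have haC : a ∉ C := fun h => hwa (hwC a h)
      refine ⟨C, hCS, hC, F2b z hz C hCS hC hzC a ha haC y₀ hyQ ?_, haC⟩
      rintro rfl
      exact hwa ((mNS _ _).1 (hadj _ m0 w hw (hfull2 _ m0 w hw hwv))).1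
    by_cases hall : ∀ w ∈ K₀, w ≠ v₀ → ∀ a ∈ Q, H.Adj w a
    · exact finK v₀ hv₀K₀ (fun w hw hwv _ => hall w hw hwv)
    · push Not at hall
      obtain ⟨w1, hw1, hwv1, a, ha, hwa⟩ := hall
      obtain ⟨C, hCS, hC, hyC, haC⟩ := hnon w1 hw1 hwv1 a ha hwa
      refine finQ a ha ?_
      intro w2 hw2 hwv2 x hx hxa
      by_contra hwx
      obtain ⟨E, hES, hE, hyE, hxE⟩ := hnon w2 hw2 hwv2 x hx hwx
      exact hxa (F3 y₀ m0 C E hCS hES hC hE hyC hyE a ha haC x hx hxE).symm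
  · push Not at hP
    by_cases hfull : ∀ y ∈ ({y₀, y₀'} : Set V), ∀ x ∈ K₀, x ≠ v₀ → x ∈ KY y
    · refine finK v₀ hv₀K₀ (fun w hw hwv _ x hx => ?_)
      obtain ⟨C, hCS, hC, hwC⟩ := aux_ex H p S hSF w (hK₀ hw)
      obtain ⟨z, hz, hzC⟩ := F7 w hw (hfull _ m0 w hw hwv) (hfull _ m1 w hw hwv) C hCS hC hwC
      exact hwC x (hP z hz C hCS hC hzC ▸ hx)
    · push Not at hfull
      obtain ⟨y, hy, a, ha, hav, haK⟩ := hfull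
      refine finK a ha (fun w hw hwv hwa x hx => ?_)
      have hwy := F5 y hy a ha hav haK w hw hwv hwa
      obtain ⟨C, hCS, hC, hwC⟩ := aux_ex H p S hSF w (hK₀ hw)
      have hyC : y ∈ C := by
        by_contra hyC
        exact haK (F6 y hy w hw hwy C hCS hC hwC hyC a ha hav)
      exact hwC x (hP y hy C hCS hC hyC ▸ hx)
end

section
/- Let H_1 be the simple graph on vertices v_1, …, v_8 whose edges are exactly v_1v_2, v_1v_3, v_1v_6, v_1v_8, v_2v_3, v_2v_4, v_2v_5, v_3v_4, v_3v_5, v_4v_6, v_4v_7, v_5v_7, v_5v_8, v_6v_7, v_6v_8, v_7v_8. Then H_1 is 4-regular (so Δ(H_1) = 4), ω(H_1) = 3 ≤ Δ(H_1) − 1, and there is no partition of V(H_1) into two sets V_1 and V_2 such that H_1[V_1] is K_3-free and V_2 is an independent set (i.e., H_1[V_2] is K_2-free). -/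
/-- The graph `H₁` on vertices `v₁, …, v₈` (represented as `0, …, 7 : Fin 8`) with the
sixteen edges `v₁v₂, v₁v₃, v₁v₆, v₁v₈, v₂v₃, v₂v₄, v₂v₅, v₃v₄, v₃v₅, v₄v₆, v₄v₇,
v₅v₇, v₅v₈, v₆v₇, v₆v₈, v₇v₈`. -/
def graphH₁ : SimpleGraph (Fin 8) :=
  SimpleGraph.fromRel (fun a b => (a, b) ∈
    ([(0, 1), (0, 2), (0, 5), (0, 7), (1, 2), (1, 3), (1, 4), (2, 3), (2, 4), (3, 5),
      (3, 6), (4, 6), (4, 7), (5, 6), (5, 7), (6, 7)] : List (Fin 8 × Fin 8)))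

instance : DecidableRel graphH₁.Adj :=
  fun a b => inferInstanceAs (Decidable (a ≠ b ∧ (_ ∨ _)))

theorem graphH₁_no_four : ∀ a b : Fin 8, graphH₁.Adj a b → ∀ c : Fin 8, graphH₁.Adj a c →
    graphH₁.Adj b c → ∀ d : Fin 8, graphH₁.Adj a d → graphH₁.Adj b d → ¬ graphH₁.Adj c d := by
  decide +kernel

theorem graphH₁_cliqueNum : graphH₁.cliqueNum = 3 := by
  apply le_antisymm
  · by_contra! h
    obtain ⟨s, hs⟩ := graphH₁.exists_isNClique_cliqueNum
    have hc : 4 ≤ s.card := by rw [hs.card_eq]; exact h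
    obtain ⟨t, hts, ht⟩ := Finset.exists_subset_card_eq hc
    have h4 : graphH₁.IsNClique 4 t :=
      ⟨hs.isClique.subset (Finset.coe_subset.2 hts), ht⟩
    obtain ⟨a, u, hau, rfl, hu⟩ := Finset.card_eq_succ.1 ht
    obtain ⟨b, c, d, hbc, hbd, hcd, rfl⟩ := Finset.card_eq_three.1 hu
    simp only [Finset.mem_insert, Finset.mem_singleton, not_or] at hau
    obtain ⟨hab, hac, had⟩ := hau
    have adj : ∀ x y, x ∈ ({a, b, c, d} : Finset (Fin 8)) → y ∈ ({a, b, c, d} : Finset (Fin 8)) →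
        x ≠ y → graphH₁.Adj x y := fun x y hx hy hxy =>
      h4.isClique (Finset.mem_coe.2 hx) (Finset.mem_coe.2 hy) hxy
    exact graphH₁_no_four a b (adj _ _ (by simp) (by simp) hab)
      c (adj _ _ (by simp) (by simp) hac) (adj _ _ (by simp) (by simp) hbc)
      d (adj _ _ (by simp) (by simp) had) (adj _ _ (by simp) (by simp) hbd)
      (adj _ _ (by simp) (by simp) hcd)
  · have h3 : graphH₁.IsNClique 3 {0, 1, 2} :=
      SimpleGraph.is3Clique_triple_iff.2 ⟨by decide, by decide, by decide⟩
    have := h3.isClique.card_le_cliqueNum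
    rwa [h3.card_eq] at this

theorem graphH₁_no_partition :
    ¬ ∃ V₁ V₂ : Set (Fin 8), V₁ ∪ V₂ = Set.univ ∧ Disjoint V₁ V₂ ∧
      graphH₁.CliqueFreeOn V₁ 3 ∧ graphH₁.CliqueFreeOn V₂ 2 := by
  rintro ⟨V₁, V₂, hU, -, h1, h2⟩
  have hmem : ∀ x, x ∉ V₂ → x ∈ V₁ := fun x hx =>
    ((hU ▸ Set.mem_univ x : x ∈ V₁ ∪ V₂)).resolve_right hx
  have tri : ∀ a b c, graphH₁.Adj a b → graphH₁.Adj a c → graphH₁.Adj b c →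
      a ∈ V₂ ∨ b ∈ V₂ ∨ c ∈ V₂ := by
    intro a b c hab hac hbc
    by_contra! h
    refine h1 (t := {a, b, c}) ?_ (SimpleGraph.is3Clique_triple_iff.2 ⟨hab, hac, hbc⟩)
    intro x hx
    simp only [Finset.coe_insert, Finset.coe_singleton, Set.mem_insert_iff,
      Set.mem_singleton_iff] at hx
    rcases hx with rfl | rfl | rfl
    exacts [hmem _ h.1, hmem _ h.2.1, hmem _ h.2.2]
  have ind : ∀ a b, graphH₁.Adj a b → ¬ (a ∈ V₂ ∧ b ∈ V₂) := by
    rintro a b hab ⟨ha, hb⟩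
    refine h2 (t := {a, b}) ?_ ⟨?_, Finset.card_pair hab.ne⟩
    · intro x hx
      simp only [Finset.coe_insert, Finset.coe_singleton, Set.mem_insert_iff,
        Set.mem_singleton_iff] at hx
      rcases hx with rfl | rfl <;> assumption
    · rw [Finset.coe_pair, SimpleGraph.isClique_pair]
      exact fun _ => hab
  have t012 := tri 0 1 2 (by decide) (by decide) (by decide)
  have t123 := tri 1 2 3 (by decide) (by decide) (by decide)
  have t124 := tri 1 2 4 (by decide) (by decide) (by decide)
  have t057 := tri 0 5 7 (by decide) (by decide) (by decide)
  have t356 := tri 3 5 6 (by decide) (by decide) (by decide)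
  have t467 := tri 4 6 7 (by decide) (by decide) (by decide)
  have t567 := tri 5 6 7 (by decide) (by decide) (by decide)
  have e01 := ind 0 1 (by decide)
  have e02 := ind 0 2 (by decide)
  have e05 := ind 0 5 (by decide)
  have e07 := ind 0 7 (by decide)
  have e12 := ind 1 2 (by decide)
  have e13 := ind 1 3 (by decide)
  have e14 := ind 1 4 (by decide)
  have e23 := ind 2 3 (by decide)
  have e24 := ind 2 4 (by decide)
  have e35 := ind 3 5 (by decide)
  have e36 := ind 3 6 (by decide)
  have e46 := ind 4 6 (by decide)
  have e47 := ind 4 7 (by decide)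
  have e56 := ind 5 6 (by decide)
  have e57 := ind 5 7 (by decide)
  have e67 := ind 6 7 (by decide)
  clear tri ind hmem h1 h2 hU
  grind

/-- `H₁` is `4`-regular (so `Δ(H₁) = 4`), has clique number `3 ≤ Δ(H₁) − 1`, and there
is no partition of `V(H₁)` into sets `V₁, V₂` such that `H₁[V₁]` is `K₃`-free and `V₂`
is an independent set (i.e. `H₁[V₂]` is `K₂`-free). -/
theorem statement13 :
    (∀ v : Fin 8, graphH₁.degree v = 4) ∧
    graphH₁.maxDegree = 4 ∧
    graphH₁.cliqueNum = 3 ∧ graphH₁.cliqueNum ≤ graphH₁.maxDegree - 1 ∧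
    ¬ ∃ V₁ V₂ : Set (Fin 8), V₁ ∪ V₂ = Set.univ ∧ Disjoint V₁ V₂ ∧
      graphH₁.CliqueFreeOn V₁ 3 ∧ graphH₁.CliqueFreeOn V₂ 2 := by
  have hd : ∀ v : Fin 8, graphH₁.degree v = 4 := by decide +kernel
  have hm : graphH₁.maxDegree = 4 :=
    SimpleGraph.IsRegularOfDegree.maxDegree_eq (G := graphH₁) hd
  exact ⟨hd, hm, graphH₁_cliqueNum, by rw [graphH₁_cliqueNum, hm], graphH₁_no_partition⟩
end

section
/- Let H_0 be the graph obtained from the complete graph K_8 on vertices v_1, …, v_8 by adding, for each i with 1 ≤ i ≤ 8, two new vertices w_i and w_i' joined only to v_i. Then Δ(H_0) = 9, ω(H_0) = 8 ≤ Δ(H_0) − 1, χ(H_0) = 8, the independence number of H_0 is 16, the set {w_i, w_i' : 1 ≤ i ≤ 8} is the unique maximum independent set of H_0, and there is no proper coloring of H_0 with Δ(H_0) − 1 = 8 colors in which some color class is a maximum independent set of H_0. -/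
/-- The base relation for `H₀`: the vertices `v₁, …, v₈` are `Sum.inl i`, and the two
pendant vertices `wᵢ, wᵢ'` attached to `vᵢ` are `Sum.inr (i, 0)` and `Sum.inr (i, 1)`.
Distinct `vᵢ`'s are all joined (a `K₈`), and `wᵢ, wᵢ'` are joined exactly to `vᵢ`. -/
def relH₀ : Fin 8 ⊕ Fin 8 × Fin 2 → Fin 8 ⊕ Fin 8 × Fin 2 → Prop := fun x y =>
  match x, y with
  | Sum.inl i, Sum.inl j => i ≠ j
  | Sum.inl i, Sum.inr (j, _) => i = j
  | _, _ => False

instance : DecidableRel relH₀ := fun x y =>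
  match x, y with
  | Sum.inl i, Sum.inl j => inferInstanceAs (Decidable (i ≠ j))
  | Sum.inl i, Sum.inr (j, _) => inferInstanceAs (Decidable (i = j))
  | Sum.inr _, Sum.inl _ => inferInstanceAs (Decidable False)
  | Sum.inr _, Sum.inr _ => inferInstanceAs (Decidable False)

/-- The graph `H₀` obtained from `K₈` on `v₁, …, v₈` by adding, for each `i`, two new
vertices `wᵢ, wᵢ'` joined only to `vᵢ`. -/
def graphH₀ : SimpleGraph (Fin 8 ⊕ Fin 8 × Fin 2) := SimpleGraph.fromRel relH₀

instance : DecidableRel graphH₀.Adj :=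
  fun a b => inferInstanceAs (Decidable (a ≠ b ∧ (relH₀ a b ∨ relH₀ b a)))

/-- No two members of an independent set are adjacent. -/
lemma indep_not_adj {s : Set (Fin 8 ⊕ Fin 8 × Fin 2)} (hs : graphH₀.CliqueFreeOn s 2)
    {a b : Fin 8 ⊕ Fin 8 × Fin 2} (ha : a ∈ s) (hb : b ∈ s) : ¬ graphH₀.Adj a b := by
  intro hab
  refine hs (t := {a, b}) ?_ ?_
  · intro x hx
    simp only [Finset.coe_insert, Finset.coe_singleton, Set.mem_insert_iff,
      Set.mem_singleton_iff] at hx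
    rcases hx with rfl | rfl <;> assumption
  · rw [SimpleGraph.isNClique_iff]
    refine ⟨?_, Finset.card_pair hab.ne⟩
    simp [SimpleGraph.isClique_pair, hab]

lemma adj_inl {i j : Fin 8} (h : i ≠ j) : graphH₀.Adj (Sum.inl i) (Sum.inl j) :=
  ⟨fun e => h (Sum.inl.inj e), Or.inl h⟩

lemma not_adj_inr (p q : Fin 8 × Fin 2) : ¬ graphH₀.Adj (Sum.inr p) (Sum.inr q) := by
  rintro ⟨_, h | h⟩ <;> exact h

/-- An independent set containing some `vᵢ` has at most `15` elements. -/
lemma indep_small {s : Set (Fin 8 ⊕ Fin 8 × Fin 2)} (hs : graphH₀.CliqueFreeOn s 2)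
    {i : Fin 8} (hi : Sum.inl i ∈ s) : s.ncard ≤ 15 := by
  have h15 : ∀ i : Fin 8,
      (Finset.univ.filter (fun x => ¬ graphH₀.Adj (Sum.inl i) x)).card = 15 := by
    decide +kernel
  have hsub : s ⊆ ((Finset.univ.filter (fun x => ¬ graphH₀.Adj (Sum.inl i) x) :
      Finset (Fin 8 ⊕ Fin 8 × Fin 2)) : Set (Fin 8 ⊕ Fin 8 × Fin 2)) := by
    intro x hx
    simpa using indep_not_adj hs hi hx
  have := Set.ncard_le_ncard hsub (Finset.finite_toSet _)
  rwa [Set.ncard_coe_finset, h15] at this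

lemma sub_range {s : Set (Fin 8 ⊕ Fin 8 × Fin 2)} (h : ∀ i, Sum.inl i ∉ s) :
    s ⊆ Set.range Sum.inr := by
  rintro (i | p) hx
  · exact absurd hx (h i)
  · exact ⟨p, rfl⟩

lemma ncard_pendant :
    (Set.range (Sum.inr : Fin 8 × Fin 2 → Fin 8 ⊕ Fin 8 × Fin 2)).ncard = 16 := by
  rw [← Set.image_univ, Set.ncard_image_of_injective _ Sum.inr_injective, Set.ncard_univ]
  simp

lemma indep_le {s : Set (Fin 8 ⊕ Fin 8 × Fin 2)} (hs : graphH₀.CliqueFreeOn s 2) :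
    s.ncard ≤ 16 := by
  by_cases h : ∃ i, Sum.inl i ∈ s
  · obtain ⟨i, hi⟩ := h
    exact (indep_small hs hi).trans (by norm_num)
  · push Not at h
    exact ncard_pendant ▸ Set.ncard_le_ncard (sub_range h) (Set.toFinite _)

lemma indep_unique {s : Set (Fin 8 ⊕ Fin 8 × Fin 2)} (hs : graphH₀.CliqueFreeOn s 2)
    (hc : 16 ≤ s.ncard) : s = Set.range Sum.inr := by
  have h : ∀ i, Sum.inl i ∉ s := fun i hi => by
    have := indep_small hs hi
    omega
  exact Set.eq_of_subset_of_ncard_le (sub_range h) (ncard_pendant ▸ hc) (Set.toFinite _)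

lemma pendant_indep : graphH₀.CliqueFreeOn (Set.range Sum.inr) 2 := by
  intro t ht h
  rw [SimpleGraph.isNClique_iff] at h
  obtain ⟨hcl, hcard⟩ := h
  obtain ⟨a, b, hab, rfl⟩ := Finset.card_eq_two.mp hcard
  obtain ⟨p, rfl⟩ := ht (show a ∈ _ by simp)
  obtain ⟨q, rfl⟩ := ht (show b ∈ _ by simp)
  exact not_adj_inr p q (hcl (by simp) (by simp) hab)

lemma colorable_eight : graphH₀.Colorable 8 := by
  refine ⟨SimpleGraph.Coloring.mk
    (Sum.elim (fun i => i) (fun p => p.1 + 1) : Fin 8 ⊕ Fin 8 × Fin 2 → Fin 8) ?_⟩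
  have h : ∀ a b : Fin 8 ⊕ Fin 8 × Fin 2, graphH₀.Adj a b →
      (Sum.elim (fun i => i) (fun p => p.1 + 1) : Fin 8 ⊕ Fin 8 × Fin 2 → Fin 8) a ≠
      (Sum.elim (fun i => i) (fun p => p.1 + 1) : Fin 8 ⊕ Fin 8 × Fin 2 → Fin 8) b := by
    decide +kernel
  exact fun {a b} => h a b

lemma clique_eight : graphH₀.IsNClique 8 (Finset.univ.map Function.Embedding.inl) := by
  rw [SimpleGraph.isNClique_iff]
  refine ⟨?_, by simp⟩
  intro a ha b hb hab
  simp only [Finset.coe_map, Finset.coe_univ, Set.image_univ, Set.mem_range] at ha hb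
  obtain ⟨i, rfl⟩ := ha
  obtain ⟨j, rfl⟩ := hb
  exact adj_inl fun e => hab (by rw [e])

lemma chrom_eight : graphH₀.chromaticNumber = 8 := by
  apply le_antisymm
  · exact_mod_cast colorable_eight.chromaticNumber_le
  · have := clique_eight.isClique.card_le_chromaticNumber
    simpa using this

lemma cliqueNum_eight : graphH₀.cliqueNum = 8 := by
  apply le_antisymm
  · obtain ⟨t, ht⟩ := graphH₀.exists_isNClique_cliqueNum
    have := ht.isClique.card_le_of_colorable colorable_eight
    rwa [ht.card_eq] at this
  · have := clique_eight.isClique.card_le_cliqueNum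
    simpa using this

lemma maxDegree_nine : graphH₀.maxDegree = 9 := by
  have h : ∀ v, graphH₀.degree v ≤ 9 := by decide +kernel
  have h0 : graphH₀.degree (Sum.inl 0) = 9 := by decide +kernel
  exact le_antisymm (graphH₀.maxDegree_le_of_forall_degree_le 9 h)
    (h0 ▸ graphH₀.degree_le_maxDegree _)

/-- `Δ(H₀) = 9`, `ω(H₀) = 8 ≤ Δ(H₀) − 1`, `χ(H₀) = 8`, the independence number of `H₀`
is `16`, the set `{wᵢ, wᵢ' : 1 ≤ i ≤ 8}` is the unique maximum independent set of `H₀`,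
and there is no proper coloring of `H₀` with `Δ(H₀) − 1 = 8` colors in which some color
class is a maximum independent set of `H₀`. -/
theorem statement14 :
    graphH₀.maxDegree = 9 ∧
    graphH₀.cliqueNum = 8 ∧ graphH₀.cliqueNum ≤ graphH₀.maxDegree - 1 ∧
    graphH₀.chromaticNumber = 8 ∧
    -- the independence number of `H₀` is `16`, witnessed by the set of pendant vertices
    graphH₀.CliqueFreeOn (Set.range Sum.inr) 2 ∧
    (Set.range (Sum.inr : Fin 8 × Fin 2 → Fin 8 ⊕ Fin 8 × Fin 2)).ncard = 16 ∧
    (∀ s : Set (Fin 8 ⊕ Fin 8 × Fin 2), graphH₀.CliqueFreeOn s 2 → s.ncard ≤ 16) ∧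
    -- uniqueness of the maximum independent set
    (∀ s : Set (Fin 8 ⊕ Fin 8 × Fin 2), graphH₀.CliqueFreeOn s 2 → s.ncard = 16 →
      s = Set.range Sum.inr) ∧
    -- no proper `8`-coloring has a color class which is a maximum independent set
    ¬ ∃ C : Fin 8 → Set (Fin 8 ⊕ Fin 8 × Fin 2),
        (∀ x, ∃! i, x ∈ C i) ∧
        (∀ i, graphH₀.CliqueFreeOn (C i) 2) ∧
        ∃ i, ∀ s : Set (Fin 8 ⊕ Fin 8 × Fin 2),
          graphH₀.CliqueFreeOn s 2 → s.ncard ≤ (C i).ncard := by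
  refine ⟨maxDegree_nine, cliqueNum_eight, ?_, chrom_eight, pendant_indep, ncard_pendant,
    fun s hs => indep_le hs, fun s hs hc => indep_unique hs hc.ge, ?_⟩
  · rw [maxDegree_nine, cliqueNum_eight]
  · rintro ⟨C, hC, hind, i, hmax⟩
    have hi : C i = Set.range Sum.inr :=
      indep_unique (hind i) (ncard_pendant ▸ hmax _ pendant_indep)
    choose f hf _ using fun j : Fin 8 => hC (Sum.inl j)
    have hinj : Function.Injective f := by
      intro a b hab
      by_contra hne
      exact indep_not_adj (hind (f a)) (hf a) (hab ▸ hf b) (adj_inl hne)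
    obtain ⟨j, hj⟩ := Finite.surjective_of_injective hinj i
    have := hf j
    simp only [hj, hi] at this
    obtain ⟨p, hp⟩ := this
    cases hp
end
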